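/- arXiv:1710.07233 — 9 statements merged into one kernel-verified Lean document; each statement's English description precedes it below -/
import Mathlib

section
/- Let n ≥ 1, let 0 < β < n and set q = n/(n−β). There exists a constant C = C(n,β) > 0 with the following property: for every radial, continuously differentiable function f : ℝⁿ → ℝ such that f and its gradient ∇f are Lebesgue integrable on ℝⁿ, and such that the fractional maximal function M_β f is (totally) differentiable at almost every point of ℝⁿ, one has (∫_{ℝⁿ} |∇M_β f(x)|^q dx)^{1/q} ≤ C ∫_{ℝⁿ} |∇f(x)| dx. -/
open MeasureTheory Metric Filter
open scoped Topology RealInnerProductSpace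

noncomputable section

/-- The set of competitor values for the non-centered fractional maximal function at `x`:
values `r ^ β ⨍_{B(z,r)} |f|` over all open balls `B(z,r)` whose closure contains `x`. -/
def maxSet {n : ℕ} (β : ℝ) (f : EuclideanSpace ℝ (Fin n) → ℝ)
    (x : EuclideanSpace ℝ (Fin n)) : Set ℝ :=
  {t | ∃ z : EuclideanSpace ℝ (Fin n), ∃ r : ℝ, 0 < r ∧ x ∈ closedBall z r ∧
    t = r ^ β * ⨍ y in ball z r, |f y|}

/-- The non-centered fractional maximal function `M_β f`. -/
def fracMax {n : ℕ} (β : ℝ) (f : EuclideanSpace ℝ (Fin n) → ℝ)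
    (x : EuclideanSpace ℝ (Fin n)) : ℝ :=
  sSup (maxSet β f x)

/-- average of `|f|` over a ball -/
def av {n : ℕ} (f : EuclideanSpace ℝ (Fin n) → ℝ) (z : EuclideanSpace ℝ (Fin n)) (r : ℝ) : ℝ :=
  ⨍ y in ball z r, |f y|

/-- volume of the unit ball -/
def VB (n : ℕ) : ℝ := volume.real (ball (0 : EuclideanSpace ℝ (Fin n)) 1)

lemma VB_pos (n : ℕ) : 0 < VB n := by
  unfold VB
  rw [Measure.real, ENNReal.toReal_pos_iff]
  exact ⟨measure_ball_pos _ _ one_pos, measure_ball_lt_top⟩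

lemma vol_ball {n : ℕ} (z : EuclideanSpace ℝ (Fin n)) {r : ℝ} (hr : 0 < r) :
    volume (ball z r) = ENNReal.ofReal (r ^ n * VB n) := by
  rw [Measure.addHaar_ball_of_pos _ _ hr, ENNReal.ofReal_mul (by positivity)]
  simp only [finrank_euclideanSpace, Fintype.card_fin]
  congr 1
  unfold VB
  rw [Measure.real, ENNReal.ofReal_toReal measure_ball_lt_top.ne]

lemma av_eq {n : ℕ} (f : EuclideanSpace ℝ (Fin n) → ℝ) (z : EuclideanSpace ℝ (Fin n)) {r : ℝ}
    (hr : 0 < r) : av f z r = (∫ y in ball z r, |f y|) / (r ^ n * VB n) := by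
  have := VB_pos n
  unfold av
  rw [setAverage_eq, Measure.real, vol_ball z hr, ENNReal.toReal_ofReal (by positivity), smul_eq_mul,
    div_eq_inv_mul]

lemma av_nonneg {n : ℕ} (f : EuclideanSpace ℝ (Fin n) → ℝ) (z : EuclideanSpace ℝ (Fin n)) {r : ℝ}
    (hr : 0 < r) : 0 ≤ av f z r := by
  have := VB_pos n
  rw [av_eq f z hr]
  have : 0 ≤ ∫ y in ball z r, |f y| := integral_nonneg (fun _ => abs_nonneg _)
  positivity

lemma av_mono {n : ℕ} {f : EuclideanSpace ℝ (Fin n) → ℝ} (hf : Integrable f)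
    {z z' : EuclideanSpace ℝ (Fin n)} {r r' : ℝ} (hr : 0 < r) (hr' : 0 < r')
    (h : ball z r ⊆ ball z' r') : (r / r') ^ n * av f z r ≤ av f z' r' := by
  have hV := VB_pos n
  rw [av_eq f z hr, av_eq f z' hr']
  have : ∫ y in ball z r, |f y| ≤ ∫ y in ball z' r', |f y| :=
    setIntegral_mono_set hf.abs.integrableOn (ae_of_all _ fun _ => abs_nonneg _)
      (LE.le.eventuallyLE h)
  calc _ = (∫ y in ball z r, |f y|) / (r' ^ n * VB n) := by
        rw [div_pow]; field_simp
    _ ≤ _ := by gcongr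

lemma exists_bound {n : ℕ} {f : EuclideanSpace ℝ (Fin n) → ℝ} (hc : Continuous f)
    (x : EuclideanSpace ℝ (Fin n)) :
    ∃ S : ℝ, 0 < S ∧ ∀ z r, 0 < r → r ≤ 1 → x ∈ closedBall z r → av f z r ≤ S := by
  obtain ⟨S, hS⟩ := (isCompact_closedBall x 2).exists_bound_of_continuousOn hc.continuousOn
  refine ⟨max S 1, by positivity, fun z r hr hr1 hx => ?_⟩
  have hV := VB_pos n
  rw [av_eq f z hr, div_le_iff₀ (by positivity)]
  have hsub : ∀ y ∈ ball z r, |f y| ≤ max S 1 := by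
    intro y hy
    refine (hS y ?_).trans (le_max_left _ _)
    rw [mem_closedBall] at *
    rw [mem_ball] at hy
    have := dist_triangle_right y x z
    linarith
  have := setIntegral_mono_on (μ := volume) (s := ball z r) (f := fun y => |f y|) (g := fun _ => max S 1)
    (hc.abs.locallyIntegrable.integrableOn_isCompact (isCompact_closedBall z r) |>.mono_set
      ball_subset_closedBall) (by simp [measure_ball_lt_top]) measurableSet_ball hsub
  refine this.trans ?_
  rw [setIntegral_const, Measure.real, vol_ball z hr, ENNReal.toReal_ofReal (by positivity), smul_eq_mul,
    mul_comm]

lemma bdd {n : ℕ} {β : ℝ} (hβ0 : 0 < β) (hβn : β < n) {f : EuclideanSpace ℝ (Fin n) → ℝ}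
    (hc : Continuous f) (hf : Integrable f) (x : EuclideanSpace ℝ (Fin n)) :
    BddAbove (maxSet β f x) := by
  obtain ⟨S, hS0, hS⟩ := exists_bound hc x
  have hV := VB_pos n
  refine ⟨max S ((∫ y, |f y|) / VB n), ?_⟩
  rintro t ⟨z, r, hr, hx, rfl⟩
  change r ^ β * av f z r ≤ _
  rcases le_total r 1 with h1 | h1
  · refine le_trans ?_ (le_max_left _ _)
    calc r ^ β * av f z r ≤ 1 * S := by
          gcongr
          · exact av_nonneg f z hr
          · exact Real.rpow_le_one hr.le h1 hβ0.le
          · exact hS z r hr h1 hx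
      _ = S := one_mul _
  · refine le_trans ?_ (le_max_right _ _)
    rw [av_eq f z hr]
    have h2 : r ^ β ≤ r ^ n := by
      rw [← Real.rpow_natCast]
      exact Real.rpow_le_rpow_of_exponent_le h1 hβn.le
    have h3 : ∫ y in ball z r, |f y| ≤ ∫ y, |f y| :=
      setIntegral_le_integral hf.abs (ae_of_all _ fun _ => abs_nonneg _)
    have h4 : 0 ≤ ∫ y in ball z r, |f y| := integral_nonneg (fun _ => abs_nonneg _)
    calc _ ≤ r ^ n * ((∫ y in ball z r, |f y|) / (r ^ n * VB n)) := by gcongr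
      _ = (∫ y in ball z r, |f y|) / VB n := by field_simp
      _ ≤ _ := by gcongr

lemma le_fracMax {n : ℕ} {β : ℝ} (hβ0 : 0 < β) (hβn : β < n) {f : EuclideanSpace ℝ (Fin n) → ℝ}
    (hc : Continuous f) (hf : Integrable f) {x z : EuclideanSpace ℝ (Fin n)} {r : ℝ} (hr : 0 < r)
    (hx : x ∈ closedBall z r) : r ^ β * av f z r ≤ fracMax β f x :=
  le_csSup (bdd hβ0 hβn hc hf x) ⟨z, r, hr, hx, rfl⟩

lemma maxSet_nonempty {n : ℕ} (β : ℝ) (f : EuclideanSpace ℝ (Fin n) → ℝ)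
    (x : EuclideanSpace ℝ (Fin n)) : (maxSet β f x).Nonempty :=
  ⟨_, x, 1, one_pos, mem_closedBall_self zero_le_one, rfl⟩

lemma fracMax_nonneg {n : ℕ} {β : ℝ} (hβ0 : 0 < β) (hβn : β < n) {f : EuclideanSpace ℝ (Fin n) → ℝ}
    (hc : Continuous f) (hf : Integrable f) (x : EuclideanSpace ℝ (Fin n)) : 0 ≤ fracMax β f x := by
  refine le_trans ?_ (le_fracMax hβ0 hβn hc hf one_pos (mem_closedBall_self zero_le_one))
  have := av_nonneg f x one_pos
  positivity

lemma exists_good {n : ℕ} {β : ℝ} (hβ0 : 0 < β) {f : EuclideanSpace ℝ (Fin n) → ℝ}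
    (hc : Continuous f) {x : EuclideanSpace ℝ (Fin n)} (hM : 0 < fracMax β f x) :
    ∃ z r, 0 < r ∧ x ∈ closedBall z r ∧ fracMax β f x / 2 < r ^ β * av f z r ∧
      ∀ z' r', 0 < r' → x ∈ closedBall z' r' → fracMax β f x / 2 < r' ^ β * av f z' r' →
        r / 2 ≤ r' := by
  obtain ⟨S, hS0, hS⟩ := exists_bound hc x
  set M := fracMax β f x with hMdef
  set A : Set ℝ := {r | 0 < r ∧ ∃ z, x ∈ closedBall z r ∧ M / 2 < r ^ β * av f z r} with hA
  have hne : A.Nonempty := by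
    obtain ⟨t, ⟨z, r, hr, hx, rfl⟩, ht⟩ := exists_lt_of_lt_csSup (maxSet_nonempty β f x)
      (show M / 2 < sSup (maxSet β f x) by change M / 2 < M; linarith)
    exact ⟨r, hr, z, hx, ht⟩
  have hlow : ∀ r ∈ A, min 1 ((M / 2 / S) ^ β⁻¹) ≤ r := by
    rintro r ⟨hr, z, hx, h⟩
    by_contra! hlt
    have h1 : r ≤ 1 := (hlt.trans_le (min_le_left _ _)).le
    have h2 : r < (M / 2 / S) ^ β⁻¹ := hlt.trans_le (min_le_right _ _)
    have h3 : r ^ β < M / 2 / S := by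
      have := Real.rpow_lt_rpow hr.le h2 hβ0
      rwa [Real.rpow_inv_rpow (by positivity) hβ0.ne'] at this
    have h4 := hS z r hr h1 hx
    have : r ^ β * av f z r ≤ r ^ β * S := by gcongr
    rw [lt_div_iff₀ hS0] at h3
    linarith
  have hpos : 0 < sInf A :=
    lt_of_lt_of_le (by positivity) (le_csInf hne hlow)
  obtain ⟨r, ⟨hr, z, hx, h⟩, hr2⟩ := exists_lt_of_csInf_lt hne (show sInf A < 2 * sInf A by linarith)
  refine ⟨z, r, hr, hx, h, fun z' r' hr' hx' h' => ?_⟩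
  have := csInf_le ⟨0, fun s hs => hs.1.le⟩ (show r' ∈ A from ⟨hr', z', hx', h'⟩)
  linarith

lemma fracMax_lower {n : ℕ} {β : ℝ} (hβ0 : 0 < β) (hβn : β < n)
    {f : EuclideanSpace ℝ (Fin n) → ℝ}
    (hc : Continuous f) (hf : Integrable f) {x : EuclideanSpace ℝ (Fin n)} {ρ : ℝ} (hρ : 0 < ρ)
    (hM : 0 < fracMax β f x)
    (hall : ∀ z' r', 0 < r' → x ∈ closedBall z' r' → fracMax β f x / 2 < r' ^ β * av f z' r' →
        ρ ≤ r') (h : EuclideanSpace ℝ (Fin n)) :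
    fracMax β f x - n * fracMax β f x / ρ * ‖h‖ ≤ fracMax β f (x + h) := by
  have key : ∀ t ∈ maxSet β f x, fracMax β f x / 2 < t →
      t * (ρ / (ρ + ‖h‖)) ^ n ≤ fracMax β f (x + h) := by
    rintro t ⟨z, r, hr, hx, rfl⟩ ht
    have hrρ := hall z r hr hx ht
    have hh := norm_nonneg h
    have hr' : 0 < r + ‖h‖ := by positivity
    have h1 := le_fracMax hβ0 hβn hc hf (x := x + h) (z := z) hr' (by
      rw [mem_closedBall, dist_eq_norm] at *
      calc ‖x + h - z‖ = ‖(x - z) + h‖ := by congr 1; abel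
        _ ≤ _ := (norm_add_le _ _).trans (by linarith))
    refine le_trans ?_ h1
    have h2 := av_mono hf hr hr' (ball_subset_ball (x := z) (by linarith : r ≤ r + ‖h‖))
    have h3 : ρ / (ρ + ‖h‖) ≤ r / (r + ‖h‖) := by
      rw [div_le_div_iff₀ (by positivity) hr']
      nlinarith
    have h4 := av_nonneg f z hr
    change r ^ β * av f z r * _ ≤ _
    calc r ^ β * av f z r * (ρ / (ρ + ‖h‖)) ^ n
        ≤ (r + ‖h‖) ^ β * av f z r * (r / (r + ‖h‖)) ^ n := by
          gcongr
          linarith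
      _ = (r + ‖h‖) ^ β * ((r / (r + ‖h‖)) ^ n * av f z r) := by ring
      _ ≤ _ := by gcongr
  have hh := norm_nonneg h
  have h5 : fracMax β f x * (ρ / (ρ + ‖h‖)) ^ n ≤ fracMax β f (x + h) := by
    have hp : 0 < (ρ / (ρ + ‖h‖)) ^ n := by positivity
    rw [← le_div_iff₀ hp]
    refine le_of_forall_lt fun c hcM => ?_
    obtain ⟨t, ht, hct⟩ := exists_lt_of_lt_csSup (maxSet_nonempty β f x)
      (show max c (fracMax β f x / 2) < sSup (maxSet β f x) from max_lt hcM (by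
        change _ < fracMax β f x; linarith))
    have := key t ht ((le_max_right _ _).trans_lt hct)
    rw [← le_div_iff₀ hp] at this
    exact ((le_max_left _ _).trans_lt hct).trans_le this
  refine le_trans ?_ h5
  have h6 : 1 + (n : ℝ) * (-(‖h‖ / (ρ + ‖h‖))) ≤ (1 + -(‖h‖ / (ρ + ‖h‖))) ^ n := by
    refine one_add_mul_le_pow ?_ n
    have : ‖h‖ / (ρ + ‖h‖) ≤ 1 := by rw [div_le_one (by positivity)]; linarith
    linarith
  have h7 : ρ / (ρ + ‖h‖) = 1 + -(‖h‖ / (ρ + ‖h‖)) := by field_simp; ring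
  rw [h7]
  have h8 : ‖h‖ / (ρ + ‖h‖) ≤ ‖h‖ / ρ := by gcongr; linarith
  have h9 : (1 - n * (‖h‖ / ρ)) ≤ (1 + -(‖h‖ / (ρ + ‖h‖))) ^ n := by
    refine le_trans ?_ h6
    have : (n : ℝ) * (‖h‖ / (ρ + ‖h‖)) ≤ n * (‖h‖ / ρ) := by gcongr
    linarith
  calc _ = fracMax β f x * (1 - n * (‖h‖ / ρ)) := by ring
    _ ≤ _ := by gcongr

lemma fderiv_norm_le_of_lower {E : Type*} [NormedAddCommGroup E] [NormedSpace ℝ E]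
    {F : E → ℝ} {x : E} (hF : DifferentiableAt ℝ F x) {K : ℝ} (hK : 0 ≤ K)
    (h : ∀ v, F x - K * ‖v‖ ≤ F (x + v)) : ‖fderiv ℝ F x‖ ≤ K := by
  have key : ∀ v, -(K * ‖v‖) ≤ fderiv ℝ F x v := by
    intro v
    have h1 : HasDerivAt (fun t : ℝ => F (x + t • v)) (fderiv ℝ F x v) 0 := by
      have hl : HasDerivAt (fun t : ℝ => x + t • v) v 0 := by
        simpa using ((hasDerivAt_id (0 : ℝ)).smul_const v).const_add x
      have h0 : HasFDerivAt F (fderiv ℝ F x) (x + (0 : ℝ) • v) := by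
        simpa using hF.hasFDerivAt
      exact h0.comp_hasDerivAt (0 : ℝ) hl
    have h2 := (hasDerivAt_iff_tendsto_slope.mp h1).mono_left
      (nhdsWithin_mono (0 : ℝ) (show Set.Ioi (0 : ℝ) ⊆ {0}ᶜ from fun t ht => ne_of_gt ht))
    refine ge_of_tendsto h2 ?_
    filter_upwards [self_mem_nhdsWithin] with t ht
    have ht' : 0 < t := ht
    have := h (t • v)
    rw [slope_def_field, le_div_iff₀ (by simpa using ht')]
    rw [norm_smul, Real.norm_of_nonneg ht'.le] at this
    simp only [zero_smul, add_zero, sub_zero]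
    linarith
  refine ContinuousLinearMap.opNorm_le_bound _ hK fun v => ?_
  rw [Real.norm_eq_abs, abs_le]
  refine ⟨key v, ?_⟩
  have := key (-v)
  simp only [norm_neg, map_neg] at this
  linarith

/-- Good ball at a point of differentiability. -/
lemma good_ball {n : ℕ} {β : ℝ} (hβ0 : 0 < β) (hβn : β < n)
    {f : EuclideanSpace ℝ (Fin n) → ℝ}
    (hc : Continuous f) (hf : Integrable f) {x : EuclideanSpace ℝ (Fin n)}
    (hd : DifferentiableAt ℝ (fracMax β f) x) (hM : 0 < fracMax β f x) :
    ∃ z r, 0 < r ∧ x ∈ closedBall z r ∧ fracMax β f x / 2 < r ^ β * av f z r ∧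
      ‖fderiv ℝ (fracMax β f) x‖ ≤ 2 * n * fracMax β f x / r := by
  obtain ⟨z, r, hr, hx, h, hall⟩ := exists_good hβ0 hc hM
  refine ⟨z, r, hr, hx, h, ?_⟩
  refine fderiv_norm_le_of_lower hd (by positivity) fun v => ?_
  have := fracMax_lower hβ0 hβn hc hf (half_pos hr) hM hall v
  refine le_trans (le_of_eq ?_) this
  field_simp

lemma fderiv_fracMax_zero {n : ℕ} {β : ℝ} (hβ0 : 0 < β) (hβn : β < n)
    {f : EuclideanSpace ℝ (Fin n) → ℝ}
    (hc : Continuous f) (hf : Integrable f) {x : EuclideanSpace ℝ (Fin n)}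
    (hM : ¬ 0 < fracMax β f x) : fderiv ℝ (fracMax β f) x = 0 := by
  have h0 : fracMax β f x = 0 := le_antisymm (not_lt.mp hM) (fracMax_nonneg hβ0 hβn hc hf x)
  refine IsLocalMin.fderiv_eq_zero (Eventually.of_forall fun y => ?_)
  rw [h0]
  exact fracMax_nonneg hβ0 hβn hc hf y


lemma ftc_line {E : Type*} [NormedAddCommGroup E] [NormedSpace ℝ E] {f : E → ℝ}
    (hf : ContDiff ℝ 1 f) (p v : E) (a b : ℝ) :
    ‖f (p + b • v) - f (p + a • v)‖ₑ ≤
      ∫⁻ t in Set.Ioo (min a b) (max a b), ‖fderiv ℝ f (p + t • v)‖ₑ * ‖v‖ₑ := by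
  have hder : ∀ t : ℝ, HasDerivAt (fun t : ℝ => f (p + t • v)) (fderiv ℝ f (p + t • v) v) t := by
    intro t
    have hl : HasDerivAt (fun t : ℝ => p + t • v) v t := by
      simpa using ((hasDerivAt_id t).smul_const v).const_add p
    exact ((hf.differentiable one_ne_zero) (p + t • v)).hasFDerivAt.comp_hasDerivAt t hl
  have hcont : Continuous fun t : ℝ => fderiv ℝ f (p + t • v) v := by
    have := hf.continuous_fderiv one_ne_zero
    fun_prop
  have h1 := intervalIntegral.integral_eq_sub_of_hasDerivAt (a := a) (b := b)
    (fun t _ => hder t) (hcont.intervalIntegrable _ _)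
  rw [← h1]
  have h2 : ‖∫ t in a..b, fderiv ℝ f (p + t • v) v‖ₑ =
      ‖∫ t in Set.uIoc a b, fderiv ℝ f (p + t • v) v‖ₑ := by
    rw [← ofReal_norm, ← ofReal_norm, intervalIntegral.norm_intervalIntegral_eq]
  rw [h2]
  refine (enorm_integral_le_lintegral_enorm _).trans ?_
  rw [Set.uIoc, ← setLIntegral_congr (Ioo_ae_eq_Ioc (a := min a b) (b := max a b))]
  refine lintegral_mono fun t => ?_
  exact ContinuousLinearMap.le_opENorm _ _

/-- truncated gradient -/
def hh {E : Type*} [NormedAddCommGroup E] [NormedSpace ℝ E] (f : E → ℝ) (A : ℝ) : E → ENNReal :=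
  Set.indicator {y | A / 2 ≤ |f y| ∧ |f y| ≤ A} (fun y => ‖fderiv ℝ f y‖ₑ)

lemma line_var {E : Type*} [NormedAddCommGroup E] [NormedSpace ℝ E] {f : E → ℝ}
    (hf : ContDiff ℝ 1 f) (y e : E) (he : ‖e‖ ≤ 1) {L A t₁ t₂ : ℝ}
    (ht₁ : t₁ ∈ Set.Icc (-L) L) (ht₂ : t₂ ∈ Set.Icc (-L) L)
    (h₁ : A ≤ |f (y + t₁ • e)|) (h₂ : |f (y + t₂ • e)| ≤ A / 2) :
    ENNReal.ofReal (A / 2) ≤ ∫⁻ t in Set.Icc (-L) L, hh f A (y + t • e) := by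
  set φ : ℝ → ℝ := fun t => |f (y + t • e)| with hφ
  have hφc : Continuous φ := by have := hf.continuous; fun_prop
  have hS : IsCompact (Set.Icc (-L) L ∩ {t | A ≤ φ t}) :=
    isCompact_Icc.inter_right (isClosed_le continuous_const hφc)
  have hT : IsCompact (Set.Icc (-L) L ∩ {t | φ t ≤ A / 2}) :=
    isCompact_Icc.inter_right (isClosed_le hφc continuous_const)
  obtain ⟨⟨a, b⟩, ⟨⟨ha, haA⟩, ⟨hb, hbA⟩⟩, hmin⟩ :=
    (hS.prod hT).exists_isMinOn ⟨(t₁, t₂), ⟨ht₁, h₁⟩, ⟨ht₂, h₂⟩⟩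
      (f := fun p : ℝ × ℝ => |p.1 - p.2|) (by fun_prop)
  simp only at ha haA hb hbA
  have hmin' : ∀ s t, s ∈ Set.Icc (-L) L → A ≤ φ s → t ∈ Set.Icc (-L) L → φ t ≤ A / 2 →
      |a - b| ≤ |s - t| := fun s t hs hs' ht ht' => hmin (a := (s, t)) ⟨⟨hs, hs'⟩, ⟨ht, ht'⟩⟩
  have hsub : Set.Ioo (min a b) (max a b) ⊆ Set.Icc (-L) L := by
    intro t ht
    exact ⟨(le_min ha.1 hb.1).trans ht.1.le, ht.2.le.trans (max_le ha.2 hb.2)⟩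
  have hin : ∀ t ∈ Set.Ioo (min a b) (max a b), A / 2 ≤ φ t ∧ φ t ≤ A := by
    intro t ht
    have htI := hsub ht
    have hlt : |t - b| < |a - b| ∧ |a - t| < |a - b| := by
      rcases le_total a b with hab | hab
      · rw [min_eq_left hab, max_eq_right hab] at ht
        rw [abs_of_nonpos (by linarith [ht.2] : t - b ≤ 0), abs_of_nonpos (by linarith : a - b ≤ 0),
          abs_of_nonpos (by linarith [ht.1] : a - t ≤ 0)]
        exact ⟨by linarith [ht.1], by linarith [ht.2]⟩
      · rw [min_eq_right hab, max_eq_left hab] at ht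
        rw [abs_of_nonneg (by linarith [ht.1] : 0 ≤ t - b), abs_of_nonneg (by linarith : 0 ≤ a - b),
          abs_of_nonneg (by linarith [ht.2] : 0 ≤ a - t)]
        exact ⟨by linarith [ht.2], by linarith [ht.1]⟩
    constructor
    · by_contra! hlt'
      have := hmin' a t ha haA htI hlt'.le
      linarith [hlt.2]
    · by_contra! hlt'
      have := hmin' t b htI hlt'.le hb hbA
      linarith [hlt.1]
  calc ENNReal.ofReal (A / 2) ≤ ‖f (y + b • e) - f (y + a • e)‖ₑ := by
        rw [← ofReal_norm]
        apply ENNReal.ofReal_le_ofReal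
        rw [Real.norm_eq_abs, abs_sub_comm]
        have := abs_sub_abs_le_abs_sub (f (y + a • e)) (f (y + b • e))
        have h3 : A ≤ |f (y + a • e)| := haA
        have h4 : |f (y + b • e)| ≤ A / 2 := hbA
        linarith
    _ ≤ _ := ftc_line hf y e a b
    _ ≤ ∫⁻ t in Set.Ioo (min a b) (max a b), hh f A (y + t • e) := by
        refine setLIntegral_mono' measurableSet_Ioo fun t ht => ?_
        rw [hh, Set.indicator_of_mem (show y + t • e ∈ _ from hin t ht)]
        calc _ ≤ ‖fderiv ℝ f (y + t • e)‖ₑ * 1 := by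
              gcongr
              rw [← ofReal_norm]
              exact ENNReal.ofReal_le_one.mpr he
          _ = _ := mul_one _
    _ ≤ _ := lintegral_mono_set hsub

lemma hh_meas {n : ℕ} {f : EuclideanSpace ℝ (Fin n) → ℝ} (hf : ContDiff ℝ 1 f) (A : ℝ) :
    Measurable (hh f A) := by
  have h1 := hf.continuous
  refine Measurable.indicator (hf.continuous_fderiv one_ne_zero).enorm.measurable ?_
  exact ((isClosed_le continuous_const h1.abs).inter
    (isClosed_le h1.abs continuous_const)).measurableSet

/-- Lower bound for the truncated gradient in an enlarged ball far from the origin. -/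
lemma case1_lower {n : ℕ} {f : EuclideanSpace ℝ (Fin n) → ℝ} (hf : ContDiff ℝ 1 f)
    (hrad : ∀ x y : EuclideanSpace ℝ (Fin n), ‖x‖ = ‖y‖ → f x = f y)
    {x y₁ y₂ : EuclideanSpace ℝ (Fin n)} {r m A : ℝ} (hr : 0 < r) (hm : 0 < m)
    (hx : (m + 1) * r ≤ ‖x‖) (hy₁ : dist y₁ x ≤ m * r) (hy₂ : dist y₂ x ≤ m * r)
    (h₁ : A ≤ |f y₁|) (h₂ : |f y₂| ≤ A / 2) :
    ENNReal.ofReal (A / 2) * ENNReal.ofReal (r ^ n * VB n) ≤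
      ENNReal.ofReal (2 * ((m + 1) * r)) * ∫⁻ y in ball x ((m + 2) * r), hh f A y := by
  set L := (m + 1) * r with hL
  have hL0 : 0 < L := by positivity
  have hx0 : 0 < ‖x‖ := hL0.trans_le hx
  set e := (‖x‖⁻¹) • x with he
  have hne : ‖e‖ = 1 := by rw [he, norm_smul, norm_inv, norm_norm, inv_mul_cancel₀ hx0.ne']
  have hxe : x = ‖x‖ • e := by rw [he, smul_smul, mul_inv_cancel₀ hx0.ne', one_smul]
  set h' : EuclideanSpace ℝ (Fin n) → ENNReal := (ball x ((m + 2) * r)).indicator (hh f A) with hh'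
  have hmeas : Measurable h' := (hh_meas hf A).indicator measurableSet_ball
  have hpt : ∀ y ∈ ball x r, ∀ w : EuclideanSpace ℝ (Fin n), dist w x ≤ m * r →
      ∃ t ∈ Set.Icc (-L) L, ‖y + t • e‖ = ‖w‖ := by
    intro y hy w hw
    rw [mem_ball, dist_eq_norm] at hy
    rw [dist_eq_norm] at hw
    have hw1 : ‖w‖ ≤ ‖x‖ + m * r := by
      have := norm_le_norm_add_norm_sub' w x; linarith
    have hw2 : ‖x‖ - m * r ≤ ‖w‖ := by
      have := norm_le_norm_add_norm_sub w x; linarith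
    have hcont : Continuous fun t : ℝ => ‖y + t • e‖ := by fun_prop
    have hlo : ‖y + (-L) • e‖ ≤ ‖w‖ := by
      have : y + (-L) • e = (‖x‖ - L) • e + (y - x) := by
        rw [sub_smul, ← hxe]
        module
      rw [this]
      refine (norm_add_le _ _).trans ?_
      rw [norm_smul, hne, Real.norm_of_nonneg (by linarith)]
      have : L = m * r + r := by rw [hL]; ring
      linarith
    have hhi : ‖w‖ ≤ ‖y + L • e‖ := by
      have : y + L • e = (‖x‖ + L) • e - (x - y) := by
        rw [add_smul, ← hxe]
        module
      rw [this]
      have h3 := norm_sub_norm_le ((‖x‖ + L) • e) (x - y)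
      rw [norm_smul, hne, Real.norm_of_nonneg (by positivity), norm_sub_rev x y] at h3
      have : L = m * r + r := by rw [hL]; ring
      linarith
    obtain ⟨t, ht, hte⟩ := intermediate_value_Icc (by linarith : -L ≤ L) hcont.continuousOn
      (⟨hlo, hhi⟩ : ‖w‖ ∈ Set.Icc _ _)
    exact ⟨t, ht, hte⟩
  have step1 : ∀ y ∈ ball x r, ENNReal.ofReal (A / 2) ≤
      ∫⁻ t in Set.Icc (-L) L, h' (y + t • e) := by
    intro y hy
    obtain ⟨t₁, ht₁, e₁⟩ := hpt y hy y₁ hy₁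
    obtain ⟨t₂, ht₂, e₂⟩ := hpt y hy y₂ hy₂
    refine (line_var hf y e hne.le ht₁ ht₂ (by rwa [hrad _ _ e₁]) (by rwa [hrad _ _ e₂])).trans ?_
    refine setLIntegral_mono' measurableSet_Icc fun t ht => ?_
    rw [hh', Set.indicator_of_mem]
    rw [mem_ball, dist_eq_norm] at *
    have : y + t • e - x = (y - x) + t • e := by abel
    rw [this]
    refine (norm_add_le _ _).trans_lt ?_
    rw [norm_smul, hne, mul_one, Real.norm_eq_abs]
    have h5 : |t| ≤ L := abs_le.mpr ht
    have h6 : (m + 2) * r = L + r := by rw [hL]; ring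
    linarith
  calc ENNReal.ofReal (A / 2) * ENNReal.ofReal (r ^ n * VB n)
      = ∫⁻ y in ball x r, ENNReal.ofReal (A / 2) := by
        rw [setLIntegral_const, vol_ball x hr]
    _ ≤ ∫⁻ y in ball x r, ∫⁻ t in Set.Icc (-L) L, h' (y + t • e) :=
        setLIntegral_mono' measurableSet_ball step1
    _ ≤ ∫⁻ y, ∫⁻ t in Set.Icc (-L) L, h' (y + t • e) := setLIntegral_le_lintegral _ _
    _ = ∫⁻ t in Set.Icc (-L) L, ∫⁻ y, h' (y + t • e) := by
        refine lintegral_lintegral_swap ?_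
        refine Measurable.aemeasurable ?_
        exact hmeas.comp (by fun_prop : Measurable fun p : EuclideanSpace ℝ (Fin n) × ℝ =>
          p.1 + p.2 • e)
    _ = ∫⁻ t in Set.Icc (-L) L, ∫⁻ y, h' y := by
        congr 1; ext t; exact lintegral_add_right_eq_self h' _
    _ = _ := by
        rw [setLIntegral_const, Real.volume_Icc, hh', lintegral_indicator measurableSet_ball, mul_comm]
        congr 2; ring

lemma lintegral_comp_smul' {n : ℕ} {F : EuclideanSpace ℝ (Fin n) → ENNReal} (hF : Measurable F)
    {s : ℝ} (hs : 0 < s) :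
    ∫⁻ u, F (s • u) = ENNReal.ofReal ((s ^ n)⁻¹) * ∫⁻ y, F y := by
  have h1 := Measure.map_addHaar_smul (volume : Measure (EuclideanSpace ℝ (Fin n))) hs.ne'
  rw [← lintegral_map (f := F) hF (measurable_const_smul s), h1, lintegral_smul_measure]
  simp [abs_of_pos hs]

lemma case2_lower {n : ℕ} {f : EuclideanSpace ℝ (Fin n) → ℝ} (hf : ContDiff ℝ 1 f)
    {R Λ : ℝ} (hR : 0 < R) (hΛ : 1 ≤ Λ) :
    ENNReal.ofReal ((R ^ n)⁻¹) * (∫⁻ y in ball (0 : EuclideanSpace ℝ (Fin n)) R, ‖f y‖ₑ) ≤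
      ENNReal.ofReal (((Λ * R) ^ n)⁻¹) *
        (∫⁻ y in ball (0 : EuclideanSpace ℝ (Fin n)) (Λ * R), ‖f y‖ₑ) +
      ENNReal.ofReal ((Λ - 1) * R) * (ENNReal.ofReal ((R ^ (n + 1))⁻¹) *
        ∫⁻ y in ball (0 : EuclideanSpace ℝ (Fin n)) (Λ * R), ‖fderiv ℝ f y‖ₑ * ‖y‖ₑ) := by
  have hfm : Measurable fun y => ‖f y‖ₑ := hf.continuous.enorm.measurable
  have hdm : Measurable fun y : EuclideanSpace ℝ (Fin n) => ‖fderiv ℝ f y‖ₑ * ‖y‖ₑ :=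
    (hf.continuous_fderiv one_ne_zero).enorm.measurable.mul measurable_enorm
  have scale : ∀ (F : EuclideanSpace ℝ (Fin n) → ENNReal) (hF : Measurable F) (s : ℝ), 0 < s →
      ∫⁻ u in ball (0 : EuclideanSpace ℝ (Fin n)) 1, F (s • u) =
        ENNReal.ofReal ((s ^ n)⁻¹) * ∫⁻ y in ball (0 : EuclideanSpace ℝ (Fin n)) s, F y := by
    intro F hF s hs
    rw [← lintegral_indicator measurableSet_ball, ← lintegral_indicator measurableSet_ball,
      ← lintegral_comp_smul' (hF.indicator measurableSet_ball) hs]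
    congr 1; ext u
    have : s • u ∈ ball (0 : EuclideanSpace ℝ (Fin n)) s ↔ u ∈ ball (0 : EuclideanSpace ℝ (Fin n)) 1 := by
      rw [mem_ball_zero_iff, mem_ball_zero_iff, norm_smul, Real.norm_of_nonneg hs.le]
      exact mul_lt_iff_lt_one_right hs
    by_cases hu : u ∈ ball (0 : EuclideanSpace ℝ (Fin n)) 1
    · rw [Set.indicator_of_mem hu, Set.indicator_of_mem (this.mpr hu)]
    · rw [Set.indicator_of_notMem hu, Set.indicator_of_notMem (fun h => hu (this.mp h))]
  have hΛR : R ≤ Λ * R := by nlinarith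
  have hpt : ∀ u : EuclideanSpace ℝ (Fin n), ‖f (R • u)‖ₑ ≤ ‖f ((Λ * R) • u)‖ₑ +
      ∫⁻ t in Set.Ioo R (Λ * R), ‖fderiv ℝ f (t • u)‖ₑ * ‖u‖ₑ := by
    intro u
    have h1 := ftc_line hf 0 u (Λ * R) R
    simp only [zero_add, min_eq_right hΛR, max_eq_left hΛR] at h1
    calc ‖f (R • u)‖ₑ = ‖f ((Λ * R) • u) + (f (R • u) - f ((Λ * R) • u))‖ₑ := by congr 1; ring
      _ ≤ _ := (enorm_add_le _ _).trans (by gcongr)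
  have hjm : Measurable fun p : EuclideanSpace ℝ (Fin n) × ℝ =>
      ‖fderiv ℝ f (p.2 • p.1)‖ₑ * ‖p.1‖ₑ := by
    have := hf.continuous_fderiv one_ne_zero
    have h2 : Continuous fun p : EuclideanSpace ℝ (Fin n) × ℝ => fderiv ℝ f (p.2 • p.1) := by fun_prop
    exact h2.enorm.measurable.mul measurable_fst.enorm
  rw [← scale _ hfm R hR, ← scale _ hfm (Λ * R) (by positivity)]
  calc ∫⁻ u in ball (0 : EuclideanSpace ℝ (Fin n)) 1, ‖f (R • u)‖ₑ
      ≤ ∫⁻ u in ball (0 : EuclideanSpace ℝ (Fin n)) 1, (‖f ((Λ * R) • u)‖ₑ +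
        ∫⁻ t in Set.Ioo R (Λ * R), ‖fderiv ℝ f (t • u)‖ₑ * ‖u‖ₑ) := lintegral_mono hpt
    _ = (∫⁻ u in ball (0 : EuclideanSpace ℝ (Fin n)) 1, ‖f ((Λ * R) • u)‖ₑ) +
        ∫⁻ u in ball (0 : EuclideanSpace ℝ (Fin n)) 1,
          ∫⁻ t in Set.Ioo R (Λ * R), ‖fderiv ℝ f (t • u)‖ₑ * ‖u‖ₑ :=
        lintegral_add_left (hfm.comp (measurable_const_smul _)) _
    _ ≤ _ := by
        gcongr
        rw [lintegral_lintegral_swap hjm.aemeasurable]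
        calc _ ≤ ∫⁻ t in Set.Ioo R (Λ * R), ENNReal.ofReal ((R ^ (n + 1))⁻¹) *
                ∫⁻ y in ball (0 : EuclideanSpace ℝ (Fin n)) (Λ * R), ‖fderiv ℝ f y‖ₑ * ‖y‖ₑ := by
              refine setLIntegral_mono' measurableSet_Ioo fun t ht => ?_
              have ht0 : 0 < t := hR.trans ht.1
              calc ∫⁻ u in ball (0 : EuclideanSpace ℝ (Fin n)) 1, ‖fderiv ℝ f (t • u)‖ₑ * ‖u‖ₑ
                  = ∫⁻ u in ball (0 : EuclideanSpace ℝ (Fin n)) 1,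
                    ENNReal.ofReal t⁻¹ * (‖fderiv ℝ f (t • u)‖ₑ * ‖t • u‖ₑ) := by
                    congr 1; ext u
                    have : ‖u‖ₑ = ENNReal.ofReal t⁻¹ * ‖t • u‖ₑ := by
                      rw [enorm_smul, ← mul_assoc, Real.enorm_of_nonneg ht0.le,
                        ← ENNReal.ofReal_mul (by positivity), inv_mul_cancel₀ ht0.ne']
                      simp
                    rw [this]; ring
                _ = ENNReal.ofReal t⁻¹ * (ENNReal.ofReal ((t ^ n)⁻¹) *
                    ∫⁻ y in ball (0 : EuclideanSpace ℝ (Fin n)) t, ‖fderiv ℝ f y‖ₑ * ‖y‖ₑ) := by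
                    rw [lintegral_const_mul (f := fun u => ‖fderiv ℝ f (t • u)‖ₑ * ‖t • u‖ₑ) _
                      (hdm.comp (measurable_const_smul t)), ← scale _ hdm t ht0]
                _ ≤ _ := by
                    rw [← mul_assoc, ← ENNReal.ofReal_mul (by positivity)]
                    gcongr
                    · rw [pow_succ, mul_inv, mul_comm]
                      have := ht.1.le
                      gcongr
                    · exact ht.2.le
          _ = _ := by
              rw [setLIntegral_const, Real.volume_Ioo, mul_comm]
              congr 2; ring


/-- The largest radius of a ball around `y` with average at least comparable to `|f y|`. -/
def RR {n : ℕ} (c : ℝ) (f : EuclideanSpace ℝ (Fin n) → ℝ) (y : EuclideanSpace ℝ (Fin n)) : ENNReal :=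
  ⨆ p : EuclideanSpace ℝ (Fin n) × ℝ,
    Set.indicator {y | y ∈ ball p.1 p.2 ∧ c * |f y| < av f p.1 p.2} (fun _ => ENNReal.ofReal p.2) y

lemma RR_meas {n : ℕ} (c : ℝ) {f : EuclideanSpace ℝ (Fin n) → ℝ} (hc : Continuous f) :
    Measurable (RR c f) := by
  have : LowerSemicontinuous (RR c f) := by
    unfold RR
    refine lowerSemicontinuous_iSup fun p => ?_
    refine IsOpen.lowerSemicontinuous_indicator ?_ zero_le
    exact isOpen_ball.inter (isOpen_lt (continuous_const.mul hc.abs) continuous_const)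
  exact this.measurable

lemma RR_compare {n : ℕ} {c : ℝ} {f : EuclideanSpace ℝ (Fin n) → ℝ} {y : EuclideanSpace ℝ (Fin n)}
    {r C₁ : ℝ} (hr : 0 < r) (hC : 0 < C₁)
    (h1 : ∃ z ρ, r ≤ ρ ∧ y ∈ ball z ρ ∧ c * |f y| < av f z ρ)
    (h2 : ∀ z ρ, y ∈ ball z ρ → c * |f y| < av f z ρ → ρ ≤ C₁ * r) :
    r ≤ (RR c f y).toReal ∧ (RR c f y).toReal ≤ C₁ * r := by
  have hle : RR c f y ≤ ENNReal.ofReal (C₁ * r) := by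
    unfold RR
    refine iSup_le fun p => ?_
    refine Set.indicator_apply_le' (fun h => ?_) (fun _ => zero_le)
    exact ENNReal.ofReal_le_ofReal (h2 _ _ h.1 h.2)
  constructor
  · obtain ⟨z, ρ, hρ, hy, h⟩ := h1
    have h3 : ENNReal.ofReal ρ ≤ RR c f y := by
      unfold RR
      refine le_trans (le_of_eq ?_) (le_iSup _ (z, ρ))
      rw [Set.indicator_of_mem (show y ∈ {y | y ∈ ball (z, ρ).1 (z, ρ).2 ∧
        c * |f y| < av f (z, ρ).1 (z, ρ).2} from ⟨hy, h⟩)]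
    have h4 := ENNReal.toReal_mono (ne_top_of_le_ne_top ENNReal.ofReal_ne_top hle) h3
    rw [ENNReal.toReal_ofReal (by linarith)] at h4
    linarith
  · have := ENNReal.toReal_mono ENNReal.ofReal_ne_top hle
    rwa [ENNReal.toReal_ofReal (by positivity)] at this

/-- first kernel -/
def K1 {n : ℕ} (c C : ℝ) (f : EuclideanSpace ℝ (Fin n) → ℝ) (x y : EuclideanSpace ℝ (Fin n)) :
    ENNReal :=
  ENNReal.ofReal (((RR c f y).toReal ^ n)⁻¹) *
    (closedBall y (C * (RR c f y).toReal)).indicator (fun _ => 1) x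

lemma K1_meas {n : ℕ} (c C : ℝ) {f : EuclideanSpace ℝ (Fin n) → ℝ} (hc : Continuous f) :
    Measurable fun p : EuclideanSpace ℝ (Fin n) × EuclideanSpace ℝ (Fin n) => K1 c C f p.1 p.2 := by
  have h1 := (RR_meas c hc).ennreal_toReal
  have h2 : Measurable fun p : EuclideanSpace ℝ (Fin n) × EuclideanSpace ℝ (Fin n) =>
      (RR c f p.2).toReal := h1.comp measurable_snd
  unfold K1
  refine Measurable.mul (by fun_prop) ?_
  have h3 : MeasurableSet {p : EuclideanSpace ℝ (Fin n) × EuclideanSpace ℝ (Fin n) |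
      dist p.1 p.2 ≤ C * (RR c f p.2).toReal} :=
    measurableSet_le (by fun_prop) (by fun_prop)
  exact (measurable_const (a := (1 : ENNReal))).indicator h3

lemma K1_int {n : ℕ} (hn : 1 ≤ n) (c : ℝ) {C : ℝ} (hC : 0 ≤ C) (f : EuclideanSpace ℝ (Fin n) → ℝ)
    (y : EuclideanSpace ℝ (Fin n)) : ∫⁻ x, K1 c C f x y ≤ ENNReal.ofReal (C ^ n * VB n) := by
  have hV := VB_pos n
  unfold K1
  rw [lintegral_const_mul _ (measurable_const.indicator measurableSet_closedBall),
    lintegral_indicator measurableSet_closedBall, setLIntegral_const, one_mul]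
  set R := (RR c f y).toReal
  have hR : 0 ≤ R := ENNReal.toReal_nonneg
  rw [Measure.addHaar_closedBall _ _ (by positivity)]
  have : volume (ball (0 : EuclideanSpace ℝ (Fin n)) 1) = ENNReal.ofReal (VB n) := by
    simpa using vol_ball (0 : EuclideanSpace ℝ (Fin n)) one_pos
  rw [this, ← ENNReal.ofReal_mul (by positivity), ← ENNReal.ofReal_mul (by positivity)]
  apply ENNReal.ofReal_le_ofReal
  simp only [finrank_euclideanSpace, Fintype.card_fin]
  rcases hR.eq_or_lt with h0 | h0
  · rw [← h0, zero_pow (by omega)]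
    simp only [inv_zero, zero_mul]
    positivity
  · rw [mul_pow]
    apply le_of_eq
    field_simp

/-- second kernel -/
def K2 {n : ℕ} (x y : EuclideanSpace ℝ (Fin n)) : ENNReal :=
  ENNReal.ofReal (‖y‖ * ((‖x‖ + ‖y‖) ^ (n + 1))⁻¹)

lemma K2_meas {n : ℕ} :
    Measurable fun p : EuclideanSpace ℝ (Fin n) × EuclideanSpace ℝ (Fin n) => K2 p.1 p.2 := by
  unfold K2
  fun_prop

lemma K2_int (n : ℕ) : ∃ W : ℝ, 0 ≤ W ∧ ∀ y : EuclideanSpace ℝ (Fin n),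
    ∫⁻ x, K2 x y ≤ ENNReal.ofReal W := by
  have hfin := finite_integral_one_add_norm (E := EuclideanSpace ℝ (Fin n)) (μ := volume)
    (r := (n + 1 : ℕ)) (by simp)
  refine ⟨(∫⁻ x : EuclideanSpace ℝ (Fin n),
    ENNReal.ofReal ((1 + ‖x‖) ^ (-((n + 1 : ℕ) : ℝ)))).toReal, ENNReal.toReal_nonneg, fun y => ?_⟩
  rw [ENNReal.ofReal_toReal hfin.ne]
  by_cases hy : y = 0
  · simp [K2, hy]
  have hs : 0 < ‖y‖ := norm_pos_iff.mpr hy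
  have h1 := lintegral_comp_smul' (F := fun x => K2 x y) (by unfold K2; fun_prop) hs
  have h2 : ∫⁻ u, K2 (‖y‖ • u) y = ENNReal.ofReal ((‖y‖ ^ n)⁻¹) *
      ∫⁻ x : EuclideanSpace ℝ (Fin n), ENNReal.ofReal ((1 + ‖x‖) ^ (-((n + 1 : ℕ) : ℝ))) := by
    rw [← lintegral_const_mul _ (by fun_prop)]
    congr 1; ext u
    unfold K2
    rw [← ENNReal.ofReal_mul (by positivity), norm_smul, norm_norm]
    congr 1
    rw [Real.rpow_neg (by positivity), Real.rpow_natCast]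
    have : ‖y‖ * ‖u‖ + ‖y‖ = ‖y‖ * (1 + ‖u‖) := by ring
    rw [this, mul_pow, pow_succ ‖y‖]
    field_simp
  rw [h2] at h1
  have h3 : ENNReal.ofReal ((‖y‖ ^ n)⁻¹) ≠ 0 := by
    rw [Ne, ENNReal.ofReal_eq_zero, not_le]; positivity
  rw [ENNReal.mul_right_inj h3 ENNReal.ofReal_ne_top] at h1
  exact h1.symm.le

lemma av_enorm {n : ℕ} {f : EuclideanSpace ℝ (Fin n) → ℝ} (hf : Integrable f)
    (z : EuclideanSpace ℝ (Fin n)) {r : ℝ} (hr : 0 < r) :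
    ENNReal.ofReal ((r ^ n)⁻¹) * ∫⁻ y in ball z r, ‖f y‖ₑ = ENNReal.ofReal (av f z r * VB n) := by
  have hV := VB_pos n
  rw [← ofReal_integral_norm_eq_lintegral_enorm hf.integrableOn, ← ENNReal.ofReal_mul (by positivity),
    av_eq f z hr]
  congr 1
  simp only [Real.norm_eq_abs]
  field_simp

lemma rpow_helper {β Q r ρ : ℝ} (hβ0 : 0 < β) (hQ : 0 < Q) (hr : 0 < r) (hρ : 0 < ρ)
    (h : ρ ^ β ≤ Q * r ^ β) : ρ ≤ Q ^ β⁻¹ * r := by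
  rw [← Real.rpow_le_rpow_iff hρ.le (by positivity) hβ0, Real.mul_rpow (by positivity) hr.le,
    Real.rpow_inv_rpow hQ.le hβ0.ne']
  exact h

set_option maxHeartbeats 400000 in
lemma case1 {n : ℕ} {β : ℝ} (hβ0 : 0 < β) (hβn : β < n) :
    ∃ m C c : ℝ, 0 < m ∧ 0 < C ∧ ∀ f : EuclideanSpace ℝ (Fin n) → ℝ, ContDiff ℝ 1 f →
      (∀ x y : EuclideanSpace ℝ (Fin n), ‖x‖ = ‖y‖ → f x = f y) →
      Integrable f → (∫⁻ y, ‖fderiv ℝ f y‖ₑ ≠ ⊤) →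
      ∀ x z : EuclideanSpace ℝ (Fin n), ∀ r, 0 < r → x ∈ closedBall z r → 0 < fracMax β f x →
        fracMax β f x / 2 < r ^ β * av f z r → (m + 1) * r ≤ ‖x‖ →
        ∃ a ≤ ∫⁻ y, ‖fderiv ℝ f y‖ₑ, av f z r ≤ C * r * (r ^ n)⁻¹ * a.toReal ∧
          ENNReal.ofReal ((r ^ n)⁻¹) * a ≤
            ENNReal.ofReal C * ∫⁻ y, ‖fderiv ℝ f y‖ₑ * K1 c (m + 2) f x y := by
  have hV := VB_pos n
  set l : ℝ := 4 ^ β⁻¹ with hl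
  have hl1 : 1 ≤ l := Real.one_le_rpow (by norm_num) (by positivity)
  have hlβ : l ^ β = 4 := Real.rpow_inv_rpow (by norm_num) hβ0.ne'
  set m : ℝ := l + 1 with hm
  have hm0 : 0 < m := by positivity
  set c : ℝ := ((m + 3) ^ n)⁻¹ / 2 with hcdef
  have hc0 : 0 < c := by positivity
  set Q : ℝ := 4 * (m + 3) ^ n / c with hQ
  have hQ0 : 0 < Q := by positivity
  set C₁ : ℝ := max 1 (Q ^ β⁻¹) with hC₁
  have hC₁0 : 0 < C₁ := by positivity
  set C : ℝ := max (4 * (m + 1) / VB n) (C₁ ^ n) with hC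
  refine ⟨m, C, c, hm0, by positivity, ?_⟩
  intro f hf hrad hfi hG x z r hr hxz hM hA hx
  have hfc := hf.continuous
  set M := fracMax β f x with hMdef
  set A := av f z r with hAdef
  have hA0 : 0 < A := by
    by_contra! h
    have : r ^ β * A ≤ 0 := mul_nonpos_of_nonneg_of_nonpos (by positivity) h
    linarith
  rw [mem_closedBall] at hxz
  -- points with large and small values
  obtain ⟨y₁, hy₁, hAy₁⟩ := exists_setAverage_le (μ := volume) (s := ball z r) (f := fun y => |f y|)
    (measure_ball_pos _ _ hr).ne' measure_ball_lt_top.ne hfi.abs.integrableOn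
  have hlr : 0 < l * r := by positivity
  obtain ⟨y₂, hy₂, hAy₂⟩ := exists_le_setAverage (μ := volume) (s := ball z (l * r))
    (f := fun y => |f y|)
    (measure_ball_pos _ _ hlr).ne' measure_ball_lt_top.ne hfi.abs.integrableOn
  change A ≤ |f y₁| at hAy₁
  change |f y₂| ≤ av f z (l * r) at hAy₂
  have hrlr : r ≤ l * r := by nlinarith
  have hsmall : av f z (l * r) ≤ A / 2 := by
    have h1 := le_fracMax hβ0 hβn hfc hfi (x := x) (z := z) hlr
      (by rw [mem_closedBall]; linarith)
    rw [Real.mul_rpow (by positivity) hr.le, hlβ] at h1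
    have h2 : r ^ β * (4 * av f z (l * r)) < r ^ β * (2 * A) := by
      linarith
    have := lt_of_mul_lt_mul_left h2 (by positivity)
    linarith
  have hd₁ : dist y₁ x ≤ m * r := by
    rw [mem_ball] at hy₁
    have := dist_triangle_right y₁ x z
    have h3 : m * r = l * r + r := by rw [hm]; ring
    linarith
  have hd₂ : dist y₂ x ≤ m * r := by
    rw [mem_ball] at hy₂
    have := dist_triangle_right y₂ x z
    have h3 : m * r = l * r + r := by rw [hm]; ring
    linarith
  have key := case1_lower hf hrad hr hm0 hx hd₁ hd₂ hAy₁ (hAy₂.trans hsmall)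
  set a := ∫⁻ y in ball x ((m + 2) * r), hh f A y with ha
  have haG : a ≤ ∫⁻ y, ‖fderiv ℝ f y‖ₑ := by
    refine (setLIntegral_le_lintegral _ _).trans (lintegral_mono fun y => ?_)
    exact Set.indicator_le_self _ _ _
  have haT : a ≠ ⊤ := ne_top_of_le_ne_top hG haG
  refine ⟨a, haG, ?_, ?_⟩
  · rw [← ENNReal.ofReal_mul (by positivity), ← ENNReal.ofReal_toReal haT,
      ← ENNReal.ofReal_mul (by positivity), ENNReal.ofReal_le_ofReal_iff (by positivity)] at key
    have h1 : A ≤ 4 * (m + 1) / VB n * r * (r ^ n)⁻¹ * a.toReal := by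
      have : 4 * (m + 1) / VB n * r * (r ^ n)⁻¹ * a.toReal =
        (4 * (m + 1) * r * a.toReal) / (r ^ n * VB n) := by field_simp
      rw [this, le_div_iff₀ (by positivity)]
      linarith
    refine h1.trans ?_
    gcongr
    exact le_max_left _ _
  · have hdm : Measurable fun y => ‖fderiv ℝ f y‖ₑ := (hf.continuous_fderiv one_ne_zero).enorm.measurable
    have hKm : Measurable fun y => K1 c (m + 2) f x y :=
      (K1_meas c (m + 2) hfc).of_uncurry_left (f := K1 c (m + 2) f)
    have hdK : Measurable fun y => ‖fderiv ℝ f y‖ₑ * K1 c (m + 2) f x y := hdm.mul hKm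
    rw [← lintegral_const_mul _ hdK, ha, ← lintegral_indicator measurableSet_ball,
      ← lintegral_const_mul _ ((hh_meas hf A).indicator measurableSet_ball)]
    refine lintegral_mono fun y => ?_
    by_cases hy : y ∈ ball x ((m + 2) * r)
    swap
    · rw [Set.indicator_of_notMem hy]; simp
    rw [Set.indicator_of_mem hy]
    by_cases hyA : y ∈ {y | A / 2 ≤ |f y| ∧ |f y| ≤ A}
    swap
    · rw [hh, Set.indicator_of_notMem hyA]; simp
    rw [hh, Set.indicator_of_mem hyA]
    obtain ⟨hyA1, hyA2⟩ := hyA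
    rw [mem_ball] at hy
    have hcmp : r ≤ (RR c f y).toReal ∧ (RR c f y).toReal ≤ C₁ * r := by
      refine RR_compare hr hC₁0 ⟨z, (m + 3) * r, by nlinarith, ?_, ?_⟩ ?_
      · rw [mem_ball]
        have := dist_triangle y x z
        nlinarith
      · have h1 := av_mono hfi hr (show 0 < (m + 3) * r by positivity)
          (ball_subset_ball (x := z) (show r ≤ (m + 3) * r by nlinarith))
        have h2 : r / ((m + 3) * r) = (m + 3)⁻¹ := by field_simp
        rw [h2, inv_pow] at h1
        refine lt_of_lt_of_le ?_ h1
        have h3 : c * |f y| ≤ c * A := by gcongr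
        have h4 : ((m + 3) ^ n)⁻¹ * av f z r = 2 * (c * A) := by rw [hcdef]; ring
        have : 0 < c * A := by positivity
        linarith
      · intro z' ρ hyz hav
        rw [mem_ball] at hyz
        have hρ : 0 < ρ := dist_nonneg.trans_lt hyz
        rcases le_total ρ r with h | h
        · have : r ≤ C₁ * r := by
            have : 1 ≤ C₁ := le_max_left _ _
            nlinarith
          linarith
        · have hρ' : 0 < (m + 3) * ρ := by positivity
          have h1 := le_fracMax hβ0 hβn hfc hfi (x := x) (z := z') hρ' (by
            rw [mem_closedBall]
            have := dist_triangle_left x z' y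
            nlinarith)
          have h2 := av_mono hfi hρ hρ'
            (ball_subset_ball (x := z') (show ρ ≤ (m + 3) * ρ by nlinarith))
          have h3 : ρ / ((m + 3) * ρ) = (m + 3)⁻¹ := by field_simp
          rw [h3, inv_pow] at h2
          have h4 : ρ ^ β * (((m + 3) ^ n)⁻¹ * (c * (A / 2))) ≤ M := by
            refine le_trans ?_ h1
            refine mul_le_mul ?_ (le_trans ?_ h2) (by positivity) (by positivity)
            · exact Real.rpow_le_rpow hρ.le (by nlinarith) hβ0.le
            · gcongr
              exact le_trans (by gcongr) hav.le
          have h5 : ρ ^ β ≤ Q * r ^ β := by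
            have h6 : ρ ^ β * (((m + 3) ^ n)⁻¹ * (c * (A / 2))) ≤ 2 * (r ^ β * A) := by linarith
            have h7 : Q * r ^ β = 2 * (r ^ β * A) / (((m + 3) ^ n)⁻¹ * (c * (A / 2))) := by
              rw [hQ]; field_simp; ring
            rw [h7, le_div_iff₀ (by positivity)]
            exact h6
          refine (rpow_helper hβ0 hQ0 hr hρ h5).trans ?_
          gcongr
          exact le_max_right _ _
    obtain ⟨hR1, hR2⟩ := hcmp
    have hR0 : 0 < (RR c f y).toReal := hr.trans_le hR1
    unfold K1
    rw [Set.indicator_of_mem (by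
      rw [mem_closedBall, dist_comm]
      refine hy.le.trans ?_
      gcongr), mul_one]
    have h8 : ENNReal.ofReal ((r ^ n)⁻¹) ≤
        ENNReal.ofReal C * ENNReal.ofReal (((RR c f y).toReal ^ n)⁻¹) := by
      rw [← ENNReal.ofReal_mul (by positivity)]
      apply ENNReal.ofReal_le_ofReal
      calc (r ^ n)⁻¹ = C₁ ^ n * ((C₁ * r) ^ n)⁻¹ := by rw [mul_pow]; field_simp
        _ ≤ C * ((RR c f y).toReal ^ n)⁻¹ := by
          gcongr
          exact le_max_right _ _
    calc _ ≤ (ENNReal.ofReal C * ENNReal.ofReal (((RR c f y).toReal ^ n)⁻¹)) * ‖fderiv ℝ f y‖ₑ := by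
          gcongr
      _ = _ := by ring

set_option maxHeartbeats 400000 in
lemma case2 {n : ℕ} {β : ℝ} (hβ0 : 0 < β) (hβn : β < n) {m : ℝ} (hm0 : 0 < m) :
    ∃ C : ℝ, 0 < C ∧ ∀ f : EuclideanSpace ℝ (Fin n) → ℝ, ContDiff ℝ 1 f →
      Integrable f → (∫⁻ y, ‖fderiv ℝ f y‖ₑ ≠ ⊤) →
      ∀ x z : EuclideanSpace ℝ (Fin n), ∀ r, 0 < r → x ∈ closedBall z r → 0 < fracMax β f x →
        fracMax β f x / 2 < r ^ β * av f z r → ‖x‖ < (m + 1) * r →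
        ∃ a ≤ ∫⁻ y, ‖fderiv ℝ f y‖ₑ, av f z r ≤ C * r * (r ^ n)⁻¹ * a.toReal ∧
          ENNReal.ofReal ((r ^ n)⁻¹) * a ≤
            ENNReal.ofReal C * ∫⁻ y, ‖fderiv ℝ f y‖ₑ * K2 x y := by
  have hV := VB_pos n
  set T : ℝ := 4 * (m + 3) ^ n with hT
  have hT1 : 1 ≤ T := by
    have : 1 ≤ (m + 3) ^ n := one_le_pow₀ (by linarith)
    linarith
  set Λ : ℝ := T ^ β⁻¹ with hΛ
  have hΛ1 : 1 ≤ Λ := Real.one_le_rpow hT1 (by positivity)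
  have hΛβ : Λ ^ β = T := Real.rpow_inv_rpow (by positivity) hβ0.ne'
  set D : ℝ := 2 * (m + 3) ^ n * (Λ * Λ * (m + 3)) / VB n with hD
  set D' : ℝ := (2 * Λ * (m + 3)) ^ (n + 1) with hD'
  set C : ℝ := max D D' with hC
  refine ⟨C, by positivity, ?_⟩
  intro f hf hfi hG x z r hr hxz hM hA hx
  have hfc := hf.continuous
  set M := fracMax β f x with hMdef
  set A := av f z r with hAdef
  have hA0 : 0 < A := by
    by_contra! h
    have : r ^ β * A ≤ 0 := mul_nonpos_of_nonneg_of_nonpos (by positivity) h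
    linarith
  rw [mem_closedBall] at hxz
  set R : ℝ := (m + 3) * r with hR
  have hR0 : 0 < R := by positivity
  have hrR : r ≤ R := by nlinarith
  have hRΛ : R ≤ Λ * R := by nlinarith
  have hΛR0 : 0 < Λ * R := by positivity
  have hzn : ‖z‖ ≤ ‖x‖ + r := by
    have h1 := norm_le_norm_add_norm_sub' z x
    rw [dist_eq_norm, norm_sub_rev] at hxz
    linarith
  have hsub : ball z r ⊆ ball 0 R := by
    refine ball_subset_ball' ?_
    rw [dist_zero_right]
    nlinarith
  have hbig : ((m + 3) ^ n)⁻¹ * A ≤ av f 0 R := by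
    have h1 := av_mono hfi hr hR0 hsub
    have h2 : r / R = (m + 3)⁻¹ := by rw [hR]; field_simp
    rwa [h2, inv_pow] at h1
  have hsmall : av f 0 (Λ * R) ≤ ((m + 3) ^ n)⁻¹ * A / 2 := by
    have h1 := le_fracMax hβ0 hβn hfc hfi (x := x) (z := 0) hΛR0
      (by rw [mem_closedBall, dist_zero_right]; nlinarith)
    have h0 := av_nonneg f 0 hΛR0
    have h2 : (r ^ β) * (T * av f 0 (Λ * R)) ≤ (r ^ β) * (2 * A) := by
      have : T * r ^ β ≤ (Λ * R) ^ β := by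
        rw [Real.mul_rpow (by positivity) hR0.le, hΛβ]
        gcongr
      have h3 : T * r ^ β * av f 0 (Λ * R) ≤ (Λ * R) ^ β * av f 0 (Λ * R) := by gcongr
      linarith
    have h3 := le_of_mul_le_mul_left h2 (by positivity)
    have h4 : ((m + 3) ^ n)⁻¹ * A / 2 = 2 * A / T := by rw [hT]; field_simp; ring
    rw [h4, le_div_iff₀ (by positivity)]
    linarith
  set J := ∫⁻ y in ball (0 : EuclideanSpace ℝ (Fin n)) (Λ * R), ‖fderiv ℝ f y‖ₑ * ‖y‖ₑ with hJ
  have hdm : Measurable fun y => ‖fderiv ℝ f y‖ₑ := (hf.continuous_fderiv one_ne_zero).enorm.measurable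
  have hdm2 : Measurable fun y : EuclideanSpace ℝ (Fin n) => ‖fderiv ℝ f y‖ₑ * ‖y‖ₑ :=
    hdm.mul measurable_enorm
  set a : ENNReal := ENNReal.ofReal ((Λ * R)⁻¹) * J with ha
  have hJa : J = ENNReal.ofReal (Λ * R) * a := by
    rw [ha, ← mul_assoc, ← ENNReal.ofReal_mul (by positivity), mul_inv_cancel₀ hΛR0.ne']
    simp
  have haint : a = ∫⁻ y in ball (0 : EuclideanSpace ℝ (Fin n)) (Λ * R),
      ENNReal.ofReal ((Λ * R)⁻¹) * (‖fderiv ℝ f y‖ₑ * ‖y‖ₑ) := by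
    rw [lintegral_const_mul _ hdm2]
  have haG : a ≤ ∫⁻ y, ‖fderiv ℝ f y‖ₑ := by
    rw [haint]
    refine le_trans ?_ (setLIntegral_le_lintegral (ball (0 : EuclideanSpace ℝ (Fin n)) (Λ * R)) _)
    refine setLIntegral_mono' measurableSet_ball fun y hy => ?_
    have h1 : ENNReal.ofReal ((Λ * R)⁻¹) * ‖y‖ₑ ≤ 1 := by
      rw [← ofReal_norm, ← ENNReal.ofReal_mul (by positivity)]
      apply ENNReal.ofReal_le_one.mpr
      rw [mem_ball_zero_iff] at hy
      rw [inv_mul_le_iff₀ hΛR0]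
      linarith
    calc _ = ‖fderiv ℝ f y‖ₑ * (ENNReal.ofReal ((Λ * R)⁻¹) * ‖y‖ₑ) := by ring
      _ ≤ ‖fderiv ℝ f y‖ₑ * 1 := by gcongr
      _ = _ := mul_one _
  have haT : a ≠ ⊤ := ne_top_of_le_ne_top hG haG
  refine ⟨a, haG, ?_, ?_⟩
  · have key := case2_lower hf hR0 hΛ1
    rw [av_enorm hfi _ hR0, av_enorm hfi _ hΛR0, ← hJ, hJa, ← ENNReal.ofReal_toReal haT,
      ← ENNReal.ofReal_mul (by positivity), ← ENNReal.ofReal_mul (by positivity),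
      ← ENNReal.ofReal_mul (by nlinarith),
      ← ENNReal.ofReal_add (mul_nonneg (av_nonneg f 0 hΛR0) hV.le)
        (mul_nonneg (by nlinarith) (by positivity)),
      ENNReal.ofReal_le_ofReal_iff (add_nonneg (mul_nonneg (av_nonneg f 0 hΛR0) hV.le)
        (mul_nonneg (by nlinarith) (by positivity)))] at key
    have ha0 : 0 ≤ a.toReal := ENNReal.toReal_nonneg
    have h1 : ((m + 3) ^ n)⁻¹ * A / 2 * VB n ≤ Λ * Λ * (m + 3) * r * (r ^ n)⁻¹ * a.toReal := by
      have h2 : (Λ - 1) * R * ((R ^ (n + 1))⁻¹ * (Λ * R * a.toReal)) ≤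
          Λ * Λ * (m + 3) * r * (r ^ n)⁻¹ * a.toReal := by
        calc _ = (Λ - 1) * Λ * (m + 3) * r * (R ^ n)⁻¹ * a.toReal := by
              rw [pow_succ, mul_inv]
              have : R * R⁻¹ = 1 := mul_inv_cancel₀ hR0.ne'
              calc _ = (Λ - 1) * Λ * R * (R ^ n)⁻¹ * a.toReal * (R * R⁻¹) := by ring
                _ = _ := by rw [this, hR]; ring
          _ ≤ _ := by
              gcongr
              linarith
      have h3 : (((m + 3) ^ n)⁻¹ * A - ((m + 3) ^ n)⁻¹ * A / 2) * VB n ≤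
          (av f 0 R - av f 0 (Λ * R)) * VB n := by gcongr
      linarith
    have h4 : A ≤ D * r * (r ^ n)⁻¹ * a.toReal := by
      have h5 : D * r * (r ^ n)⁻¹ * a.toReal = (Λ * Λ * (m + 3) * r * (r ^ n)⁻¹ * a.toReal) *
          (2 * (m + 3) ^ n / VB n) := by rw [hD]; ring
      have h6 : A = (((m + 3) ^ n)⁻¹ * A / 2 * VB n) * (2 * (m + 3) ^ n / VB n) := by field_simp
      rw [h5, h6]
      gcongr
    refine h4.trans ?_
    gcongr
    exact le_max_left _ _
  · have hKm : Measurable fun y => K2 x y :=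
      K2_meas.of_uncurry_left (f := K2)
    have hdK : Measurable fun y => ‖fderiv ℝ f y‖ₑ * K2 x y := hdm.mul hKm
    have hdm3 : Measurable fun y : EuclideanSpace ℝ (Fin n) =>
      ENNReal.ofReal ((Λ * R)⁻¹) * (‖fderiv ℝ f y‖ₑ * ‖y‖ₑ) := hdm2.const_mul _
    rw [haint, ← lintegral_const_mul _ hdK, ← lintegral_const_mul _ hdm3]
    refine le_trans ?_ (setLIntegral_le_lintegral (ball (0 : EuclideanSpace ℝ (Fin n)) (Λ * R)) _)
    refine setLIntegral_mono' measurableSet_ball fun y hy => ?_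
    rw [mem_ball_zero_iff] at hy
    have h1 : ENNReal.ofReal ((r ^ n)⁻¹) * (ENNReal.ofReal ((Λ * R)⁻¹) * ‖y‖ₑ) ≤
        ENNReal.ofReal C * K2 x y := by
      unfold K2
      rw [← ofReal_norm, ← ENNReal.ofReal_mul (by positivity), ← ENNReal.ofReal_mul (by positivity),
        ← ENNReal.ofReal_mul (by positivity)]
      apply ENNReal.ofReal_le_ofReal
      by_cases hy0 : y = 0
      · simp [hy0]
      have hyp : 0 < ‖y‖ := norm_pos_iff.mpr hy0
      have hs : ‖x‖ + ‖y‖ ≤ 2 * Λ * (m + 3) * r := by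
        have : ‖x‖ ≤ Λ * R := by nlinarith
        have h9 : 2 * Λ * (m + 3) * r = Λ * R + Λ * R := by rw [hR]; ring
        linarith
      calc (r ^ n)⁻¹ * ((Λ * R)⁻¹ * ‖y‖) ≤ (r ^ n)⁻¹ * (r⁻¹ * ‖y‖) := by
            gcongr
            linarith
        _ = ‖y‖ * (r ^ (n + 1))⁻¹ := by rw [pow_succ]; field_simp
        _ = D' * (‖y‖ * ((2 * Λ * (m + 3) * r) ^ (n + 1))⁻¹) := by
            rw [mul_pow _ r, ← hD']
            have : 0 < D' := by positivity
            field_simp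
        _ ≤ C * (‖y‖ * ((‖x‖ + ‖y‖) ^ (n + 1))⁻¹) := by
            gcongr
            exact le_max_right _ _
    calc _ = ‖fderiv ℝ f y‖ₑ * (ENNReal.ofReal ((r ^ n)⁻¹) * (ENNReal.ofReal ((Λ * R)⁻¹) * ‖y‖ₑ)) := by
          ring
      _ ≤ ‖fderiv ℝ f y‖ₑ * (ENNReal.ofReal C * K2 x y) := by gcongr
      _ = _ := by ring


lemma norm_gradient_eq {n : ℕ} (F : EuclideanSpace ℝ (Fin n) → ℝ) (x : EuclideanSpace ℝ (Fin n)) :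
    ‖gradient F x‖ = ‖fderiv ℝ F x‖ := by
  unfold gradient
  exact LinearIsometryEquiv.norm_map _ _

lemma pow_bound {n : ℕ} {β q : ℝ} (hβ0 : 0 < β) (hβn : β < n) (hq : q = n / (n - β))
    {D P r a G : ℝ} (hD : 0 ≤ D) (hP : 0 ≤ P) (hr : 0 < r) (ha : 0 ≤ a) (haG : a ≤ G)
    (h : D ≤ P * (r ^ β * (r ^ n)⁻¹) * a) : D ^ q ≤ P ^ q * G ^ (q - 1) * ((r ^ n)⁻¹ * a) := by
  have hnb : 0 < (n : ℝ) - β := by linarith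
  have hq1 : 1 ≤ q := by rw [hq, le_div_iff₀ hnb]; linarith
  have h1 : D ^ q ≤ (P * (r ^ β * (r ^ n)⁻¹) * a) ^ q := Real.rpow_le_rpow hD h (by linarith)
  rw [Real.mul_rpow (by positivity) ha, Real.mul_rpow hP (by positivity)] at h1
  have h2 : (r ^ β * (r ^ n)⁻¹) ^ q = (r ^ n)⁻¹ := by
    rw [← Real.rpow_natCast, ← Real.rpow_neg hr.le, ← Real.rpow_add hr, ← Real.rpow_mul hr.le]
    congr 1
    rw [hq]; field_simp; ring
  have h3 : a ^ q = a ^ (q - 1) * a := by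
    rcases ha.eq_or_lt with h0 | h0
    · rw [← h0, Real.zero_rpow (by linarith), mul_zero]
    · rw [← Real.rpow_add_one h0.ne']; congr 1; ring
  have h4 : a ^ (q - 1) ≤ G ^ (q - 1) := Real.rpow_le_rpow ha haG (by linarith)
  rw [h2, h3] at h1
  calc D ^ q ≤ _ := h1
    _ ≤ P ^ q * (r ^ n)⁻¹ * (G ^ (q - 1) * a) := by gcongr
    _ = _ := by ring

lemma pointwise {n : ℕ} {β q : ℝ} (hβ0 : 0 < β) (hβn : β < n) (hq : q = n / (n - β)) :
    ∃ P c C' : ℝ, 0 ≤ P ∧ 0 ≤ C' ∧ ∀ f : EuclideanSpace ℝ (Fin n) → ℝ, ContDiff ℝ 1 f →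
      (∀ x y : EuclideanSpace ℝ (Fin n), ‖x‖ = ‖y‖ → f x = f y) →
      Integrable f → (∫⁻ y, ‖fderiv ℝ f y‖ₑ ≠ ⊤) →
      ∀ x, DifferentiableAt ℝ (fracMax β f) x →
        ENNReal.ofReal (‖fderiv ℝ (fracMax β f) x‖ ^ q) ≤
          ENNReal.ofReal (P * (∫⁻ y, ‖fderiv ℝ f y‖ₑ).toReal ^ (q - 1)) *
            ∫⁻ y, ‖fderiv ℝ f y‖ₑ * (K1 c C' f x y + K2 x y) := by
  obtain ⟨m, C₁, c, hm, hC₁, H1⟩ := case1 hβ0 hβn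
  obtain ⟨C₂, hC₂, H2⟩ := case2 hβ0 hβn hm
  set C := max C₁ C₂ with hC
  have hC0 : 0 < C := lt_max_of_lt_left hC₁
  refine ⟨(4 * n * C) ^ q * C, c, m + 2, by positivity, by positivity, ?_⟩
  intro f hf hrad hfi hG x hd
  by_cases hM : 0 < fracMax β f x
  swap
  · rw [fderiv_fracMax_zero hβ0 hβn hf.continuous hfi hM, norm_zero, Real.zero_rpow]
    · simp
    · have hnb : 0 < (n : ℝ) - β := by linarith
      rw [hq]
      exact (div_pos (by linarith) hnb).ne'
  obtain ⟨z, r, hr, hx, hA, hD⟩ := good_ball hβ0 hβn hf.continuous hfi hd hM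
  have main : ∃ a ≤ ∫⁻ y, ‖fderiv ℝ f y‖ₑ, av f z r ≤ C * r * (r ^ n)⁻¹ * a.toReal ∧
          ENNReal.ofReal ((r ^ n)⁻¹) * a ≤
            ENNReal.ofReal C * ∫⁻ y, ‖fderiv ℝ f y‖ₑ * (K1 c (m + 2) f x y + K2 x y) := by
    rcases le_or_gt ((m + 1) * r) ‖x‖ with h | h
    · obtain ⟨a, ha, h1, h2⟩ := H1 f hf hrad hfi hG x z r hr hx hM hA h
      refine ⟨a, ha, h1.trans ?_, h2.trans ?_⟩
      · gcongr
        exact le_max_left _ _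
      · gcongr
        · exact le_max_left _ _
        · exact le_self_add
    · obtain ⟨a, ha, h1, h2⟩ := H2 f hf hfi hG x z r hr hx hM hA h
      refine ⟨a, ha, h1.trans ?_, h2.trans ?_⟩
      · gcongr
        exact le_max_right _ _
      · gcongr
        · exact le_max_right _ _
        · exact le_add_self
  obtain ⟨a, haG, h1, h2⟩ := main
  have haT : a ≠ ⊤ := ne_top_of_le_ne_top hG haG
  have h3 : ‖fderiv ℝ (fracMax β f) x‖ ≤ (4 * n * C) * (r ^ β * (r ^ n)⁻¹) * a.toReal := by
    calc _ ≤ 2 * n * fracMax β f x / r := hD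
      _ ≤ 2 * n * (2 * (r ^ β * (C * r * (r ^ n)⁻¹ * a.toReal))) / r := by
          gcongr
          have : r ^ β * av f z r ≤ r ^ β * (C * r * (r ^ n)⁻¹ * a.toReal) := by gcongr
          linarith
      _ = _ := by field_simp; ring
  have h4 := pow_bound hβ0 hβn hq (norm_nonneg _) (by positivity) hr ENNReal.toReal_nonneg
    (ENNReal.toReal_mono hG haG) h3
  set G := (∫⁻ y, ‖fderiv ℝ f y‖ₑ).toReal with hGdef
  have hG0 : 0 ≤ G := ENNReal.toReal_nonneg
  calc _ ≤ ENNReal.ofReal ((4 * n * C) ^ q * G ^ (q - 1) * ((r ^ n)⁻¹ * a.toReal)) :=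
        ENNReal.ofReal_le_ofReal h4
    _ = ENNReal.ofReal ((4 * n * C) ^ q * G ^ (q - 1)) * (ENNReal.ofReal ((r ^ n)⁻¹) * a) := by
        rw [ENNReal.ofReal_mul (by positivity), ENNReal.ofReal_mul (p := (r ^ n)⁻¹) (by positivity),
          ENNReal.ofReal_toReal haT]
    _ ≤ ENNReal.ofReal ((4 * n * C) ^ q * G ^ (q - 1)) * (ENNReal.ofReal C *
          ∫⁻ y, ‖fderiv ℝ f y‖ₑ * (K1 c (m + 2) f x y + K2 x y)) := by gcongr
    _ = _ := by
        rw [← mul_assoc, ← ENNReal.ofReal_mul (by positivity)]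
        congr 2; ring

theorem stmt0 (n : ℕ) (hn : 1 ≤ n) (β q : ℝ) (hβ0 : 0 < β) (hβn : β < n)
    (hq : q = n / (n - β)) :
    ∃ C : ℝ, 0 < C ∧ ∀ f : EuclideanSpace ℝ (Fin n) → ℝ,
      ContDiff ℝ 1 f →
      (∀ x y : EuclideanSpace ℝ (Fin n), ‖x‖ = ‖y‖ → f x = f y) →
      Integrable f →
      Integrable (fun x => gradient f x) →
      (∀ᵐ x : EuclideanSpace ℝ (Fin n), DifferentiableAt ℝ (fracMax β f) x) →
      (∫ x : EuclideanSpace ℝ (Fin n), ‖gradient (fracMax β f) x‖ ^ q) ^ (1 / q) ≤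
        C * ∫ x : EuclideanSpace ℝ (Fin n), ‖gradient f x‖ := by
  obtain ⟨P, c, C', hP, hC', H⟩ := pointwise hβ0 hβn hq
  obtain ⟨W, hW, HW⟩ := K2_int n
  have hV := VB_pos n
  have hnb : 0 < (n : ℝ) - β := by linarith
  have hq1 : 1 ≤ q := by rw [hq, le_div_iff₀ hnb]; linarith
  set W' : ℝ := C' ^ n * VB n + W with hW'
  have hW'0 : 0 ≤ W' := by positivity
  set T : ℝ := P * W' + 1 with hT
  have hT0 : 0 < T := by positivity
  refine ⟨T ^ (1 / q), by positivity, ?_⟩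
  intro f hf hrad hfi hgi hdiff
  simp only [norm_gradient_eq]
  have hgi' : Integrable (fun x => fderiv ℝ f x) :=
    (integrable_norm_iff (hf.continuous_fderiv one_ne_zero).aestronglyMeasurable).mp (by
      have := hgi.norm
      simpa only [norm_gradient_eq] using this)
  have hG : ∫⁻ y, ‖fderiv ℝ f y‖ₑ ≠ ⊤ := hgi'.2.ne
  have hGeq : ∫ x, ‖fderiv ℝ f x‖ = (∫⁻ y, ‖fderiv ℝ f y‖ₑ).toReal :=
    integral_norm_eq_lintegral_enorm hgi'.1
  set G := ∫ x, ‖fderiv ℝ f x‖ with hGdef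
  have hG0 : 0 ≤ G := integral_nonneg fun _ => norm_nonneg _
  have hGL : ∫⁻ y, ‖fderiv ℝ f y‖ₑ = ENNReal.ofReal G := by
    rw [hGeq, ENNReal.ofReal_toReal hG]
  have hdm : Measurable fun y => ‖fderiv ℝ f y‖ₑ := (hf.continuous_fderiv one_ne_zero).enorm.measurable
  by_cases hInt : Integrable (fun x => ‖fderiv ℝ (fracMax β f) x‖ ^ q)
  swap
  · rw [integral_undef hInt, Real.zero_rpow (by positivity)]
    positivity
  have hK : Measurable fun p : EuclideanSpace ℝ (Fin n) × EuclideanSpace ℝ (Fin n) =>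
      ‖fderiv ℝ f p.2‖ₑ * (K1 c C' f p.1 p.2 + K2 p.1 p.2) :=
    (hdm.comp measurable_snd).mul ((K1_meas c C' hf.continuous).add K2_meas)
  have key : ENNReal.ofReal (∫ x, ‖fderiv ℝ (fracMax β f) x‖ ^ q) ≤ ENNReal.ofReal (T * G ^ q) := by
    rw [ofReal_integral_eq_lintegral_ofReal hInt (ae_of_all _ fun x => by positivity)]
    calc _ ≤ ∫⁻ x, ENNReal.ofReal (P * G ^ (q - 1)) *
            ∫⁻ y, ‖fderiv ℝ f y‖ₑ * (K1 c C' f x y + K2 x y) := by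
          refine lintegral_mono_ae ?_
          filter_upwards [hdiff] with x hx
          rw [hGeq]
          exact H f hf hrad hfi hG x hx
      _ = ENNReal.ofReal (P * G ^ (q - 1)) *
            ∫⁻ y, ∫⁻ x, ‖fderiv ℝ f y‖ₑ * (K1 c C' f x y + K2 x y) := by
          rw [lintegral_const_mul _ hK.lintegral_prod_right', lintegral_lintegral_swap hK.aemeasurable]
      _ ≤ ENNReal.ofReal (P * G ^ (q - 1)) *
            ∫⁻ y, ‖fderiv ℝ f y‖ₑ * ENNReal.ofReal W' := by
          gcongr with y
          have hk1 : Measurable fun x => K1 c C' f x y :=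
            (K1_meas c C' hf.continuous).of_uncurry_right (f := K1 c C' f)
          have hk2 : Measurable fun x => K2 x y := K2_meas.of_uncurry_right (f := K2)
          rw [lintegral_const_mul' _ _ enorm_ne_top, lintegral_add_left hk1, hW',
            ENNReal.ofReal_add (by positivity) hW]
          gcongr
          · exact K1_int hn c hC' f y
          · exact HW y
      _ = ENNReal.ofReal (P * W' * G ^ q) := by
          rw [lintegral_mul_const _ hdm, hGL, ← ENNReal.ofReal_mul hG0,
            ← ENNReal.ofReal_mul (by positivity)]
          congr 1
          have h3 : G ^ q = G ^ (q - 1) * G := by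
            rcases hG0.eq_or_lt with h0 | h0
            · rw [← h0, Real.zero_rpow (by linarith), mul_zero]
            · rw [← Real.rpow_add_one h0.ne']; congr 1; ring
          rw [h3]; ring
      _ ≤ _ := by
          apply ENNReal.ofReal_le_ofReal
          gcongr
          rw [hT]; linarith
  rw [ENNReal.ofReal_le_ofReal_iff (by positivity)] at key
  calc _ ≤ (T * G ^ q) ^ (1 / q) :=
        Real.rpow_le_rpow (integral_nonneg fun x => by positivity) key (by positivity)
    _ = _ := by
        rw [Real.mul_rpow hT0.le (by positivity), ← Real.rpow_mul hG0,
          mul_one_div_cancel (by positivity), Real.rpow_one]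
end
end

section
/- Let n ≥ 1, 0 ≤ β < n, let f : ℝⁿ → ℝ be locally integrable, let x ∈ ℝⁿ, and suppose M_β f is real-valued in a neighborhood of x and differentiable at x. If there exists a best ball B ∈ ℬ_x such that x lies in the open ball B itself, then ∇M_β f(x) = 0. -/
open MeasureTheory Metric Filter
open scoped Topology

noncomputable section

/-- `B(z,r)` is a best ball at `x` for `M_β f`, i.e. `B(z,r) ∈ ℬ_x`. -/
def IsBestBall {n : ℕ} (β : ℝ) (f : EuclideanSpace ℝ (Fin n) → ℝ)
    (x z : EuclideanSpace ℝ (Fin n)) (r : ℝ) : Prop :=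
  0 < r ∧ x ∈ closedBall z r ∧ fracMax β f x = r ^ β * ⨍ y in ball z r, |f y|

theorem stmt5 (n : ℕ) (hn : 1 ≤ n) (β : ℝ) (hβ0 : 0 ≤ β) (hβn : β < n)
    (f : EuclideanSpace ℝ (Fin n) → ℝ) (hf : LocallyIntegrable f)
    (x : EuclideanSpace ℝ (Fin n))
    (hfin : ∀ᶠ y in 𝓝 x, BddAbove (maxSet β f y))
    (hdiff : DifferentiableAt ℝ (fracMax β f) x)
    (z : EuclideanSpace ℝ (Fin n)) (r : ℝ) (hB : IsBestBall β f x z r)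
    (hmem : x ∈ ball z r) :
    gradient (fracMax β f) x = 0 := by
  have hmin : IsLocalMin (fracMax β f) x := by
    filter_upwards [hfin, isOpen_ball.mem_nhds hmem] with y hy hyB
    rw [hB.2.2]
    exact le_csSup hy ⟨z, r, hB.1, ball_subset_closedBall hyB, rfl⟩
  rw [gradient, hmin.fderiv_eq_zero, map_zero]
end
end

section
/- Let n ≥ 1, 0 ≤ β < n, let f : ℝⁿ → ℝ be locally integrable, let x ∈ ℝⁿ, and suppose M_β f is real-valued in a neighborhood of x and differentiable at x with ∇M_β f(x) ≠ 0. If B = B(z,r) ∈ ℬ_x is a best ball at x with x on the boundary sphere ∂B(z,r) (i.e. |x − z| = r), then ∇M_β f(x)/|∇M_β f(x)| = (z − x)/|z − x|. -/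
open MeasureTheory Metric Filter
open scoped Topology

noncomputable section

theorem stmt6 (n : ℕ) (hn : 1 ≤ n) (β : ℝ) (hβ0 : 0 ≤ β) (hβn : β < n)
    (f : EuclideanSpace ℝ (Fin n) → ℝ) (hf : LocallyIntegrable f)
    (x : EuclideanSpace ℝ (Fin n))
    (hfin : ∀ᶠ y in 𝓝 x, BddAbove (maxSet β f y))
    (hdiff : DifferentiableAt ℝ (fracMax β f) x)
    (hgrad : gradient (fracMax β f) x ≠ 0)
    (z : EuclideanSpace ℝ (Fin n)) (r : ℝ) (hB : IsBestBall β f x z r)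
    (hbd : ‖x - z‖ = r) :
    ‖gradient (fracMax β f) x‖⁻¹ • gradient (fracMax β f) x =
      ‖z - x‖⁻¹ • (z - x) := by
  obtain ⟨hr, hx, hmax⟩ := hB
  have hmin : IsLocalMinOn (fracMax β f) (closedBall z r) x := by
    have h1 : ∀ᶠ y in 𝓝[closedBall z r] x, BddAbove (maxSet β f y) :=
      hfin.filter_mono nhdsWithin_le_nhds
    filter_upwards [h1, self_mem_nhdsWithin] with y hy hyB
    rw [hmax]
    exact le_csSup hy ⟨z, r, hr, hyB, rfl⟩
  set g := gradient (fracMax β f) x with hg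
  have hgpos : 0 < ‖g‖ := norm_pos_iff.mpr hgrad
  have hd : HasFDerivAt (fracMax β f) (InnerProductSpace.toDual ℝ _ g) x :=
    hdiff.hasGradientAt.hasFDerivAt
  have hp : z - (r / ‖g‖) • g ∈ closedBall z r := by
    rw [mem_closedBall, dist_eq_norm, sub_sub_cancel_left, norm_neg, norm_smul, norm_div,
      norm_norm, Real.norm_of_nonneg hr.le, div_mul_cancel₀ _ hgpos.ne']
  have hseg : segment ℝ x (x + (z - (r / ‖g‖) • g - x)) ⊆ closedBall z r := by
    rw [add_sub_cancel]
    exact (convex_closedBall z r).segment_subset hx hp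
  have h0 := hmin.hasFDerivWithinAt_nonneg hd.hasFDerivWithinAt
    (mem_posTangentConeAt_of_segment_subset hseg)
  have hw : ‖z - x‖ = r := by rw [norm_sub_rev, hbd]
  have hrw : z - (r / ‖g‖) • g - x = (z - x) - (r / ‖g‖) • g := by abel
  rw [InnerProductSpace.toDual_apply_apply, hrw, inner_sub_right, inner_smul_right,
    real_inner_self_eq_norm_sq] at h0
  have h2 : r / ‖g‖ * ‖g‖ ^ 2 = ‖g‖ * r := by field_simp
  have heq : inner ℝ g (z - x) = ‖g‖ * ‖z - x‖ := by
    apply le_antisymm (real_inner_le_norm _ _)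
    rw [hw]; linarith
  have h3 := inner_eq_norm_mul_iff_real.mp heq
  rw [inv_smul_eq_iff₀ hgpos.ne', smul_comm, ← h3, smul_smul, inv_mul_cancel₀ (by rw [hw]; exact hr.ne'), one_smul]
end
end

section
/- Let n ≥ 1, 0 < β < n, let f : ℝⁿ → [0,∞) be nonnegative, continuously differentiable and integrable, let x ∈ ℝⁿ, suppose M_β f is real-valued in a neighborhood of x and differentiable at x, and let B = B(z,r) ∈ ℬ_x be a best ball at x. Then | ⨍_B ∇f(y) dy | = (n/r) [ (1 − β/n) ⨍_B f(y) dy − ⨍_{∂B(z,r)} f dH^{n−1} ], where the last average is taken with respect to the (n−1)-dimensional Hausdorff measure on the sphere ∂B(z,r). -/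
open MeasureTheory Metric Filter
open scoped Topology

noncomputable section

open scoped Pointwise
lemma uniq_avg {X : Type*} [MetricSpace X] [CompactSpace X] [MeasurableSpace X] [BorelSpace X]
    (μ ν : Measure X) [IsFiniteMeasure μ] [IsFiniteMeasure ν] (hν0 : ν ≠ 0)
    (hμ : ∀ ρ x y, μ.real (ball x ρ) = μ.real (ball y ρ))
    (hν : ∀ ρ x y, ν.real (ball x ρ) = ν.real (ball y ρ))
    (f : X → ℝ) (hf : Continuous f) :
    ν.real Set.univ * ∫ x, f x ∂μ = μ.real Set.univ * ∫ x, f x ∂ν := by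
  set M := μ.real Set.univ
  set N := ν.real Set.univ
  have hM : 0 ≤ M := measureReal_nonneg
  have hN : 0 ≤ N := measureReal_nonneg
  have key : ∀ ε > 0, |N * ∫ x, f x ∂μ - M * ∫ x, f x ∂ν| ≤ ε * (M * N) := by
    intro ε hε
    obtain ⟨δ, hδ, hfd⟩ := Metric.uniformContinuous_iff.1
      (CompactSpace.uniformContinuous_of_continuous hf) ε hε
    have : Nonempty X := by
      by_contra h
      rw [not_nonempty_iff] at h
      exact hν0 (Measure.eq_zero_of_isEmpty ν)
    obtain ⟨x0⟩ := this
    set k := ν.real (ball x0 δ) with hk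
    set m := μ.real (ball x0 δ) with hm
    have hkpos : 0 < k := by
      obtain ⟨x, hx⟩ := Measure.nonempty_support hν0
      have h1 := (Measure.mem_support_iff_forall x).1 hx (ball x δ) (ball_mem_nhds x hδ)
      rw [hk, hν δ x0 x]
      exact ENNReal.toReal_pos h1.ne' (measure_ne_top _ _)
    have hset : MeasurableSet {p : X × X | dist p.1 p.2 < δ} :=
      (isOpen_lt (by fun_prop) continuous_const).measurableSet
    have swap : ∀ g : X → ℝ, Continuous g →
        ∫ x, (∫ y in ball x δ, g y ∂ν) ∂μ = m * ∫ y, g y ∂ν := by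
      intro g hg
      have hint : Integrable (fun p : X × X =>
          Set.indicator {p : X × X | dist p.1 p.2 < δ} (fun p => g p.2) p) (μ.prod ν) := by
        apply Integrable.indicator _ hset
        exact (hg.comp continuous_snd).integrable_of_hasCompactSupport
          (HasCompactSupport.of_compactSpace _)
      have := integral_integral_swap (f := fun x y =>
          Set.indicator {p : X × X | dist p.1 p.2 < δ} (fun p => g p.2) (x, y)) hint
      calc _ = ∫ x, (∫ y, Set.indicator {p : X × X | dist p.1 p.2 < δ} (fun p => g p.2) (x, y) ∂ν) ∂μ := by
            congr 1; ext x
            rw [← integral_indicator measurableSet_ball]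
            congr 1; ext y
            simp [Set.indicator, dist_comm]
        _ = _ := this
        _ = ∫ y, m * g y ∂ν := by
            congr 1; ext y
            rw [hm, hμ δ x0 y, ← smul_eq_mul,
              ← setIntegral_const, ← integral_indicator measurableSet_ball]
            congr 1
        _ = _ := integral_const_mul _ _
    have h1 : k * M = m * N := by
      have := swap (fun _ => 1) continuous_const
      simp only [integral_const, smul_eq_mul, mul_one, measureReal_restrict_apply_univ] at this
      rw [← this]
      rw [show (fun x => ν.real (ball x δ)) = fun _ => k from funext fun x => hν δ x x0]
      simp [M, mul_comm]
    have hfμ : Integrable f μ := hf.integrable_of_hasCompactSupport (HasCompactSupport.of_compactSpace _)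
    have hfν : Integrable f ν := hf.integrable_of_hasCompactSupport (HasCompactSupport.of_compactSpace _)
    have h2 : |(∫ x, (∫ y in ball x δ, f y ∂ν) ∂μ) - k * ∫ x, f x ∂μ| ≤ ε * k * M := by
      by_cases hi : Integrable (fun x => ∫ y in ball x δ, f y ∂ν) μ
      · rw [← integral_const_mul, ← integral_sub hi (hfμ.const_mul k), ← Real.norm_eq_abs]
        refine (norm_integral_le_of_norm_le_const (C := ε * k) (Eventually.of_forall fun x => ?_))
        have : k * f x = ∫ y in ball x δ, f x ∂ν := by
          rw [setIntegral_const, hk, hν δ x0 x, smul_eq_mul]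
        rw [this, ← integral_sub hfν.integrableOn (integrable_const _)]
        refine (norm_setIntegral_le_of_norm_le_const (C := ε) (measure_lt_top _ _) ?_).trans ?_
        · intro y hy
          rw [← dist_eq_norm]
          exact (hfd hy).le
        · rw [hk, hν δ x0 x]
      · exfalso
        apply hi
        have hint : Integrable (fun p : X × X =>
          Set.indicator {p : X × X | dist p.1 p.2 < δ} (fun p => f p.2) p) (μ.prod ν) := by
          apply Integrable.indicator _ hset
          exact (hf.comp continuous_snd).integrable_of_hasCompactSupport
            (HasCompactSupport.of_compactSpace _)
        refine hint.integral_prod_left.congr (Eventually.of_forall fun x => ?_)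
        simp only
        rw [← integral_indicator measurableSet_ball]
        congr 1; ext y
        simp [Set.indicator, dist_comm]
    rw [swap f hf] at h2
    have h3 : |N * ((m * ∫ y, f y ∂ν) - k * ∫ x, f x ∂μ)| ≤ N * (ε * k * M) := by
      rw [abs_mul, abs_of_nonneg hN]; gcongr
    have h4 : N * ((m * ∫ y, f y ∂ν) - k * ∫ x, f x ∂μ) = - (k * (N * ∫ x, f x ∂μ - M * ∫ x, f x ∂ν)) := by
      linear_combination (-(∫ y, f y ∂ν)) * h1
    rw [h4, abs_neg, abs_mul, abs_of_pos hkpos] at h3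
    have : k * |N * ∫ x, f x ∂μ - M * ∫ x, f x ∂ν| ≤ k * (ε * (M * N)) := by linarith
    exact le_of_mul_le_mul_left this hkpos
  have : |N * ∫ x, f x ∂μ - M * ∫ x, f x ∂ν| ≤ 0 := by
    refine le_of_forall_pos_le_add fun ε hε => ?_
    have h5 : 0 < M * N + 1 := by positivity
    refine (key (ε / (M * N + 1)) (by positivity)).trans ?_
    rw [zero_add, div_mul_eq_mul_div, div_le_iff₀ h5]
    nlinarith
  exact sub_eq_zero.1 (abs_nonpos_iff.1 this)

abbrev E (n : ℕ) := EuclideanSpace ℝ (Fin n)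

lemma normalize_lip {F : Type*} [NormedAddCommGroup F] [NormedSpace ℝ F] :
    LipschitzOnWith 2 (fun x : F => ‖x‖⁻¹ • x) {x | 1 ≤ ‖x‖} := by
  apply LipschitzOnWith.of_dist_le_mul
  intro x hx y hy
  simp only [Set.mem_ofPred_eq] at hx hy
  have hx0 : 0 < ‖x‖ := by linarith
  have hy0 : 0 < ‖y‖ := by linarith
  rw [dist_eq_norm, dist_eq_norm]
  have : ‖x‖⁻¹ • x - ‖y‖⁻¹ • y = ‖x‖⁻¹ • ((x - y) + ((‖y‖ - ‖x‖) * ‖y‖⁻¹) • y) := by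
    have h : ‖x‖⁻¹ * ((‖y‖ - ‖x‖) * ‖y‖⁻¹) = ‖x‖⁻¹ - ‖y‖⁻¹ := by field_simp
    rw [smul_add, smul_smul, h, smul_sub, sub_smul]; abel
  rw [this, norm_smul, norm_inv, norm_norm]
  have h1 : ‖(x - y) + ((‖y‖ - ‖x‖) * ‖y‖⁻¹) • y‖ ≤ ‖x - y‖ + ‖x - y‖ := by
    refine (norm_add_le _ _).trans ?_
    gcongr
    rw [norm_smul, norm_mul, norm_inv, norm_norm, mul_assoc, inv_mul_cancel₀ hy0.ne', mul_one]
    rw [norm_sub_rev x y]; exact abs_norm_sub_norm_le y x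
  have h2 : ‖x‖⁻¹ ≤ 1 := inv_le_one_of_one_le₀ hx
  calc _ ≤ 1 * (‖x - y‖ + ‖x - y‖) := by gcongr
    _ = _ := by push_cast; ring

lemma sphere_fin (m : ℕ) : μH[(m : ℝ)] (sphere (0 : E (m+1)) 1) < ⊤ := by
  let φ : Fin (m+1) → ℝ → (Fin m → ℝ) → E (m+1) := fun i s v => WithLp.toLp 2 (i.insertNth s v)
  have hφ : ∀ i s, ∃ K, LipschitzWith K (φ i s) := by
    intro i s
    have h := (PiLp.lipschitzWith_toLp 2 (fun _ : Fin (m+1) => ℝ)).comp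
      (g := fun v : Fin m → ℝ => (i.insertNth s v : Fin (m+1) → ℝ)) (Kg := 1) ?_
    · exact ⟨_, h⟩
    apply LipschitzWith.of_dist_le_mul
    intro v w
    simp only [NNReal.coe_one, one_mul]
    rw [dist_pi_le_iff dist_nonneg]
    intro j
    refine Fin.succAboveCases i ?_ (fun j => ?_) j
    · simp
    · simp [dist_le_pi_dist]
  have hcov : sphere (0 : E (m+1)) 1 ⊆ ⋃ i : Fin (m+1), ⋃ b : Bool,
      (fun x : E (m+1) => ‖x‖⁻¹ • x) '' (φ i (if b then 1 else -1) '' (closedBall 0 1)) := by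
    intro u hu
    have hu1 : ‖u‖ = 1 := by simpa using hu
    obtain ⟨i, hi⟩ := Finite.exists_max (fun i => |u i|)
    have hui : u i ≠ 0 := by
      intro h0
      have : u = 0 := by
        ext j
        have := hi j
        simp only [h0, abs_zero] at this
        simpa using this
      simp [this] at hu1
    have hp : 0 < |u i| := abs_pos.2 hui
    rw [Set.mem_iUnion]
    refine ⟨i, ?_⟩
    rw [Set.mem_iUnion]
    refine ⟨decide (0 < u i), ?_⟩
    have e : φ i (if decide (0 < u i) then 1 else -1) (fun j => |u i|⁻¹ * u (i.succAbove j)) = |u i|⁻¹ • u := by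
      ext j
      refine Fin.succAboveCases i ?_ (fun j => ?_) j
      · simp only [φ, Fin.insertNth_apply_same, PiLp.smul_apply, smul_eq_mul]
        by_cases h : 0 < u i
        · simp [h, abs_of_pos h, hui]
        · have h' : u i < 0 := lt_of_le_of_ne (not_lt.1 h) hui
          simp [h, abs_of_neg h', hui, inv_neg]
      · simp [φ]
    refine ⟨_, ⟨fun j => |u i|⁻¹ * u (i.succAbove j), ?_, rfl⟩, ?_⟩
    · rw [mem_closedBall_zero_iff, pi_norm_le_iff_of_nonneg zero_le_one]
      intro j
      rw [norm_mul, norm_inv, Real.norm_eq_abs, abs_abs, inv_mul_le_iff₀ hp, mul_one]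
      exact hi _
    · simp only [e]
      rw [norm_smul, hu1, smul_smul]
      simp [hui]
  refine (measure_mono hcov).trans_lt ?_
  rw [← Set.iUnion_prod' (fun p : Fin (m+1) × Bool => (fun x : E (m+1) => ‖x‖⁻¹ • x) '' (φ p.1 (if p.2 then 1 else -1) '' (closedBall 0 1)))]
  refine (measure_iUnion_le _).trans_lt ?_
  rw [tsum_fintype]
  refine ENNReal.sum_lt_top.2 fun p _ => ?_
  obtain ⟨K, hK⟩ := hφ p.1 (if p.2 then 1 else -1)
  have hm : (0:ℝ) ≤ m := Nat.cast_nonneg m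
  have h1 : φ p.1 (if p.2 then 1 else -1) '' (closedBall 0 1) ⊆ {x | 1 ≤ ‖x‖} := by
    rintro _ ⟨v, -, rfl⟩
    have := PiLp.norm_apply_le (φ p.1 (if p.2 then 1 else -1) v) p.1
    refine le_trans ?_ this
    simp only [φ, Fin.insertNth_apply_same]
    split_ifs <;> simp
  refine ((normalize_lip.mono h1).hausdorffMeasure_image_le hm).trans_lt ?_
  refine ENNReal.mul_lt_top (by simp) ?_
  refine (hK.hausdorffMeasure_image_le hm _).trans_lt ?_
  refine ENNReal.mul_lt_top (by simp) ?_
  have := hausdorffMeasure_pi_real (ι := Fin m)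
  simp only [Fintype.card_fin] at this
  rw [this]
  exact measure_closedBall_lt_top

lemma sphere_pos (m : ℕ) : 0 < μH[(m : ℝ)] (sphere (0 : E (m+1)) 1) := by
  have hm : (0:ℝ) ≤ m := Nat.cast_nonneg m
  let p : E (m+1) → (Fin m → ℝ) := fun u j => u j.succ
  have hp : LipschitzWith 1 p := by
    apply LipschitzWith.of_dist_le_mul
    intro v w
    simp only [NNReal.coe_one, one_mul]
    rw [dist_pi_le_iff dist_nonneg]
    intro j
    have := PiLp.norm_apply_le (v - w) j.succ
    simpa [p, dist_eq_norm] using this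
  have h1 := hp.hausdorffMeasure_image_le hm (sphere (0 : E (m+1)) 1)
  have := hausdorffMeasure_pi_real (ι := Fin m)
  simp only [Fintype.card_fin] at this
  rw [this] at h1
  simp only [ENNReal.coe_one, ENNReal.one_rpow, one_mul] at h1
  refine lt_of_lt_of_le ?_ h1
  have hsub : {v : Fin m → ℝ | ∑ j, v j ^ 2 < 1} ⊆ p '' sphere (0 : E (m+1)) 1 := by
    intro v hv
    simp only [Set.mem_ofPred_eq] at hv
    refine ⟨WithLp.toLp 2 (Fin.cons (Real.sqrt (1 - ∑ j, v j ^ 2)) v), ?_, ?_⟩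
    · rw [mem_sphere_zero_iff_norm, EuclideanSpace.norm_eq, Real.sqrt_eq_one, Fin.sum_univ_succ]
      simp [Real.sq_sqrt (sub_nonneg.2 hv.le)]
    · ext j; simp [p]
  refine lt_of_lt_of_le ?_ (measure_mono hsub)
  refine IsOpen.measure_pos _ (isOpen_lt (by fun_prop) continuous_const) ⟨0, by simp⟩

lemma sphere_avg (m : ℕ) (z : E (m+1)) (r : ℝ) (hr : 0 < r) (f : E (m+1) → ℝ) (hf : Continuous f) :
    ⨍ y in sphere z r, f y ∂(μH[(m : ℝ)]) =
      ⨍ w : sphere (0 : E (m+1)) 1, f (z + r • (w : E (m+1))) ∂((volume : Measure (E (m+1))).toSphere) := by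
  have hm : (0:ℝ) ≤ m := Nat.cast_nonneg m
  let g : sphere (0 : E (m+1)) 1 → E (m+1) := fun w => z + r • (w : E (m+1))
  have hgc : Continuous g := by fun_prop
  have hginj : Function.Injective g := by
    intro a b hab
    simp only [g, add_right_inj] at hab
    exact Subtype.ext (smul_right_injective _ hr.ne' hab)
  have hge : MeasurableEmbedding g := (hgc.isClosedEmbedding hginj).measurableEmbedding
  have hrange : Set.range g = sphere z r := by
    ext y
    constructor
    · rintro ⟨w, rfl⟩
      have : ‖(w : E (m+1))‖ = 1 := by simp
      simp [g, norm_smul, this, abs_of_pos hr]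
    · intro hy
      rw [mem_sphere_iff_norm] at hy
      refine ⟨⟨r⁻¹ • (y - z), ?_⟩, ?_⟩
      · simp [norm_smul, hy, abs_of_pos hr, hr.ne']
      · simp [g, smul_smul, hr.ne']
  let μ : Measure (sphere (0 : E (m+1)) 1) := (μH[(m : ℝ)]).comap g
  have hμ_apply : ∀ s, μ s = μH[(m : ℝ)] (g '' s) := fun s => hge.comap_apply _ s
  let G : E (m+1) → E (m+1) := fun w => z + r • w
  have hGl : LipschitzWith r.toNNReal G := by
    apply LipschitzWith.of_dist_le_mul
    intro v w
    simp [G, dist_smul₀, abs_of_pos hr, hr.le]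
  have hGa : AntilipschitzWith r⁻¹.toNNReal G := by
    apply AntilipschitzWith.of_le_mul_dist
    intro v w
    simp [G, dist_smul₀, abs_of_pos hr, hr.ne', hr.le]
  have hgG : g '' Set.univ = G '' sphere 0 1 := by
    ext y; simp [g, G]
  have hfin : IsFiniteMeasure μ := by
    constructor
    rw [hμ_apply, hgG]
    refine (hGl.hausdorffMeasure_image_le hm _).trans_lt ?_
    exact ENNReal.mul_lt_top (ENNReal.rpow_lt_top_of_nonneg hm (by simp)) (sphere_fin m)
  have hpos : 0 < μ Set.univ := by
    rw [hμ_apply, hgG]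
    by_contra h
    have h0 : μH[(m : ℝ)] (G '' sphere 0 1) = 0 := by simpa using h
    have := hGa.le_hausdorffMeasure_image hm (sphere 0 1)
    rw [h0, mul_zero] at this
    exact absurd this (not_le.2 (sphere_pos m))
  set ν : Measure (sphere (0 : E (m+1)) 1) := (volume : Measure (E (m+1))).toSphere with hν
  have hν0 : ν ≠ 0 := Measure.toSphere_ne_zero _
  have rot : ∀ x y : sphere (0 : E (m+1)) 1, ∃ T : E (m+1) ≃ₗᵢ[ℝ] E (m+1), T x = y := by
    intro x y
    refine ⟨(Submodule.span ℝ {(x : E (m+1)) - y})ᗮ.reflection, ?_⟩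
    apply Submodule.reflection_sub
    have h1 : ‖(x : E (m+1))‖ = 1 := by simp
    have h2 : ‖(y : E (m+1))‖ = 1 := by simp
    rw [h1, h2]
  have ballrot : ∀ (ρ : ℝ) (x y : sphere (0 : E (m+1)) 1) (T : E (m+1) ≃ₗᵢ[ℝ] E (m+1)), T x = y →
      ((↑) '' (ball y ρ) : Set (E (m+1))) = T '' ((↑) '' (ball x ρ)) := by
    intro ρ x y T hT
    ext w
    constructor
    · rintro ⟨w, hw, rfl⟩
      have h1 : ‖(w : E (m+1))‖ = 1 := by simp
      refine ⟨T.symm w, ⟨⟨T.symm w, by simp [h1]⟩, ?_, rfl⟩, by simp⟩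
      rw [mem_ball, Subtype.dist_eq] at hw ⊢
      rw [← hT] at hw
      rw [← T.dist_map]
      simpa using hw
    · rintro ⟨_, ⟨w, hw, rfl⟩, rfl⟩
      have h1 : ‖(w : E (m+1))‖ = 1 := by simp
      refine ⟨⟨T w, by simp [h1]⟩, ?_, rfl⟩
      rw [mem_ball, Subtype.dist_eq] at hw ⊢
      rw [← hT]
      simpa using hw
  have hμb : ∀ ρ x y, μ.real (ball x ρ) = μ.real (ball y ρ) := by
    intro ρ x y
    obtain ⟨T, hT⟩ := rot x y
    have hb := ballrot ρ x y T hT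
    unfold Measure.real
    rw [hμ_apply, hμ_apply]
    let J : E (m+1) ≃ᵢ E (m+1) :=
      ((IsometryEquiv.subRight z).trans T.toIsometryEquiv).trans (IsometryEquiv.addLeft z)
    have : g '' (ball y ρ) = J '' (g '' (ball x ρ)) := by
      have e1 : ∀ s : Set (sphere (0 : E (m+1)) 1), g '' s = G '' ((↑) '' s) := by
        intro s; rw [Set.image_image]
      rw [e1, e1, hb, Set.image_image, Set.image_image, Set.image_image, Set.image_image]
      refine Set.image_congr fun w _ => ?_
      simp [G, J]
    rw [this, J.hausdorffMeasure_image]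
  have hνb : ∀ ρ x y, ν.real (ball x ρ) = ν.real (ball y ρ) := by
    intro ρ x y
    obtain ⟨T, hT⟩ := rot x y
    have hb := ballrot ρ x y T hT
    unfold Measure.real
    rw [hν, Measure.toSphere_apply' _ measurableSet_ball, Measure.toSphere_apply' _ measurableSet_ball]
    congr 2
    rw [hb]
    have : (Set.Ioo (0:ℝ) 1 • (T '' ((↑) '' (ball x ρ))) : Set (E (m+1))) =
        T '' (Set.Ioo (0:ℝ) 1 • ((↑) '' (ball x ρ))) := by
      ext w
      simp only [Set.mem_smul, Set.mem_image]
      constructor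
      · rintro ⟨c, hc, _, ⟨a, ha, rfl⟩, rfl⟩
        exact ⟨c • a, ⟨c, hc, a, ha, rfl⟩, by simp⟩
      · rintro ⟨_, ⟨c, hc, a, ha, rfl⟩, rfl⟩
        exact ⟨c, hc, _, ⟨a, ha, rfl⟩, by simp⟩
    rw [this]
    have hT' := T.measurePreserving.measure_preimage_equiv (f := T.toHomeomorph.toMeasurableEquiv)
      (T '' (Set.Ioo (0:ℝ) 1 • ((↑) '' (ball x ρ))))
    rw [← hT']
    congr 1
    exact (T.injective.preimage_image _).symm
  have huniq := uniq_avg μ ν hν0 hμb hνb (fun w => f (g w)) (hf.comp hgc)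
  have hint : ∫ y in sphere z r, f y ∂(μH[(m : ℝ)]) = ∫ w, f (g w) ∂μ := by
    rw [← hge.integral_map, hge.map_comap, hrange]
  have hmeas : (μH[(m : ℝ)]).real (sphere z r) = μ.real Set.univ := by
    unfold Measure.real
    rw [hμ_apply, Set.image_univ, hrange]
  rw [setAverage_eq, average_eq, hint, hmeas]
  have hM : μ.real Set.univ ≠ 0 := (ENNReal.toReal_pos hpos.ne' (measure_ne_top _ _)).ne'
  have hN : ν.real Set.univ ≠ 0 :=
    (ENNReal.toReal_pos (Measure.measure_univ_ne_zero.2 hν0) (measure_ne_top _ _)).ne'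
  simp only [smul_eq_mul]
  change _ = _ * ∫ w, f (g w) ∂ν
  field_simp
  linarith

lemma polar_int (m : ℕ) (φ : E (m+1) → ℝ) (hφ : Continuous φ) (ρ : ℝ) (hρ : 0 < ρ) :
    ∫ y in ball (0 : E (m+1)) ρ, φ y = ∫ s in (0:ℝ)..ρ, s ^ m *
      ∫ w : sphere (0 : E (m+1)) 1, φ (s • (w : E (m+1))) ∂((volume : Measure (E (m+1))).toSphere) := by
  set σ := (volume : Measure (E (m+1))).toSphere with hσ
  have hint0 : Integrable ((ball (0 : E (m+1)) ρ).indicator φ) := by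
    rw [integrable_indicator_iff measurableSet_ball]
    exact (hφ.continuousOn.integrableOn_compact (isCompact_closedBall 0 ρ)).mono_set ball_subset_closedBall
  have hmp := (volume : Measure (E (m+1))).measurePreserving_homeomorphUnitSphereProd
  have hfr : Module.finrank ℝ (E (m+1)) - 1 = m := by simp
  rw [hfr] at hmp
  set ψ : sphere (0 : E (m+1)) 1 × Set.Ioi (0:ℝ) → ℝ :=
    fun p => (ball (0 : E (m+1)) ρ).indicator φ ((p.2 : ℝ) • (p.1 : E (m+1))) with hψ
  have hcomp : ∀ y : ({0}ᶜ : Set (E (m+1))), ψ (homeomorphUnitSphereProd _ y) =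
      (ball (0 : E (m+1)) ρ).indicator φ y := by
    intro y
    have : (y : E (m+1)) ≠ 0 := y.2
    simp only [hψ]
    congr 1
    simp [smul_smul, this]
  have hintψ : Integrable ψ (σ.prod (Measure.volumeIoiPow m)) := by
    rw [← hmp.integrable_comp_emb (Homeomorph.measurableEmbedding _)]
    have : (ψ ∘ homeomorphUnitSphereProd (E (m+1))) = ((ball (0 : E (m+1)) ρ).indicator φ) ∘ (↑) := by
      ext y; exact hcomp y
    rw [this]
    rw [← (MeasurableEmbedding.subtype_coe (measurableSet_singleton (0:E (m+1))).compl).integrable_map_iff,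
      (MeasurableEmbedding.subtype_coe (measurableSet_singleton (0:E (m+1))).compl).map_comap]
    exact hint0.restrict
  calc ∫ y in ball (0 : E (m+1)) ρ, φ y
      = ∫ y, (ball (0 : E (m+1)) ρ).indicator φ y := (integral_indicator measurableSet_ball).symm
    _ = ∫ y : ({0}ᶜ : Set (E (m+1))), (ball (0 : E (m+1)) ρ).indicator φ y ∂(volume.comap Subtype.val) := by
        rw [integral_subtype_comap (measurableSet_singleton _).compl (fun y => (ball (0 : E (m+1)) ρ).indicator φ y),
          restrict_compl_singleton]
    _ = ∫ y : ({0}ᶜ : Set (E (m+1))), ψ (homeomorphUnitSphereProd _ y) ∂(volume.comap Subtype.val) := by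
        simp only [hcomp]
    _ = ∫ p, ψ p ∂(σ.prod (Measure.volumeIoiPow m)) :=
        hmp.integral_comp (Homeomorph.measurableEmbedding _) ψ
    _ = ∫ s : Set.Ioi (0:ℝ), (∫ w, ψ (w, s) ∂σ) ∂(Measure.volumeIoiPow m) :=
        integral_prod_symm _ hintψ
    _ = ∫ s : Set.Ioi (0:ℝ), (Set.Iio ρ).indicator (fun s : ℝ => s ^ m * ∫ w, φ (s • (w : E (m+1))) ∂σ) (s:ℝ) ∂(Measure.comap Subtype.val volume) := by
        unfold Measure.volumeIoiPow
        rw [integral_withDensity_eq_integral_toReal_smul (by fun_prop) (by simp)]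
        congr 1; ext s
        have hs : (0:ℝ) < s := s.2
        rw [ENNReal.toReal_ofReal (by positivity), smul_eq_mul]
        by_cases h : (s:ℝ) < ρ
        · rw [Set.indicator_of_mem (by exact h)]
          congr 2; ext w
          have : ‖(w : E (m+1))‖ = 1 := by simp
          simp only [hψ]
          rw [Set.indicator_of_mem]
          simp [norm_smul, this, abs_of_pos hs, h]
        · rw [Set.indicator_of_notMem (by exact h)]
          refine mul_eq_zero_of_right _ ?_
          refine integral_eq_zero_of_ae (Eventually.of_forall fun w => ?_)
          have : ‖(w : E (m+1))‖ = 1 := by simp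
          simp only [hψ]
          rw [Set.indicator_of_notMem]
          · rfl
          · simp [norm_smul, this, abs_of_pos hs, not_lt.1 h]
    _ = ∫ s in Set.Ioi (0:ℝ), (Set.Iio ρ).indicator (fun s : ℝ => s ^ m * ∫ w, φ (s • (w : E (m+1))) ∂σ) s :=
        integral_subtype_comap measurableSet_Ioi _
    _ = _ := by
        rw [setIntegral_indicator measurableSet_Iio, Set.Ioi_inter_Iio, ← integral_Ioc_eq_integral_Ioo,
          intervalIntegral.integral_of_le hρ.le]

lemma polar_deriv (m : ℕ) (φ : E (m+1) → ℝ) (hφ : Continuous φ) (r : ℝ) (hr : 0 < r) :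
    HasDerivAt (fun ρ => ∫ y in ball (0 : E (m+1)) ρ, φ y) (r ^ m *
      ∫ w : sphere (0 : E (m+1)) 1, φ (r • (w : E (m+1))) ∂((volume : Measure (E (m+1))).toSphere)) r := by
  set σ := (volume : Measure (E (m+1))).toSphere with hσ
  have hc : Continuous (fun s : ℝ => s ^ m * ∫ w : sphere (0 : E (m+1)) 1, φ (s • (w : E (m+1))) ∂σ) := by
    refine (continuous_pow m).mul ?_
    have := continuous_parametric_integral_of_continuous (μ := σ) (f := fun (s:ℝ) (w : sphere (0 : E (m+1)) 1) => φ (s • (w : E (m+1)))) (by fun_prop) (isCompact_univ)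
    simpa using this
  have h1 := intervalIntegral.integral_hasDerivAt_right (hc.intervalIntegrable 0 r)
    hc.stronglyMeasurable.stronglyMeasurableAtFilter hc.continuousAt
  refine h1.congr_of_eventuallyEq ?_
  filter_upwards [lt_mem_nhds hr] with ρ hρ
  exact polar_int m φ hφ ρ hρ

lemma avg_ball (m : ℕ) {F : Type*} [NormedAddCommGroup F] [NormedSpace ℝ F]
    (φ : E (m+1) → F) (z : E (m+1)) (r : ℝ) (hr : 0 < r) :
    ⨍ y in ball z r, φ y = ⨍ y in ball (0 : E (m+1)) 1, φ (z + r • y) := by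
  rw [setAverage_eq, setAverage_eq]
  rw [Measure.setIntegral_comp_smul_of_pos volume (fun y => φ (z + y)) _ hr, smul_unitBall_of_pos hr]
  have h1 : ∫ y in ball (0 : E (m+1)) r, φ (z + y) = ∫ y in ball z r, φ y := by
    rw [← (measurePreserving_add_left volume z).setIntegral_preimage_emb
      (measurableEmbedding_addLeft z) φ (ball z r)]
    congr 2
    simp [preimage_add_ball]
  rw [h1, smul_smul]
  congr 1
  rw [Measure.real, Measure.addHaar_ball_of_pos _ _ hr, ENNReal.toReal_mul,
    ENNReal.toReal_ofReal (by positivity), mul_inv, mul_comm, Measure.real]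

lemma line_deriv (m : ℕ) (f : E (m+1) → ℝ) (hf : ContDiff ℝ 1 f) (P : Measure (E (m+1)))
    [IsFiniteMeasure P] (hP : ∀ᵐ y ∂P, y ∈ closedBall (0 : E (m+1)) 1)
    (z h : E (m+1)) (r s : ℝ) :
    HasDerivAt (fun t : ℝ => ∫ y, f ((z + t • h) + (r + t * s) • y) ∂P)
      (∫ y, fderiv ℝ f (z + r • y) (h + s • y) ∂P) 0 := by
  let F' : ℝ → E (m+1) → ℝ := fun t y => fderiv ℝ f ((z + t • h) + (r + t * s) • y) (h + s • y)
  have hfc : Continuous f := hf.continuous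
  have hdc : Continuous (fderiv ℝ f) := hf.continuous_fderiv one_ne_zero
  have hF'c : Continuous (Function.uncurry F') := by
    simp only [Function.uncurry_def, F']
    fun_prop
  obtain ⟨C, hC⟩ := ((isCompact_Icc (a := (-1:ℝ)) (b := 1)).prod
    (isCompact_closedBall (0 : E (m+1)) 1)).exists_bound_of_continuousOn hF'c.continuousOn
  obtain ⟨C', hC'⟩ := (isCompact_closedBall (0 : E (m+1)) 1).exists_bound_of_continuousOn
    (f := fun y => f ((z + (0:ℝ) • h) + (r + 0 * s) • y)) (by fun_prop)
  have := (hasDerivAt_integral_of_dominated_loc_of_deriv_le (μ := P) (x₀ := (0:ℝ))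
    (s := Set.Icc (-1) 1) (bound := fun _ => C)
    (F := fun t y => f ((z + t • h) + (r + t * s) • y)) (F' := F')
    (Icc_mem_nhds (by norm_num) (by norm_num))
    (Eventually.of_forall fun t => Continuous.aestronglyMeasurable (by fun_prop))
    (Integrable.of_bound (C := C') (Continuous.aestronglyMeasurable (by fun_prop))
      (hP.mono fun y hy => hC' y hy))
    (Continuous.aestronglyMeasurable (by simp only [F']; fun_prop))
    (hP.mono fun y hy t ht => hC (t, y) ⟨ht, hy⟩) (integrable_const _)
    (Eventually.of_forall fun y t _ => ?_)).2
  · simpa [F'] using this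
  · have h1 : HasDerivAt (fun t : ℝ => (z + t • h) + (r + t * s) • y) (h + s • y) t := by
      have a1 : HasDerivAt (fun t : ℝ => z + t • h) h t := by
        simpa using ((hasDerivAt_id t).smul_const h).const_add z
      have a2 : HasDerivAt (fun t : ℝ => (r + t * s) • y) (s • y) t := by
        have : HasDerivAt (fun t : ℝ => r + t * s) s t := by
          simpa using ((hasDerivAt_id t).mul_const s).const_add r
        exact this.smul_const y
      exact a1.add a2
    exact ((hf.differentiable one_ne_zero _).hasFDerivAt).comp_hasDerivAt t h1

lemma radial (m : ℕ) (f : E (m+1) → ℝ) (hf : ContDiff ℝ 1 f) (z : E (m+1)) (r : ℝ) (hr : 0 < r) :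
    ⨍ y in ball (0 : E (m+1)) 1, fderiv ℝ f (z + r • y) y =
      ((m+1 : ℕ) / r) * ((⨍ y in sphere z r, f y ∂(μH[(m : ℝ)])) - ⨍ y in ball z r, f y) := by
  have hB : 0 < volume.real (ball (0 : E (m+1)) 1) :=
    ENNReal.toReal_pos (measure_ball_pos _ _ one_pos).ne' measure_ball_lt_top.ne
  set b := volume.real (ball (0 : E (m+1)) 1) with hb
  have hfinB : IsFiniteMeasure (volume.restrict (ball (0 : E (m+1)) 1)) :=
    ⟨by rw [Measure.restrict_apply_univ]; exact measure_ball_lt_top⟩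
  have h1 := line_deriv m f hf (volume.restrict (ball (0 : E (m+1)) 1))
    ((ae_restrict_mem measurableSet_ball).mono fun y hy => ball_subset_closedBall hy) z 0 r 1
  simp only [smul_zero, add_zero, mul_one, one_smul, zero_add] at h1
  have h2 : HasDerivAt (fun ρ : ℝ => ∫ y in ball (0 : E (m+1)) 1, f (z + ρ • y))
      (∫ y in ball (0 : E (m+1)) 1, fderiv ℝ f (z + r • y) y) r := by
    have := HasDerivAt.comp_sub_const (a := r) r
      (f := fun t => ∫ y in ball (0 : E (m+1)) 1, f (z + (r + t) • y))
      (by rw [sub_self]; exact h1)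
    simpa using this
  have h3 := polar_deriv m (fun y => f (z + y)) (hf.continuous.comp (by fun_prop)) r hr
  have h4 : HasDerivAt (fun ρ : ℝ => (ρ ^ (m+1))⁻¹ * ∫ y in ball (0 : E (m+1)) ρ, f (z + y)) _ r :=
    ((hasDerivAt_pow (m+1) r).inv (pow_ne_zero _ hr.ne')).mul h3
  have hscale : ∀ ρ : ℝ, 0 < ρ → ∫ y in ball (0 : E (m+1)) 1, f (z + ρ • y) =
      (ρ ^ (m+1))⁻¹ * ∫ y in ball (0 : E (m+1)) ρ, f (z + y) := by
    intro ρ hρ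
    rw [Measure.setIntegral_comp_smul_of_pos volume (fun y => f (z + y)) _ hρ, smul_unitBall_of_pos hρ]
    simp
  have h5 := h4.congr_of_eventuallyEq (f₁ := fun ρ : ℝ => ∫ y in ball (0 : E (m+1)) 1, f (z + ρ • y))
    (by filter_upwards [lt_mem_nhds hr] with ρ hρ; exact hscale ρ hρ)
  have h6 := h2.unique h5
  have h7 := sphere_avg m z r hr f hf.continuous
  rw [average_eq (μ := Measure.toSphere _), Measure.toSphere_real_apply_univ, ← hb] at h7
  rw [h7, avg_ball m f z r hr, setAverage_eq, setAverage_eq, h6, hscale r hr, ← hb]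
  simp only [smul_eq_mul, finrank_euclideanSpace, Fintype.card_fin, add_tsub_cancel_right, Pi.inv_apply]
  set I := ∫ y in ball (0 : E (m+1)) r, f (z + y)
  set S := ∫ w : sphere (0 : E (m+1)) 1, f (z + r • (w : E (m+1))) ∂((volume : Measure (E (m+1))).toSphere)
  push_cast
  have : (m:ℝ) + 1 ≠ 0 := by positivity
  field_simp
  ring

lemma deriv_nonpos_right {g : ℝ → ℝ} {d : ℝ} (hg : HasDerivAt g d 0)
    (hmax : ∀ᶠ t in 𝓝[>] (0:ℝ), g t ≤ g 0) : d ≤ 0 := by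
  have h := hg.hasDerivWithinAt (s := Set.Ioi 0)
  rw [hasDerivWithinAt_iff_tendsto_slope' (by simp)] at h
  refine le_of_tendsto h ?_
  filter_upwards [hmax, self_mem_nhdsWithin] with t ht ht0
  rw [slope_def_field]
  have : (0:ℝ) < t := ht0
  exact div_nonpos_of_nonpos_of_nonneg (by linarith) (by linarith)

theorem stmt8 (n : ℕ) (hn : 1 ≤ n) (β : ℝ) (hβ0 : 0 < β) (hβn : β < n)
    (f : EuclideanSpace ℝ (Fin n) → ℝ) (hf0 : ∀ x, 0 ≤ f x) (hf : ContDiff ℝ 1 f)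
    (hfi : Integrable f)
    (x : EuclideanSpace ℝ (Fin n))
    (hfin : ∀ᶠ y in 𝓝 x, BddAbove (maxSet β f y))
    (hdiff : DifferentiableAt ℝ (fracMax β f) x)
    (z : EuclideanSpace ℝ (Fin n)) (r : ℝ) (hB : IsBestBall β f x z r) :
    ‖⨍ y in ball z r, gradient f y‖ =
      ((n : ℝ) / r) * ((1 - β / n) * (⨍ y in ball z r, f y) -
        ⨍ y in sphere z r, f y ∂(μH[(n : ℝ) - 1])) := by
  obtain ⟨m, rfl⟩ : ∃ m, n = m + 1 := ⟨n - 1, by omega⟩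
  have hnm : ((m + 1 : ℕ) : ℝ) - 1 = m := by push_cast; ring
  rw [hnm]
  obtain ⟨hr, hxz, hM⟩ := hB
  have hbdd : BddAbove (maxSet β f x) := hfin.self_of_nhds
  have hrad := radial m f hf z r hr
  set P : Measure (E (m+1)) := ((volume (ball (0 : E (m+1)) 1))⁻¹) • volume.restrict (ball 0 1) with hPdef
  have avgP : ∀ {F : Type} [NormedAddCommGroup F] [NormedSpace ℝ F] (φ : E (m+1) → F),
      ⨍ y in ball (0 : E (m+1)) 1, φ y = ∫ y, φ y ∂P := fun φ => setAverage_eq' _ _ _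
  have hPprob : IsFiniteMeasure P := by
    constructor
    rw [hPdef]
    simp only [Measure.smul_apply, smul_eq_mul, Measure.restrict_apply_univ]
    exact ENNReal.mul_lt_top (ENNReal.inv_lt_top.2 (measure_ball_pos _ _ one_pos)) measure_ball_lt_top
  have hPball : ∀ᵐ y ∂P, y ∈ closedBall (0 : E (m+1)) 1 :=
    Measure.ae_smul_measure
      ((ae_restrict_mem measurableSet_ball).mono fun y hy => ball_subset_closedBall hy) _
  have hdc : Continuous (fderiv ℝ f) := hf.continuous_fderiv one_ne_zero
  have hgc : Continuous (gradient f) :=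
    (InnerProductSpace.toDual ℝ (E (m+1))).symm.continuous.comp hdc
  have hint : ∀ {F : Type} [NormedAddCommGroup F] [NormedSpace ℝ F] (φ : E (m+1) → F),
      AEStronglyMeasurable φ P → Continuous φ → Integrable φ P := by
    intro F _ _ φ hφm hφ
    obtain ⟨C, hC⟩ := (isCompact_closedBall (0 : E (m+1)) 1).exists_bound_of_continuousOn hφ.continuousOn
    exact Integrable.of_bound hφm C (hPball.mono fun y hy => hC y hy)
  set a := ⨍ y in ball z r, f y with ha
  set S := ⨍ y in sphere z r, f y ∂(μH[(m : ℝ)]) with hS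
  set G := ⨍ y in ball z r, gradient f y with hG
  set D := ⨍ y in ball (0 : E (m+1)) 1, fderiv ℝ f (z + r • y) y with hD
  have hG' : G = ∫ y, gradient f (z + r • y) ∂P := by rw [hG, avg_ball m _ z r hr, avgP]
  have ha' : a = ∫ y, f (z + r • y) ∂P := by rw [ha, avg_ball m _ z r hr, avgP]
  have hD' : D = ∫ y, fderiv ℝ f (z + r • y) y ∂P := by rw [hD, avgP]
  have hlin : ∀ (h : E (m+1)) (s : ℝ),
      ∫ y, fderiv ℝ f (z + r • y) (h + s • y) ∂P = inner ℝ h G + s * D := by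
    intro h s
    have c1 : Continuous fun y => inner ℝ h (gradient f (z + r • y)) := by fun_prop
    have c2 : Continuous fun y => fderiv ℝ f (z + r • y) y := by fun_prop
    have c3 : Continuous fun y => gradient f (z + r • y) := by fun_prop
    rw [hG', hD', ← integral_inner (hint _ c3.aestronglyMeasurable c3), ← integral_const_mul,
      ← integral_add (hint _ c1.aestronglyMeasurable c1)
        ((hint _ c2.aestronglyMeasurable c2).const_mul s)]
    congr 1; ext y
    rw [real_inner_comm, gradient, InnerProductSpace.toDual_symm_apply]
    simp
  -- the first-order condition
  have hcond : ∀ (h : E (m+1)) (s : ℝ),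
      (∀ᶠ t in 𝓝[>] (0:ℝ), x ∈ closedBall (z + t • h) (r + t * s)) →
      inner ℝ h G + s * (β / r * a + D) ≤ 0 := by
    intro h s hev
    have d1 := line_deriv m f hf P hPball z h r s
    rw [hlin] at d1
    have d2 : HasDerivAt (fun t : ℝ => r + t * s) s 0 := by
      simpa using ((hasDerivAt_id (0:ℝ)).mul_const s).const_add r
    have d3 := (d2.rpow_const (p := β) (Or.inl (by simpa using hr.ne'))).mul d1
    have hle := deriv_nonpos_right d3 ?_
    · simp only [zero_mul, add_zero, zero_smul] at hle
      rw [← ha', Real.rpow_sub_one hr.ne'] at hle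
      have hp : 0 < r ^ β := Real.rpow_pos_of_pos hr β
      have : r ^ β * (inner ℝ h G + s * (β / r * a + D)) ≤ 0 := by
        refine le_of_eq_of_le ?_ hle
        field_simp
        ring
      exact nonpos_of_mul_nonpos_right this hp
    · have hpos : ∀ᶠ t in 𝓝[>] (0:ℝ), 0 < r + t * s := by
        apply nhdsWithin_le_nhds
        have hc : ContinuousAt (fun t : ℝ => r + t * s) 0 := by fun_prop
        exact hc.eventually (lt_mem_nhds (by simpa using hr))
      filter_upwards [hev, hpos] with t ht htp
      have habs : ∀ (w : E (m+1)) (ρ : ℝ), (⨍ y in ball w ρ, |f y|) = ⨍ y in ball w ρ, f y := by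
        intro w ρ
        congr 1; ext y; exact abs_of_nonneg (hf0 y)
      have hmem : (r + t * s) ^ β * ⨍ y in ball (z + t • h) (r + t * s), |f y| ∈ maxSet β f x :=
        ⟨_, _, htp, ht, rfl⟩
      have hle := le_csSup hbdd hmem
      change _ ≤ fracMax β f x at hle
      rw [hM, habs, habs, avg_ball m _ _ _ htp, avgP, ← ha, ha'] at hle
      simpa using hle
  set K := β / r * a + D with hK
  have hdist : ‖x - z‖ ≤ r := by rwa [mem_closedBall_iff_norm] at hxz
  -- growing balls
  have hup : ∀ h : E (m+1), inner ℝ h G + ‖h‖ * K ≤ 0 := by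
    intro h
    refine hcond h ‖h‖ ?_
    filter_upwards [self_mem_nhdsWithin] with t ht
    have ht0 : (0:ℝ) < t := ht
    rw [mem_closedBall_iff_norm]
    calc ‖x - (z + t • h)‖ = ‖(x - z) - t • h‖ := by congr 1; abel
      _ ≤ ‖x - z‖ + ‖t • h‖ := norm_sub_le _ _
      _ ≤ r + t * ‖h‖ := by rw [norm_smul, Real.norm_of_nonneg ht0.le]; gcongr
  have hK0 : K ≤ 0 := by
    have := hcond 0 1 ?_
    · simpa using this
    filter_upwards [self_mem_nhdsWithin] with t ht
    have ht0 : (0:ℝ) < t := ht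
    rw [mem_closedBall_iff_norm]
    simp only [smul_zero, add_zero, mul_one]
    linarith
  have hGK : ‖G‖ ≤ -K := by
    have := hup G
    rw [real_inner_self_eq_norm_sq] at this
    rcases (norm_nonneg G).eq_or_lt with h0 | h0
    · linarith
    · by_contra hc
      nlinarith
  -- shrinking balls
  obtain ⟨e, he, hxe⟩ : ∃ e : E (m+1), ‖e‖ = 1 ∧ x - z = ‖x - z‖ • e := by
    by_cases h0 : x - z = 0
    · obtain ⟨e, he⟩ := exists_norm_eq (E (m+1)) (zero_le_one (α := ℝ))
      exact ⟨e, he, by simp [h0]⟩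
    · exact ⟨‖x - z‖⁻¹ • (x - z), by simp [norm_smul, h0], by simp [smul_smul, h0]⟩
  have hKG : -K ≤ ‖G‖ := by
    have := hcond e (-1) ?_
    · have h1 : -‖G‖ ≤ inner ℝ e G := by
        have := abs_real_inner_le_norm e G
        rw [he, one_mul] at this
        exact (abs_le.1 this).1
      linarith
    have : ∀ᶠ t in 𝓝[>] (0:ℝ), t < r / 2 := nhdsWithin_le_nhds (gt_mem_nhds (by linarith))
    filter_upwards [self_mem_nhdsWithin, this] with t ht ht2
    have ht0 : (0:ℝ) < t := ht
    rw [mem_closedBall_iff_norm]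
    have : x - (z + t • e) = (‖x - z‖ - t) • e := by
      rw [sub_smul, ← hxe]; abel
    rw [this, norm_smul, he, mul_one, Real.norm_eq_abs, abs_le]
    have := norm_nonneg (x - z)
    constructor <;> linarith
  have : ‖G‖ = -K := le_antisymm hGK hKG
  rw [this, hK, hrad]
  have hmn : ((m + 1 : ℕ) : ℝ) ≠ 0 := by positivity
  field_simp
  ring
end
end

section
/- There exists a constant C = C(n) > 0 such that the following holds. Let f : ℝⁿ → [0,∞) be a nonnegative, locally integrable radial function with f(x) = F(|x|) for a function F : (0,∞) → [0,∞), let z ∈ ℝⁿ \ {0} and r > 0 be such that the ball B(z,r) is contained in B(0,2|z|) \ B(0,|z|/2), and set a := |z| − r and b := |z| + r. Then (1/(b − a)) ∫_a^b F(t) dt ≤ C(n) ⨍_{B(z,2r)} f(y) dy. -/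
open MeasureTheory Metric Filter
open scoped Topology

noncomputable section

open scoped Pointwise ENNReal in
theorem tube_aux {n : ℕ} (e : EuclideanSpace ℝ (Fin n)) (he : ‖e‖ = 1) (ρ : ℝ) (hρ : 0 < ρ)
    (U : Set (EuclideanSpace ℝ (Fin n)))
    (hU : U = {x | ∃ s ∈ Set.Ioo (1/2 : ℝ) (3/4), ‖x - s • e‖ < ρ}) :
    ENNReal.ofReal (1/4) * (volume (ball (0 : EuclideanSpace ℝ (Fin n)) ρ)) ≤
      ENNReal.ofReal (2 * ρ) * volume U := by
  have hUo : IsOpen U := by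
    have : U = ⋃ s ∈ Set.Ioo (1/2 : ℝ) (3/4), ball (s • e) ρ := by
      ext x; simp [hU, mem_ball, dist_eq_norm]
    rw [this]
    exact isOpen_biUnion fun _ _ => isOpen_ball
  set S : Set (ℝ × EuclideanSpace ℝ (Fin n)) :=
    {p | p.1 ∈ Set.Ioo (1/2 : ℝ) (3/4) ∧ ‖p.2 - p.1 • e‖ < ρ} with hS
  have hSo : IsOpen S := by
    apply IsOpen.inter
    · exact isOpen_Ioo.preimage continuous_fst
    · have hcont : Continuous (fun p : ℝ × EuclideanSpace ℝ (Fin n) => ‖p.2 - p.1 • e‖) := by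
        fun_prop
      exact isOpen_lt hcont continuous_const
  have h1 := Measure.prod_apply (μ := (volume : Measure ℝ))
    (ν := (volume : Measure (EuclideanSpace ℝ (Fin n)))) hSo.measurableSet
  have h2 := Measure.prod_apply_symm (μ := (volume : Measure ℝ))
    (ν := (volume : Measure (EuclideanSpace ℝ (Fin n)))) hSo.measurableSet
  calc ENNReal.ofReal (1/4) * (volume (ball (0 : EuclideanSpace ℝ (Fin n)) ρ))
      = ∫⁻ s in Set.Ioo (1/2 : ℝ) (3/4), volume (ball (0 : EuclideanSpace ℝ (Fin n)) ρ) := by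
        rw [setLIntegral_const, Real.volume_Ioo, mul_comm]; norm_num
    _ ≤ ∫⁻ s in Set.Ioo (1/2 : ℝ) (3/4),
          volume (Prod.mk s ⁻¹' S : Set (EuclideanSpace ℝ (Fin n))) := by
        apply setLIntegral_mono' measurableSet_Ioo
        intro s hs
        rw [← Measure.addHaar_ball_center volume (s • e) ρ]
        apply measure_mono
        intro x hx
        rw [mem_ball, dist_eq_norm] at hx
        exact ⟨hs, hx⟩
    _ ≤ ∫⁻ s : ℝ, volume (Prod.mk s ⁻¹' S : Set (EuclideanSpace ℝ (Fin n))) :=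
        setLIntegral_le_lintegral _ _
    _ = ∫⁻ x, volume ((fun s : ℝ => (s, x)) ⁻¹' S) := by rw [← h1, ← h2]
    _ ≤ ∫⁻ x, U.indicator (fun _ => ENNReal.ofReal (2 * ρ)) x := by
        apply lintegral_mono
        intro x
        by_cases hx : x ∈ U
        · simp only [Set.indicator_of_mem hx]
          calc volume ((fun s : ℝ => (s, x)) ⁻¹' S)
              ≤ volume (Set.Ioo (‖x‖ - ρ) (‖x‖ + ρ)) := by
                apply measure_mono
                rintro s ⟨hs, h⟩
                simp only at hs h
                have h3 := abs_norm_sub_norm_le x (s • e)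
                rw [norm_smul, he, mul_one, Real.norm_eq_abs,
                  abs_of_pos (by linarith [hs.1] : 0 < s)] at h3
                have h4 := abs_lt.1 (h3.trans_lt h)
                constructor <;> linarith [h4.1, h4.2]
            _ = ENNReal.ofReal (2 * ρ) := by
                rw [Real.volume_Ioo]; congr 1; ring
        · have : (fun s : ℝ => (s, x)) ⁻¹' S = ∅ := by
            ext s
            simp only [Set.mem_preimage, Set.mem_empty_iff_false, iff_false]
            rintro ⟨hs, h⟩
            exact hx (by rw [hU]; exact ⟨s, hs, h⟩)
          simp [this]
    _ = ENNReal.ofReal (2 * ρ) * volume U := by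
        rw [lintegral_indicator_const hUo.measurableSet]

open scoped Pointwise ENNReal in
theorem cap_aux {m : ℕ} (e : sphere (0 : EuclideanSpace ℝ (Fin (m+1))) 1)
    (ρ : ℝ) (hρ : 0 < ρ) (hρ' : ρ ≤ 1/8) :
    ENNReal.ofReal (volume.real (ball (0 : EuclideanSpace ℝ (Fin (m+1))) 1) / 8 * ρ ^ m) ≤
      (volume : Measure (EuclideanSpace ℝ (Fin (m+1)))).toSphere (ball e (8 * ρ)) := by
  have he : ‖(e : EuclideanSpace ℝ (Fin (m+1)))‖ = 1 := by simp
  set U : Set (EuclideanSpace ℝ (Fin (m+1))) :=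
    {x | ∃ s ∈ Set.Ioo (1/2 : ℝ) (3/4), ‖x - s • (e : EuclideanSpace ℝ (Fin (m+1)))‖ < ρ} with hU
  have h := tube_aux (e : EuclideanSpace ℝ (Fin (m+1))) he ρ hρ U hU
  have hsub : U ⊆ Set.Ioo (0:ℝ) 1 • ((↑) '' (ball e (8 * ρ))) := by
    rintro x ⟨s, hs, hx⟩
    have h3 := abs_norm_sub_norm_le x (s • (e : EuclideanSpace ℝ (Fin (m+1))))
    rw [norm_smul, he, mul_one, Real.norm_eq_abs,
      abs_of_pos (by linarith [hs.1] : 0 < s)] at h3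
    have h4 := h3.trans_lt hx
    have h5 := abs_lt.1 h4
    have hpos : 1/4 < ‖x‖ := by linarith [h5.1, hs.1]
    have hpos' : 0 < ‖x‖ := by linarith
    have hlt : ‖x‖ < 1 := by linarith [h5.2, hs.2]
    refine Set.mem_smul.2 ⟨‖x‖, ⟨hpos', hlt⟩, ‖x‖⁻¹ • x, ⟨⟨‖x‖⁻¹ • x, ?_⟩, ?_, rfl⟩, ?_⟩
    · simp [norm_smul, hpos'.ne']
    · rw [mem_ball, Subtype.dist_eq, dist_eq_norm]
      have e1 : ‖x‖⁻¹ • x - (e : EuclideanSpace ℝ (Fin (m+1))) =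
          ‖x‖⁻¹ • ((x - s • (e : EuclideanSpace ℝ (Fin (m+1)))) +
            (s - ‖x‖) • (e : EuclideanSpace ℝ (Fin (m+1)))) := by
        rw [sub_smul, sub_add_sub_cancel, smul_sub, smul_smul, inv_mul_cancel₀ hpos'.ne', one_smul]
      have e2 : ‖(x - s • (e : EuclideanSpace ℝ (Fin (m+1)))) +
            (s - ‖x‖) • (e : EuclideanSpace ℝ (Fin (m+1)))‖ < 2 * ρ := by
        refine (norm_add_le _ _).trans_lt ?_
        rw [norm_smul, he, mul_one, Real.norm_eq_abs, abs_sub_comm]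
        linarith
      simp only
      rw [e1, norm_smul, norm_inv, norm_norm, inv_mul_lt_iff₀ hpos']
      nlinarith
    · rw [smul_smul, mul_inv_cancel₀ hpos'.ne', one_smul]
  rw [Measure.toSphere_apply' _ measurableSet_ball]
  have hfr : Module.finrank ℝ (EuclideanSpace ℝ (Fin (m+1))) = m + 1 := by simp
  have hUle := measure_mono (μ := volume) hsub
  have hωfin : volume (ball (0 : EuclideanSpace ℝ (Fin (m+1))) 1) ≠ ⊤ := measure_ball_lt_top.ne
  rw [Measure.addHaar_ball_of_pos _ _ hρ, hfr, ← ofReal_measureReal hωfin,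
    ← ENNReal.ofReal_mul (by positivity), ← ENNReal.ofReal_mul (by positivity)] at h
  have h6 : ENNReal.ofReal (volume.real (ball (0 : EuclideanSpace ℝ (Fin (m+1))) 1) / 8 * ρ ^ m)
      ≤ volume U := by
    have hne : ENNReal.ofReal (2 * ρ) ≠ 0 := by simp [hρ]
    rw [← ENNReal.mul_le_mul_iff_right hne ENNReal.ofReal_ne_top]
    refine le_trans (le_of_eq ?_) h
    rw [← ENNReal.ofReal_mul (by positivity)]
    congr 1
    ring
  refine h6.trans (hUle.trans ?_)
  rw [hfr]
  exact le_mul_of_one_le_left (by simp) (by simp)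

open scoped Pointwise ENNReal in
theorem polar_aux {m : ℕ} (e : sphere (0 : EuclideanSpace ℝ (Fin (m+1))) 1)
    (δ a b c : ℝ) (hc : 0 < c) (hca : c ≤ a) (G : ℝ → ℝ≥0∞) (hG : Measurable G)
    (hG0 : ∀ t, t ∉ Set.Ioc a b → G t = 0)
    (B : Set (EuclideanSpace ℝ (Fin (m+1)))) (hB : MeasurableSet B)
    (hsub : ∀ x : EuclideanSpace ℝ (Fin (m+1)), ‖x‖ ∈ Set.Ioc a b →
      ‖‖x‖⁻¹ • x - (e : EuclideanSpace ℝ (Fin (m+1)))‖ < δ → x ∈ B) :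
    (volume : Measure (EuclideanSpace ℝ (Fin (m+1)))).toSphere (ball e δ) *
      (ENNReal.ofReal (c ^ m) * ∫⁻ t, G t) ≤ ∫⁻ x in B, G ‖x‖ := by
  have hfr : Module.finrank ℝ (EuclideanSpace ℝ (Fin (m+1))) - 1 = m := by simp
  have hmp := (volume : Measure (EuclideanSpace ℝ (Fin (m+1)))).measurePreserving_homeomorphUnitSphereProd
  rw [hfr] at hmp
  have hrad : ENNReal.ofReal (c ^ m) * ∫⁻ t, G t ≤
      ∫⁻ t : Set.Ioi (0:ℝ), G t ∂(Measure.volumeIoiPow m) := by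
    rw [Measure.volumeIoiPow, lintegral_withDensity_eq_lintegral_mul _ (by fun_prop) (by fun_prop)]
    have := lintegral_subtype_comap (μ := (volume : Measure ℝ)) (measurableSet_Ioi (a := (0:ℝ)))
      (fun t => ENNReal.ofReal (t ^ m) * G t)
    simp only [Pi.mul_apply]
    rw [this, ← lintegral_const_mul _ hG, ← lintegral_indicator measurableSet_Ioi]
    apply lintegral_mono
    intro t
    by_cases ht : t ∈ Set.Ioc a b
    · have h0 : c < t := lt_of_le_of_lt hca ht.1
      rw [Set.indicator_of_mem (show t ∈ Set.Ioi (0:ℝ) from hc.trans h0)]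
      simp only
      gcongr
    · simp [hG0 t ht]
  calc _ ≤ (volume : Measure (EuclideanSpace ℝ (Fin (m+1)))).toSphere (ball e δ) *
        ∫⁻ t : Set.Ioi (0:ℝ), G t ∂(Measure.volumeIoiPow m) := by gcongr
    _ = ∫⁻ p, (ball e δ).indicator (fun _ => (1:ℝ≥0∞)) p.1 * G p.2
          ∂((volume : Measure (EuclideanSpace ℝ (Fin (m+1)))).toSphere.prod
            (Measure.volumeIoiPow m)) := by
        rw [lintegral_prod_mul (f := (ball e δ).indicator (fun _ => (1:ℝ≥0∞)))
          (g := fun t : Set.Ioi (0:ℝ) => G t)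
          (measurable_const.indicator measurableSet_ball).aemeasurable
          (hG.comp measurable_subtype_coe).aemeasurable,
          lintegral_indicator_const measurableSet_ball, one_mul]
    _ = ∫⁻ x : ({0}ᶜ : Set (EuclideanSpace ℝ (Fin (m+1)))),
          (ball e δ).indicator (fun _ => (1:ℝ≥0∞)) (homeomorphUnitSphereProd _ x).1 *
            G (homeomorphUnitSphereProd _ x).2 ∂(volume.comap Subtype.val) := by
        rw [← hmp.lintegral_comp_emb (Homeomorph.measurableEmbedding _)]
    _ ≤ ∫⁻ x : ({0}ᶜ : Set (EuclideanSpace ℝ (Fin (m+1)))),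
          B.indicator (fun x => G ‖x‖) x ∂(volume.comap Subtype.val) := by
        apply lintegral_mono
        intro x
        simp only [homeomorphUnitSphereProd_apply_snd_coe]
        by_cases h1 : ‖(x : EuclideanSpace ℝ (Fin (m+1)))‖ ∈ Set.Ioc a b
        · by_cases h2 : (homeomorphUnitSphereProd _ x).1 ∈ ball e δ
          · have h3 : (x : EuclideanSpace ℝ (Fin (m+1))) ∈ B := by
              apply hsub _ h1
              rw [mem_ball, Subtype.dist_eq, dist_eq_norm] at h2
              simpa using h2
            rw [Set.indicator_of_mem h2, Set.indicator_of_mem h3, one_mul]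
          · simp [Set.indicator_of_notMem h2]
        · simp [hG0 _ h1]
    _ = ∫⁻ x in ({0}ᶜ : Set (EuclideanSpace ℝ (Fin (m+1)))), B.indicator (fun x => G ‖x‖) x :=
        lintegral_subtype_comap (measurableSet_singleton _).compl _
    _ ≤ ∫⁻ x, B.indicator (fun x => G ‖x‖) x := setLIntegral_le_lintegral _ _
    _ = _ := lintegral_indicator hB _

theorem radius_aux {n : ℕ} (z : EuclideanSpace ℝ (Fin n)) (r : ℝ) (hz : z ≠ 0)
    (h : ball z r ⊆ ball 0 (2 * ‖z‖) \ ball 0 (‖z‖ / 2)) : r ≤ ‖z‖ / 2 := by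
  by_contra! hr
  have hz' : 0 < ‖z‖ := norm_pos_iff.2 hz
  obtain ⟨s, hs1, hs2⟩ := exists_between (lt_min hr (by linarith : ‖z‖/2 < ‖z‖))
  have hs3 := lt_min_iff.1 hs2
  have hmem : (1 - s / ‖z‖) • z ∈ ball z r := by
    rw [mem_ball, dist_eq_norm, sub_smul, one_smul, sub_sub_cancel_left, norm_neg, norm_smul,
      norm_div, norm_norm, div_mul_cancel₀ _ hz'.ne', Real.norm_eq_abs, abs_of_pos (by linarith)]
    exact hs3.1
  apply (h hmem).2
  have : s / ‖z‖ < 1 := (div_lt_one hz').2 hs3.2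
  rw [mem_ball_zero_iff, norm_smul, Real.norm_eq_abs, abs_of_pos (by linarith), sub_mul,
    div_mul_cancel₀ _ hz'.ne']
  linarith

open scoped ENNReal in
theorem stmt9 (n : ℕ) (hn : 1 ≤ n) :
    ∃ C : ℝ, 0 < C ∧
      ∀ (f : EuclideanSpace ℝ (Fin n) → ℝ) (F : ℝ → ℝ)
        (z : EuclideanSpace ℝ (Fin n)) (r : ℝ),
        LocallyIntegrable f →
        (∀ x, 0 ≤ f x) →
        (∀ t, 0 < t → 0 ≤ F t) →
        (∀ x : EuclideanSpace ℝ (Fin n), x ≠ 0 → f x = F ‖x‖) →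
        z ≠ 0 → 0 < r →
        ball z r ⊆ ball 0 (2 * ‖z‖) \ ball 0 (‖z‖ / 2) →
        (1 / ((‖z‖ + r) - (‖z‖ - r))) * ∫ t in (‖z‖ - r)..(‖z‖ + r), F t ≤
          C * ⨍ y in ball z (2 * r), f y := by
  obtain ⟨m, rfl⟩ : ∃ m, n = m + 1 := ⟨n - 1, by omega⟩
  refine ⟨8 * 64 ^ m, by positivity, ?_⟩
  intro f F z r hf hf0 hF0 hfF hz hr hball
  have hr2 := radius_aux z r hz hball
  have hz' : 0 < ‖z‖ := norm_pos_iff.2 hz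
  have hfi : IntegrableOn f (ball z (2 * r)) :=
    (hf.integrableOn_isCompact (isCompact_closedBall z (2 * r))).mono_set ball_subset_closedBall
  have hIf : 0 ≤ ∫ y in ball z (2 * r), f y := integral_nonneg hf0
  set ω := volume.real (ball (0 : EuclideanSpace ℝ (Fin (m+1))) 1) with hω
  have hωpos : 0 < ω := ENNReal.toReal_pos (measure_ball_pos _ _ one_pos).ne' measure_ball_lt_top.ne
  have hvol : volume.real (ball z (2 * r)) = (2 * r) ^ (m + 1) * ω := by
    rw [measureReal_def, Measure.addHaar_ball_of_pos _ _ (by positivity), ENNReal.toReal_mul,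
      ENNReal.toReal_ofReal (by positivity)]
    simp [hω, measureReal_def]
  rw [intervalIntegral.integral_of_le (by linarith), setAverage_eq, hvol, smul_eq_mul]
  have key : ω / 8 * (r / 32) ^ m * ∫ t in Set.Ioc (‖z‖ - r) (‖z‖ + r), F t ≤
      ∫ y in ball z (2 * r), f y := by
    by_cases hFi : IntegrableOn F (Set.Ioc (‖z‖ - r) (‖z‖ + r))
    swap
    · rw [integral_undef hFi, mul_zero]; exact hIf
    set e : sphere (0 : EuclideanSpace ℝ (Fin (m+1))) 1 :=
      ⟨‖z‖⁻¹ • z, by simp [norm_smul, hz'.ne']⟩ with he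
    obtain ⟨G, hGm, hGle, hGeq⟩ := exists_measurable_le_lintegral_eq (μ := (volume : Measure ℝ))
      ((Set.Ioc (‖z‖ - r) (‖z‖ + r)).indicator fun t => ENNReal.ofReal (F t))
    have hcap := cap_aux e (r / (16 * ‖z‖)) (by positivity)
      (by rw [div_le_iff₀ (by positivity)]; linarith)
    have hpol := polar_aux e (8 * (r / (16 * ‖z‖))) (‖z‖ - r) (‖z‖ + r) (‖z‖ / 2) (by positivity)
      (by linarith) G hGm
      (fun t ht => by
        have := hGle t
        rw [Set.indicator_of_notMem ht] at this
        exact le_antisymm this (by simp)) (ball z (2 * r)) measurableSet_ball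
      (by
        intro x hx hxe
        have hx0 : 0 < ‖x‖ := by linarith [hx.1]
        rw [mem_ball, dist_eq_norm]
        have e1 : x - z = ‖x‖ • (‖x‖⁻¹ • x - ‖z‖⁻¹ • z) + (‖x‖ - ‖z‖) • (‖z‖⁻¹ • z) := by
          rw [smul_sub, sub_smul, smul_smul, smul_smul ‖z‖, mul_inv_cancel₀ hx0.ne',
            mul_inv_cancel₀ hz'.ne', one_smul, one_smul]
          abel
        have e2 : ‖‖z‖⁻¹ • z‖ = 1 := by simp [norm_smul, hz'.ne']
        have e3 : |‖x‖ - ‖z‖| ≤ r := abs_le.2 ⟨by linarith [hx.1], by linarith [hx.2]⟩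
        rw [e1]
        refine (norm_add_le _ _).trans_lt ?_
        rw [norm_smul, norm_smul (‖x‖ - ‖z‖), e2, mul_one, norm_norm, Real.norm_eq_abs]
        have e4 : ‖x‖ * ‖‖x‖⁻¹ • x - ‖z‖⁻¹ • z‖ ≤ (2 * ‖z‖) * (8 * (r / (16 * ‖z‖))) / (4/3) := by
          calc _ ≤ (3/2 * ‖z‖) * (8 * (r / (16 * ‖z‖))) := by
                apply mul_le_mul _ hxe.le (norm_nonneg _) (by positivity)
                linarith [hx.2]
            _ = _ := by ring
        have e5 : (2 * ‖z‖) * (8 * (r / (16 * ‖z‖))) / (4/3) = 3/4 * r := by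
          field_simp
          norm_num
        linarith)
    rw [← hGeq, lintegral_indicator measurableSet_Ioc,
      ← ofReal_integral_eq_lintegral_ofReal hFi
        ((ae_restrict_iff' measurableSet_Ioc).2 (Eventually.of_forall fun t ht =>
          hF0 t (by linarith [ht.1])))] at hpol
    have h3 : ∫⁻ x in ball z (2 * r), G ‖x‖ ≤ ENNReal.ofReal (∫ y in ball z (2 * r), f y) := by
      rw [ofReal_integral_eq_lintegral_ofReal hfi (Eventually.of_forall hf0)]
      apply lintegral_mono
      intro x
      have h4 := hGle ‖x‖
      by_cases hx : ‖x‖ ∈ Set.Ioc (‖z‖ - r) (‖z‖ + r)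
      · rw [Set.indicator_of_mem hx] at h4
        have hx0 : x ≠ 0 := norm_pos_iff.1 (by linarith [hx.1])
        simp only
        rw [hfF x hx0]
        exact h4
      · rw [Set.indicator_of_notMem hx] at h4
        exact h4.trans (by simp)
    have h5 := ((mul_le_mul_left hcap _).trans hpol).trans h3
    rw [← ENNReal.ofReal_mul (by positivity), ← ENNReal.ofReal_mul (by positivity),
      ENNReal.ofReal_le_ofReal_iff hIf] at h5
    refine le_trans (le_of_eq ?_) h5
    have : (r / 32) ^ m = (r / (16 * ‖z‖)) ^ m * (‖z‖ / 2) ^ m := by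
      rw [← mul_pow]; congr 1; field_simp; norm_num
    rw [this]; ring
  set I := ∫ t in Set.Ioc (‖z‖ - r) (‖z‖ + r), F t
  set J := ∫ y in ball z (2 * r), f y
  have h64 : (64:ℝ) ^ m = 2 ^ m * 32 ^ m := by rw [← mul_pow]; norm_num
  calc 1 / ((‖z‖ + r) - (‖z‖ - r)) * I
      = 8 * 64 ^ m * (((2 * r) ^ (m + 1) * ω)⁻¹ * (ω / 8 * (r / 32) ^ m * I)) := by
        have : (‖z‖ + r) - (‖z‖ - r) = 2 * r := by ring
        rw [this, h64, div_pow, mul_pow, pow_succ, pow_succ]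
        field_simp
    _ ≤ _ := by gcongr
end
end

section
/- Let n ≥ 1, 0 < β < n, let f : ℝⁿ → [0,∞) be a nonnegative, continuously differentiable, integrable radial function, let x ∈ ℝⁿ \ {0}, suppose M_β f is real-valued in a neighborhood of x and differentiable at x, and let B ∈ ℬ_x be a best ball at x with B ⊂ B(0,|x|). Then | ⨍_B ∇f(y) dy | ≤ ⨍_B |∇f(y)| (|y|/|x|) dy. -/
open MeasureTheory Metric Filter
open scoped Topology

noncomputable section

lemma aux_deriv {n : ℕ} (f : EuclideanSpace ℝ (Fin n) → ℝ) (hf : ContDiff ℝ 1 f)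
    (z : EuclideanSpace ℝ (Fin n)) (r : ℝ)
    (w : EuclideanSpace ℝ (Fin n) → EuclideanSpace ℝ (Fin n)) (hw : Continuous w) :
    HasDerivAt (fun s : ℝ => ∫ y in ball z r, f (y + s • w y))
      (∫ y in ball z r, fderiv ℝ f y (w y)) 0 := by
  have hfc : Continuous f := hf.continuous
  have hfd : Continuous (fderiv ℝ f) := hf.continuous_fderiv (by norm_num)
  have hc : Continuous (fun p : ℝ × EuclideanSpace ℝ (Fin n) =>
      fderiv ℝ f (p.2 + p.1 • w p.2) (w p.2)) :=
    (hfd.comp (by fun_prop)).clm_apply (by fun_prop)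
  obtain ⟨C, hC⟩ := ((isCompact_Icc (a := (-1 : ℝ)) (b := 1)).prod
    (isCompact_closedBall z r)).exists_bound_of_continuousOn hc.continuousOn
  have hintg : ∀ g : EuclideanSpace ℝ (Fin n) → ℝ, Continuous g → IntegrableOn g (ball z r) :=
    fun g hg => (hg.continuousOn.integrableOn_compact (isCompact_closedBall z r)).mono_set
      ball_subset_closedBall
  have key := hasDerivAt_integral_of_dominated_loc_of_deriv_le (μ := volume.restrict (ball z r))
    (F := fun (s : ℝ) y => f (y + s • w y)) (F' := fun (s : ℝ) y => fderiv ℝ f (y + s • w y) (w y))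
    (x₀ := 0) (s := Set.Icc (-1) 1) (bound := fun _ => C)
    (Icc_mem_nhds (by norm_num) (by norm_num))
    (Eventually.of_forall fun s => Continuous.aestronglyMeasurable (by fun_prop))
    (hintg _ (by fun_prop))
    (Continuous.aestronglyMeasurable ((hfd.comp (by fun_prop)).clm_apply hw))
    ((ae_restrict_mem measurableSet_ball).mono fun y hy s hs =>
      hC (s, y) ⟨hs, ball_subset_closedBall hy⟩)
    (hintg _ continuous_const)
    (Eventually.of_forall fun y s _ => by
      have h1 : HasDerivAt (fun s : ℝ => y + s • w y) (w y) s := by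
        simpa using ((hasDerivAt_id s).smul_const (w y)).const_add y
      exact ((hf.differentiable (by norm_num) _).hasFDerivAt).comp_hasDerivAt s h1)
  simpa using key.2

lemma aux_cov {n : ℕ} (f : EuclideanSpace ℝ (Fin n) → ℝ)
    (z c : EuclideanSpace ℝ (Fin n)) (r t : ℝ) (ht : 0 < t) :
    ⨍ y in ball (t • z + c) (t * r), f y = ⨍ y in ball z r, f (t • y + c) := by
  have hpre : (fun y : EuclideanSpace ℝ (Fin n) => t • y + c) ⁻¹' (ball (t • z + c) (t * r))
      = ball z r := by
    ext y
    simp only [Set.mem_preimage, mem_ball, dist_add_right, dist_smul₀, Real.norm_eq_abs,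
      abs_of_pos ht]
    exact mul_lt_mul_iff_right₀ ht
  have hI : ∫ y in ball z r, f (t • y + c)
      = (t ^ n)⁻¹ * ∫ y in ball (t • z + c) (t * r), f y := by
    rw [← integral_indicator measurableSet_ball, ← integral_indicator measurableSet_ball]
    have : (ball z r).indicator (fun y => f (t • y + c)) =
        fun y => (fun u => (ball (t • z + c) (t * r)).indicator f (u + c)) (t • y) := by
      rw [← hpre]; rfl
    rw [this, Measure.integral_comp_smul volume
      (fun u => (ball (t • z + c) (t * r)).indicator f (u + c)) t,
      integral_add_right_eq_self (fun u => (ball (t • z + c) (t * r)).indicator f u)]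
    simp [abs_of_pos ht]
  have hV : volume.real (ball (t • z + c) (t * r)) = t ^ n * volume.real (ball z r) := by
    simp only [Measure.real]
    rw [Measure.addHaar_ball_mul_of_pos volume _ ht, Measure.addHaar_ball_center volume z]
    simp [ENNReal.toReal_mul, ht.le]
  rw [setAverage_eq, setAverage_eq, hI, hV]
  simp only [smul_eq_mul, mul_inv]
  ring

lemma aux_geom {n : ℕ} (x z : EuclideanSpace ℝ (Fin n)) (r : ℝ) (hr : 0 < r) (hx : x ≠ 0)
    (hxz : x ∈ closedBall z r) (hsub : ball z r ⊆ ball 0 ‖x‖) :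
    z - x = -(r / ‖x‖) • x := by
  have hX : 0 < ‖x‖ := norm_pos_iff.2 hx
  have hsub' : closedBall z r ⊆ closedBall 0 ‖x‖ := by
    rw [← closure_ball z hr.ne', ← closure_ball (0 : EuclideanSpace ℝ (Fin n)) hX.ne']
    exact closure_mono hsub
  have h1 : ‖z‖ + r ≤ ‖x‖ := by
    by_cases hz : z = 0
    · have : (r / ‖x‖) • x ∈ closedBall z r := by
        rw [mem_closedBall, hz, dist_zero_right, norm_smul, Real.norm_eq_abs,
          abs_of_pos (div_pos hr hX), div_mul_cancel₀ _ hX.ne']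
      have := hsub' this
      rw [mem_closedBall, dist_zero_right, norm_smul, Real.norm_eq_abs,
          abs_of_pos (div_pos hr hX), div_mul_cancel₀ _ hX.ne'] at this
      simpa [hz] using this
    · have hZ : 0 < ‖z‖ := norm_pos_iff.2 hz
      have : z + (r / ‖z‖) • z ∈ closedBall z r := by
        rw [mem_closedBall, dist_eq_norm, add_sub_cancel_left, norm_smul, Real.norm_eq_abs,
          abs_of_pos (div_pos hr hZ), div_mul_cancel₀ _ hZ.ne']
      have := hsub' this
      have e : z + (r / ‖z‖) • z = (1 + r / ‖z‖) • z := by rw [add_smul, one_smul]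
      rw [mem_closedBall, dist_zero_right, e, norm_smul, Real.norm_eq_abs,
          abs_of_pos (by positivity), add_mul, div_mul_cancel₀ _ hZ.ne', one_mul] at this
      exact this
  rw [mem_closedBall, dist_eq_norm] at hxz
  set a := r / ‖x‖ with ha
  have har : r = a * ‖x‖ := by rw [ha, div_mul_cancel₀ _ hX.ne']
  have ha0 : 0 < a := div_pos hr hX
  have ha1 : a ≤ 1 := by
    rw [ha, div_le_one hX]; linarith [norm_nonneg z]
  have e1 : ‖x - z‖ ^ 2 = ‖x‖ ^ 2 - 2 * inner ℝ x z + ‖z‖ ^ 2 := norm_sub_sq_real x z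
  have e2 : ‖z - (1 - a) • x‖ ^ 2
      = ‖z‖ ^ 2 - 2 * ((1 - a) * inner ℝ x z) + (1 - a) ^ 2 * ‖x‖ ^ 2 := by
    rw [norm_sub_sq_real, inner_smul_right, norm_smul, real_inner_comm, mul_pow, Real.norm_eq_abs,
      sq_abs]
  have h2 : ‖x - z‖ ^ 2 ≤ r ^ 2 := pow_le_pow_left₀ (norm_nonneg _) hxz 2
  have h3 : ‖z‖ ^ 2 ≤ ((1 - a) * ‖x‖) ^ 2 :=
    pow_le_pow_left₀ (norm_nonneg _) (by linarith) 2
  have h4 : ‖z - (1 - a) • x‖ ^ 2 ≤ 0 := by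
    have h5 := mul_le_mul_of_nonneg_left h2 (sub_nonneg.2 ha1)
    have h6 := mul_le_mul_of_nonneg_left h3 ha0.le
    rw [e1] at h5
    rw [har] at h5
    rw [e2]
    nlinarith
  have h7 : z - (1 - a) • x = 0 := by
    rw [← norm_eq_zero]; exact pow_eq_zero_iff (two_ne_zero) |>.1 (le_antisymm h4 (sq_nonneg _))
  rw [sub_eq_zero] at h7
  rw [h7]; module

theorem stmt10 (n : ℕ) (hn : 1 ≤ n) (β : ℝ) (hβ0 : 0 < β) (hβn : β < n)
    (f : EuclideanSpace ℝ (Fin n) → ℝ) (hf0 : ∀ x, 0 ≤ f x) (hf : ContDiff ℝ 1 f)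
    (hfi : Integrable f)
    (hrad : ∀ x y : EuclideanSpace ℝ (Fin n), ‖x‖ = ‖y‖ → f x = f y)
    (x : EuclideanSpace ℝ (Fin n)) (hx : x ≠ 0)
    (hfin : ∀ᶠ y in 𝓝 x, BddAbove (maxSet β f y))
    (hdiff : DifferentiableAt ℝ (fracMax β f) x)
    (z : EuclideanSpace ℝ (Fin n)) (r : ℝ) (hB : IsBestBall β f x z r)
    (hsub : ball z r ⊆ ball 0 ‖x‖) :
    ‖⨍ y in ball z r, gradient f y‖ ≤
      ⨍ y in ball z r, ‖gradient f y‖ * (‖y‖ / ‖x‖) := by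
  obtain ⟨hr, hxz, hM⟩ := hB
  have hX : 0 < ‖x‖ := norm_pos_iff.2 hx
  have habs : (fun y => |f y|) = f := funext fun y => abs_of_nonneg (hf0 y)
  have hle : ∀ y c ρ, BddAbove (maxSet β f y) → 0 < ρ → y ∈ closedBall c ρ →
      ρ ^ β * ⨍ u in ball c ρ, f u ≤ fracMax β f y := fun y c ρ hb hρ hy =>
    le_csSup hb ⟨c, ρ, hρ, hy, by rw [habs]⟩
  rw [habs] at hM
  have hV : 0 < volume.real (ball z r) :=
    ENNReal.toReal_pos (measure_ball_pos volume z hr).ne' measure_ball_lt_top.ne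
  set V := volume.real (ball z r) with hVdef
  have hgc : Continuous (gradient f) :=
    (InnerProductSpace.toDual ℝ _).symm.continuous.comp (hf.continuous_fderiv (by norm_num))
  have hgi : IntegrableOn (gradient f) (ball z r) :=
    (hgc.continuousOn.integrableOn_compact (isCompact_closedBall z r)).mono_set
      ball_subset_closedBall
  have hin : ∀ y w, fderiv ℝ f y w = inner ℝ (gradient f y) w := fun y w => by
    simp [gradient]
  have hrβ : 0 < r ^ β := Real.rpow_pos_of_pos hr β
  set v := ⨍ y in ball z r, gradient f y with hv
  have hvI : ∀ h, ∫ y in ball z r, fderiv ℝ f y h = V * inner ℝ v h := by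
    intro h
    have : ∀ y, fderiv ℝ f y h = inner ℝ h (gradient f y) := fun y => by
      rw [hin, real_inner_comm]
    simp_rw [this]
    rw [integral_inner hgi, hv, setAverage_eq, real_inner_smul_left, real_inner_comm,
      ← hVdef, mul_inv_cancel_left₀ hV.ne']
  -- derivative of the maximal function
  have hD : ∀ h, fderiv ℝ (fracMax β f) x h = r ^ β * inner ℝ v h := by
    intro h
    have hline : HasDerivAt (fun s : ℝ => x + s • h) h 0 := by
      simpa using ((hasDerivAt_id (0 : ℝ)).smul_const h).const_add x
    have hA : HasDerivAt (fun s : ℝ => fracMax β f (x + s • h))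
        (fderiv ℝ (fracMax β f) x h) 0 := by
      have hd : HasFDerivAt (fracMax β f) (fderiv ℝ (fracMax β f) x) (x + (0 : ℝ) • h) := by
        simpa using hdiff.hasFDerivAt
      exact hd.comp_hasDerivAt (0 : ℝ) hline
    have hG := ((aux_deriv f hf z r (fun _ => h) continuous_const).const_mul V⁻¹).const_mul (r ^ β)
    rw [hvI, inv_mul_cancel_left₀ hV.ne'] at hG
    have hmin : IsLocalMin (fun s : ℝ => fracMax β f (x + s • h)
        - r ^ β * (V⁻¹ * ∫ y in ball z r, f (y + s • h))) 0 := by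
      have hev : ∀ᶠ s : ℝ in 𝓝 0, BddAbove (maxSet β f (x + s • h)) := by
        have : Tendsto (fun s : ℝ => x + s • h) (𝓝 0) (𝓝 x) := by
          simpa using hline.continuousAt.tendsto
        exact this.eventually hfin
      filter_upwards [hev] with s hs
      have h1 := hle (x + s • h) (z + s • h) r hs hr (by
        rw [mem_closedBall, dist_add_right]; exact hxz)
      have h2 := aux_cov f z (s • h) r 1 one_pos
      simp only [one_smul, one_mul] at h2
      rw [h2, setAverage_eq, smul_eq_mul, ← hVdef] at h1
      have h3 : fracMax β f x = r ^ β * (V⁻¹ * ∫ y in ball z r, f y) := by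
        rw [hM, setAverage_eq, smul_eq_mul]
      simp only [zero_smul, add_zero]
      linarith
    have := hmin.hasDerivAt_eq_zero (hA.sub hG)
    linarith
  -- the maximal function is minimal at x on the closed ball
  have hpos : ∀ y ∈ closedBall z r, 0 ≤ inner ℝ v (y - x) := by
    intro y hy
    have hmin : IsLocalMinOn (fracMax β f) (closedBall z r) x := by
      filter_upwards [mem_nhdsWithin_of_mem_nhds hfin, self_mem_nhdsWithin] with u hu hu'
      rw [hM]
      exact hle u z r hu hr hu'
    have := hmin.hasFDerivWithinAt_nonneg hdiff.hasFDerivAt.hasFDerivWithinAt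
      (sub_mem_posTangentConeAt_of_segment_subset ((convex_closedBall z r).segment_subset hxz hy))
    rw [hD] at this
    exact nonneg_of_mul_nonneg_right this hrβ
  have hgeom := aux_geom x z r hr hx hxz hsub
  have hvx : inner ℝ v x ≤ - (‖v‖ * ‖x‖) := by
    by_cases hv0 : v = 0
    · simp [hv0]
    have hvn : 0 < ‖v‖ := norm_pos_iff.2 hv0
    have h1 := hpos (z - (r / ‖v‖) • v) (by
      rw [mem_closedBall, dist_eq_norm, sub_sub_cancel_left, norm_neg, norm_smul,
        Real.norm_eq_abs, abs_of_pos (div_pos hr hvn), div_mul_cancel₀ _ hvn.ne'])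
    have e : z - (r / ‖v‖) • v - x = -(r / ‖x‖) • x - (r / ‖v‖) • v := by
      rw [← hgeom]; abel
    rw [e, inner_sub_right, real_inner_smul_right, real_inner_smul_right,
      real_inner_self_eq_norm_sq] at h1
    have e2 : r / ‖v‖ * ‖v‖ ^ 2 = r * ‖v‖ := by field_simp
    have e3 : -(r / ‖x‖) * inner ℝ v x = r * (-(inner ℝ v x) / ‖x‖) := by ring
    rw [e2, e3, ← mul_sub] at h1
    have h2 := nonneg_of_mul_nonneg_right h1 hr
    have h3 : ‖v‖ ≤ -(inner ℝ v x) / ‖x‖ := by linarith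
    rw [le_div_iff₀ hX] at h3
    linarith
  -- scaling
  have hscale : β * ∫ y in ball z r, f y = - ∫ y in ball z r, fderiv ℝ f y (y - x) := by
    have hG := (aux_deriv f hf z r (fun y => y - x) (by fun_prop)).const_mul V⁻¹
    have hp : HasDerivAt (fun s : ℝ => ((1 + s) * r) ^ β) (r * β * r ^ (β - 1)) 0 := by
      have h1 : HasDerivAt (fun s : ℝ => (1 + s) * r) r 0 := by
        simpa using ((hasDerivAt_id (0 : ℝ)).const_add 1).mul_const r
      simpa using h1.rpow_const (p := β) (Or.inl (by simpa using hr.ne'))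
    have hmax : IsLocalMax (fun s : ℝ => ((1 + s) * r) ^ β *
        (V⁻¹ * ∫ y in ball z r, f (y + s • (y - x)))) 0 := by
      filter_upwards [Ioi_mem_nhds (show (-1 : ℝ) < 0 by norm_num)] with s hs
      have hs : 0 < 1 + s := by have := Set.mem_Ioi.1 hs; linarith
      have h1 := hle x ((1 + s) • z + -(s • x)) ((1 + s) * r) hfin.self_of_nhds (by positivity) (by
        have e : x = (1 + s) • x + -(s • x) := by module
        rw [mem_closedBall] at hxz ⊢
        nth_rewrite 1 [e]
        rw [dist_add_right, dist_smul₀, Real.norm_eq_abs, abs_of_pos hs]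
        exact mul_le_mul_of_nonneg_left hxz hs.le)
      rw [aux_cov f z _ r _ hs, setAverage_eq, smul_eq_mul, ← hVdef, hM, setAverage_eq,
        smul_eq_mul, ← hVdef] at h1
      have e : ∀ y, y + s • (y - x) = (1 + s) • y + -(s • x) := fun y => by module
      simp only [e]
      simpa using h1
    have h0 := hmax.hasDerivAt_eq_zero (hp.mul hG)
    simp only [zero_smul, add_zero, one_mul] at h0
    have e : r * β * r ^ (β - 1) = β * r ^ β := by
      rw [Real.rpow_sub_one hr.ne']; field_simp
    rw [e] at h0
    have h1 : (r ^ β * V⁻¹) * (β * (∫ y in ball z r, f y)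
        + ∫ y in ball z r, fderiv ℝ f y (y - x)) = 0 := by
      rw [← h0]; ring
    have := (mul_eq_zero.1 h1).resolve_left (by positivity)
    linarith
  have hintg : ∀ g : EuclideanSpace ℝ (Fin n) → ℝ, Continuous g → IntegrableOn g (ball z r) :=
    fun g hg => (hg.continuousOn.integrableOn_compact (isCompact_closedBall z r)).mono_set
      ball_subset_closedBall
  have hsplit : ∫ y in ball z r, fderiv ℝ f y (y - x)
      = (∫ y in ball z r, fderiv ℝ f y y) - V * inner ℝ v x := by
    rw [← hvI, ← integral_sub]
    · simp
    · exact hintg _ ((hf.continuous_fderiv (by norm_num)).clm_apply continuous_id)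
    · exact hintg _ ((hf.continuous_fderiv (by norm_num)).clm_apply continuous_const)
  have hf1 : 0 ≤ ∫ y in ball z r, f y := integral_nonneg hf0
  have hcs : - ∫ y in ball z r, fderiv ℝ f y y ≤ ∫ y in ball z r, ‖gradient f y‖ * ‖y‖ := by
    rw [← integral_neg]
    refine integral_mono (hintg _ ((hf.continuous_fderiv (by norm_num)).clm_apply
      continuous_id).neg) (hintg _ (by fun_prop)) fun y => ?_
    simp only [hin]
    exact (neg_le_abs _).trans (abs_real_inner_le_norm _ _)
  have hfinal : V * (‖v‖ * ‖x‖) ≤ ∫ y in ball z r, ‖gradient f y‖ * ‖y‖ := by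
    have h1 := mul_le_mul_of_nonneg_left hvx hV.le
    have h2 := mul_nonneg hβ0.le hf1
    linarith
  have e : ∀ y : EuclideanSpace ℝ (Fin n), ‖gradient f y‖ * (‖y‖ / ‖x‖)
      = ‖gradient f y‖ * ‖y‖ * ‖x‖⁻¹ := fun y => by ring
  simp_rw [e]
  rw [setAverage_eq, integral_mul_const, smul_eq_mul, ← hVdef, ← mul_assoc, ← div_eq_mul_inv,
    le_div_iff₀ hX, ← div_eq_inv_mul, le_div_iff₀ hV]
  linarith
end
end

section
/- There exists a constant C = C(n,β) > 0 such that the following holds. Let 0 < β < n, let f : ℝⁿ → [0,∞) be a nonnegative, continuously differentiable, integrable radial function, let x ∈ ℝⁿ \ {0}, suppose M_β f is real-valued in a neighborhood of x and differentiable at x, and let B = B(z,r) ∈ ℬ_x be a best ball at x with r ≤ |x|/4. Define E := { y ∈ B(z,2r) : (1/2) ⨍_B f ≤ f(y) ≤ 2 ⨍_B f }. Then | ⨍_B ∇f(y) dy | ≤ C(n,β) ⨍_{B(z,2r)} |∇f(y)| χ_E(y) dy. -/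
open MeasureTheory Metric Filter
open scoped Topology

noncomputable section

/-- A continuous function going from `≥ d` down to `≤ c` has a crossing interval. -/
theorem crossing_interval (u : ℝ → ℝ) (hu : Continuous u) (c d t1 t2 : ℝ)
    (h12 : t1 ≤ t2) (h1 : d ≤ u t1) (h2 : u t2 ≤ c) :
    ∃ s1 s2, t1 ≤ s1 ∧ s1 ≤ s2 ∧ s2 ≤ t2 ∧ d ≤ u s1 ∧ u s2 ≤ c ∧
      ∀ t ∈ Set.Ioo s1 s2, c ≤ u t ∧ u t ≤ d := by
  have hK : IsCompact (Set.Icc t1 t2 ∩ {t | u t ≤ c}) :=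
    isCompact_Icc.inter_right (isClosed_le hu continuous_const)
  obtain ⟨s2, hs2, hmin⟩ := hK.exists_isLeast ⟨t2, ⟨h12, le_rfl⟩, h2⟩
  have hK' : IsCompact (Set.Icc t1 s2 ∩ {t | d ≤ u t}) :=
    isCompact_Icc.inter_right (isClosed_le continuous_const hu)
  obtain ⟨s1, hs1, hmax⟩ := hK'.exists_isGreatest ⟨t1, ⟨le_rfl, hs2.1.1⟩, h1⟩
  refine ⟨s1, s2, hs1.1.1, hs1.1.2, hs2.1.2, hs1.2, hs2.2, fun t ht => ⟨?_, ?_⟩⟩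
  · by_contra hc
    push Not at hc
    have := hmin ⟨⟨hs1.1.1.trans ht.1.le, ht.2.le.trans hs2.1.2⟩, hc.le⟩
    linarith [ht.2]
  · by_contra hc
    push Not at hc
    have := hmax ⟨⟨hs1.1.1.trans ht.1.le, ht.2.le⟩, hc.le⟩
    linarith [ht.1]

theorem crossing_lintegral_aux (u u' : ℝ → ℝ) (hu : ∀ t, HasDerivAt u (u' t) t)
    (hu' : Continuous u') (c d T t1 t2 : ℝ)
    (h12 : t1 ≤ t2) (h1 : d ≤ u t1) (h2 : u t2 ≤ c) (hT1 : -T ≤ t1) (hT2 : t2 ≤ T) :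
    ENNReal.ofReal (d - c) ≤ ∫⁻ t in Set.Icc (-T) T,
      Set.indicator {t | c ≤ u t ∧ u t ≤ d} (fun t => ENNReal.ofReal |u' t|) t := by
  have hcont : Continuous u := continuous_iff_continuousAt.2 fun t => (hu t).continuousAt
  obtain ⟨s1, s2, a1, a2, a3, a4, a5, a6⟩ := crossing_interval u hcont c d t1 t2 h12 h1 h2
  have ftc : ∫ t in s1..s2, u' t = u s2 - u s1 :=
    intervalIntegral.integral_eq_sub_of_hasDerivAt (fun t _ => hu t)
      (hu'.intervalIntegrable _ _)
  have hle : d - c ≤ ∫ t in s1..s2, |u' t| := by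
    have := intervalIntegral.abs_integral_le_integral_abs (f := u') (μ := volume) a2
    rw [ftc] at this
    have h3 := neg_abs_le (u s2 - u s1)
    linarith
  rw [intervalIntegral.integral_of_le a2, integral_Ioc_eq_integral_Ioo] at hle
  have hint : IntegrableOn (fun t => |u' t|) (Set.Ioo s1 s2) :=
    (hu'.abs.integrableOn_Icc).mono_set Set.Ioo_subset_Icc_self
  calc ENNReal.ofReal (d - c) ≤ ENNReal.ofReal (∫ t in Set.Ioo s1 s2, |u' t|) :=
        ENNReal.ofReal_le_ofReal hle
    _ = ∫⁻ t in Set.Ioo s1 s2, ENNReal.ofReal |u' t| :=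
        ofReal_integral_eq_lintegral_ofReal hint (ae_of_all _ fun t => abs_nonneg _)
    _ = ∫⁻ t in Set.Ioo s1 s2,
        Set.indicator {t | c ≤ u t ∧ u t ≤ d} (fun t => ENNReal.ofReal |u' t|) t := by
        refine setLIntegral_congr_fun measurableSet_Ioo fun t ht => ?_
        rw [Set.indicator_of_mem (show t ∈ {t | c ≤ u t ∧ u t ≤ d} from a6 t ht)]
    _ ≤ _ := by
        refine lintegral_mono_set fun t ht => ⟨?_, ?_⟩
        · linarith [ht.1]
        · linarith [ht.2]

theorem crossing_lintegral (u u' : ℝ → ℝ) (hu : ∀ t, HasDerivAt u (u' t) t)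
    (hu' : Continuous u') (c d T t1 t2 : ℝ)
    (h1 : d ≤ u t1) (h2 : u t2 ≤ c) (hT1 : t1 ∈ Set.Icc (-T) T) (hT2 : t2 ∈ Set.Icc (-T) T) :
    ENNReal.ofReal (d - c) ≤ ∫⁻ t in Set.Icc (-T) T,
      Set.indicator {t | c ≤ u t ∧ u t ≤ d} (fun t => ENNReal.ofReal |u' t|) t := by
  rcases le_total t1 t2 with h | h
  · exact crossing_lintegral_aux u u' hu hu' c d T t1 t2 h h1 h2 hT1.1 hT2.2
  · have := crossing_lintegral_aux (fun t => - u t) (fun t => - u' t) (fun t => (hu t).neg)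
      hu'.neg (-d) (-c) T t2 t1 h (by simpa using h2) (by simpa using h1) hT2.1 hT1.2
    have e : {t | -d ≤ -u t ∧ -u t ≤ -c} = {t | c ≤ u t ∧ u t ≤ d} := by
      ext t; simp [and_comm]
    simp only [abs_neg, e] at this
    rwa [show -c - -d = d - c by ring] at this

theorem volR {n : ℕ} (hn : 1 ≤ n) (z : EuclideanSpace ℝ (Fin n)) {r : ℝ} (hr : 0 < r) :
    volume.real (ball z r) = r ^ n * volume.real (ball (0 : EuclideanSpace ℝ (Fin n)) 1) := by
  have : Nonempty (Fin n) := ⟨⟨0, hn⟩⟩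
  have := Measure.addHaar_ball (volume : Measure (EuclideanSpace ℝ (Fin n))) z hr.le
  rw [Measure.real, this, ENNReal.toReal_mul, ENNReal.toReal_ofReal (by positivity)]
  simp [Measure.real]

theorem volPos {n : ℕ} (z : EuclideanSpace ℝ (Fin n)) {r : ℝ} (hr : 0 < r) :
    0 < volume.real (ball z r) := by
  rw [Measure.real]
  exact ENNReal.toReal_pos (measure_ball_pos _ _ hr).ne' measure_ball_lt_top.ne

theorem best_le {n : ℕ} {β : ℝ} {f : EuclideanSpace ℝ (Fin n) → ℝ} (hf : ∀ x, 0 ≤ f x)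
    {x z : EuclideanSpace ℝ (Fin n)} {r : ℝ} (hb : BddAbove (maxSet β f x))
    (hB : IsBestBall β f x z r) (w : EuclideanSpace ℝ (Fin n)) (s : ℝ) (hs : 0 < s)
    (hx : x ∈ closedBall w s) :
    s ^ β * (⨍ y in ball w s, f y) ≤ r ^ β * (⨍ y in ball z r, f y) := by
  have h1 : s ^ β * (⨍ y in ball w s, |f y|) ≤ fracMax β f x :=
    le_csSup hb ⟨w, s, hs, hx, rfl⟩
  rw [hB.2.2] at h1
  simpa only [abs_of_nonneg (hf _)] using h1

theorem gradient_cont {n : ℕ} {f : EuclideanSpace ℝ (Fin n) → ℝ} (hf : ContDiff ℝ 1 f) :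
    Continuous (gradient f) := by
  unfold gradient
  exact (LinearIsometryEquiv.continuous _).comp (hf.continuous_fderiv (by norm_num))

theorem line_deriv_s11 {n : ℕ} {f : EuclideanSpace ℝ (Fin n) → ℝ} (hf : ContDiff ℝ 1 f)
    (p v : EuclideanSpace ℝ (Fin n)) (t : ℝ) :
    HasDerivAt (fun t : ℝ => f (p + t • v)) (inner ℝ v (gradient f (p + t • v))) t := by
  have h1 : HasFDerivAt f (fderiv ℝ f (p + t • v)) (p + t • v) :=
    ((hf.differentiable (by norm_num)) _).hasFDerivAt
  have h2 : HasDerivAt (fun t : ℝ => p + t • v) v t := by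
    simpa using ((hasDerivAt_id t).smul_const v).const_add p
  have h3 := h1.comp_hasDerivAt t h2
  refine h3.congr_deriv ?_
  rw [real_inner_comm]
  simp [gradient]

theorem avg_deriv {n : ℕ} {f : EuclideanSpace ℝ (Fin n) → ℝ} (hf : ContDiff ℝ 1 f)
    (z v : EuclideanSpace ℝ (Fin n)) (r : ℝ) :
    HasDerivAt (fun t : ℝ => ∫ y in ball z r, f (y + t • v))
      (inner ℝ v (∫ y in ball z r, gradient f y)) 0 := by
  have hg := gradient_cont hf
  have hgi : IntegrableOn (gradient f) (ball z r) :=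
    (hg.continuousOn.integrableOn_compact (isCompact_closedBall z r)).mono_set
      ball_subset_closedBall
  have hK : IsCompact ((fun p : EuclideanSpace ℝ (Fin n) × ℝ => p.1 + p.2 • v) ''
      (closedBall z r ×ˢ Set.Icc (-1) 1)) :=
    ((isCompact_closedBall z r).prod isCompact_Icc).image (by fun_prop)
  obtain ⟨A, hA⟩ := hK.exists_bound_of_continuousOn (f := fun y => (inner ℝ v (gradient f y) : ℝ))
    (by fun_prop)
  have key := (hasDerivAt_integral_of_dominated_loc_of_deriv_le (𝕜 := ℝ)
    (μ := volume.restrict (ball z r))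
    (F := fun t y => f (y + t • v)) (F' := fun t y => inner ℝ v (gradient f (y + t • v)))
    (x₀ := 0) (s := Set.Icc (-1) 1) (bound := fun _ => A) (Icc_mem_nhds (by norm_num) (by norm_num))
    (Eventually.of_forall fun t => ?_) ?_ ?_ ?_ ?_ ?_).2
  · simp only [zero_smul, add_zero] at key
    rwa [integral_inner hgi] at key
  · have := hf.continuous
    exact Continuous.aestronglyMeasurable (by fun_prop)
  · have := hf.continuous
    simp only [zero_smul, add_zero]
    exact (this.continuousOn.integrableOn_compact (isCompact_closedBall z r)).mono_set
      ball_subset_closedBall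
  · exact Continuous.aestronglyMeasurable (by fun_prop)
  · refine (ae_restrict_iff' measurableSet_ball).2 (ae_of_all _ fun y hy t ht => ?_)
    exact hA _ ⟨(y, t), ⟨ball_subset_closedBall hy, ht⟩, rfl⟩
  · exact integrableOn_const measure_ball_lt_top.ne
  · exact ae_of_all _ fun y t _ => line_deriv_s11 hf y v t

theorem translate_ball {n : ℕ} (f : EuclideanSpace ℝ (Fin n) → ℝ)
    (z v : EuclideanSpace ℝ (Fin n)) (r : ℝ) :
    ∫ y in ball (z + v) r, f y = ∫ y in ball z r, f (y + v) := by
  have := (measurePreserving_add_right (volume : Measure (EuclideanSpace ℝ (Fin n))) v)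
    |>.setIntegral_preimage_emb (measurableEmbedding_addRight v) f (ball (z + v) r)
  rw [← this]
  congr 2
  ext y
  simp [dist_eq_norm]

theorem grad_bound {n : ℕ} (hn : 1 ≤ n) {β : ℝ} {f : EuclideanSpace ℝ (Fin n) → ℝ}
    (hf0 : ∀ x, 0 ≤ f x) (hf : ContDiff ℝ 1 f) (hfi : Integrable f)
    {x z : EuclideanSpace ℝ (Fin n)} {r : ℝ} (hb : BddAbove (maxSet β f x))
    (hB : IsBestBall β f x z r) :
    ‖⨍ y in ball z r, gradient f y‖ ≤ (n - β) / r * ⨍ y in ball z r, f y := by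
  have hr : 0 < r := hB.1
  have hV := volPos z hr
  set W := volume.real (ball (0 : EuclideanSpace ℝ (Fin n)) 1) with hW
  have hWp : 0 < W := volPos 0 one_pos
  set G := ∫ y in ball z r, gradient f y with hG
  set I := ∫ y in ball z r, f y with hI
  have hI0 : 0 ≤ I := integral_nonneg hf0
  -- main claim
  have main : ∀ v : EuclideanSpace ℝ (Fin n), ‖v‖ = 1 → inner ℝ v G ≤ (n - β) / r * I := by
    intro v hv
    have hle : ∀ s : ℝ, 0 ≤ s → ∫ y in ball z r, f (y + s • v) ≤ ((r + s) / r) ^ (n - β) * I := by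
      intro s hs
      have hrs : 0 < r + s := by linarith
      have h1 := best_le hf0 hb hB (z + s • v) (r + s) hrs (by
        have hx := hB.2.1
        rw [mem_closedBall, dist_eq_norm] at hx ⊢
        calc ‖x - (z + s • v)‖ = ‖(x - z) - s • v‖ := by congr 1; abel
          _ ≤ ‖x - z‖ + ‖s • v‖ := norm_sub_le _ _
          _ ≤ r + s := by rw [norm_smul, hv, Real.norm_of_nonneg hs]; linarith)
      rw [setAverage_eq, setAverage_eq, volR hn _ hrs, volR hn _ hr, smul_eq_mul, smul_eq_mul] at h1
      have h2 : ∫ y in ball z r, f (y + s • v) ≤ ∫ y in ball (z + s • v) (r + s), f y := by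
        rw [← translate_ball]
        exact setIntegral_mono_set hfi.integrableOn (ae_of_all _ hf0)
          (ball_subset_ball (by linarith)).eventuallyLE
      refine h2.trans ?_
      rw [Real.div_rpow hrs.le hr.le, Real.rpow_sub hrs, Real.rpow_sub hr, Real.rpow_natCast,
        Real.rpow_natCast]
      have p1 : 0 < (r + s) ^ β := Real.rpow_pos_of_pos hrs _
      have p2 : 0 < r ^ β := Real.rpow_pos_of_pos hr _
      have p3 : 0 < (r + s) ^ n := by positivity
      have p4 : 0 < r ^ n := by positivity
      change (r + s) ^ β * (((r + s) ^ n * W)⁻¹ * _) ≤ r ^ β * ((r ^ n * W)⁻¹ * I) at h1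
      set J := ∫ y in ball (z + s • v) (r + s), f y
      have h3 : J = ((r + s) ^ n * W / (r + s) ^ β) * ((r + s) ^ β * (((r + s) ^ n * W)⁻¹ * J)) := by
        field_simp
      rw [h3]
      refine (mul_le_mul_of_nonneg_left h1 (by positivity)).trans (le_of_eq ?_)
      field_simp
    have d1 := avg_deriv hf z v r
    have d2 : HasDerivAt (fun s : ℝ => ((r + s) / r) ^ ((n : ℝ) - β) * I) ((n - β) / r * I) 0 := by
      have e1 : HasDerivAt (fun s : ℝ => (r + s) / r) (1 / r) 0 :=
        ((hasDerivAt_id (0 : ℝ)).const_add r).div_const r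
      have e2 := (e1.rpow_const (p := (n : ℝ) - β) (Or.inl (by simp [hr.ne']))).mul_const I
      refine e2.congr_deriv ?_
      rw [add_zero, div_self hr.ne', Real.one_rpow]
      ring
    have d3 := d2.sub d1
    by_contra hcon
    push Not at hcon
    have hneg : (n - β) / r * I - inner ℝ v G < 0 := by linarith
    have hlim := (hasDerivAt_iff_tendsto_slope_zero.1 d3).mono_left
      (nhdsWithin_mono 0 (fun t (ht : t ∈ Set.Ioi 0) => ne_of_gt ht))
    have hev := hlim.eventually (gt_mem_nhds hneg)
    obtain ⟨t, ht, ht0⟩ := (hev.and self_mem_nhdsWithin).exists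
    have ht0' : (0 : ℝ) < t := ht0
    have h5 := hle t ht0'.le
    simp only [zero_add, Pi.sub_apply, add_zero, div_self hr.ne', Real.one_rpow, one_mul, zero_smul,
      smul_eq_mul] at ht
    have : 0 ≤ t⁻¹ * (((r + t) / r) ^ ((n : ℝ) - β) * I - (∫ y in ball z r, f (y + t • v)) - (I - ∫ y in ball z r, f y)) := by
      refine mul_nonneg (by positivity) ?_
      rw [← hI]; linarith
    linarith
  have hGn : ‖G‖ ≤ (n - β) / r * I := by
    by_cases h0 : G = 0
    · have hd : 0 < n := hn
      -- use any unit vector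
      have := main (EuclideanSpace.single ⟨0, hd⟩ (1 : ℝ)) (by simp)
      rw [h0, inner_zero_right] at this
      rw [h0, norm_zero]; exact this
    · have hp : 0 < ‖G‖ := norm_pos_iff.2 h0
      have := main (‖G‖⁻¹ • G) (by rw [norm_smul, norm_inv, norm_norm, inv_mul_cancel₀ hp.ne'])
      rw [real_inner_smul_left, real_inner_self_eq_norm_sq] at this
      have e : ‖G‖⁻¹ * ‖G‖ ^ 2 = ‖G‖ := by field_simp
      rwa [e] at this
  rw [setAverage_eq, setAverage_eq, norm_smul, smul_eq_mul, norm_inv, Real.norm_of_nonneg hV.le]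
  calc _ ≤ (volume.real (ball z r))⁻¹ * ((n - β) / r * I) := by gcongr
    _ = _ := by ring

set_option maxHeartbeats 1000000 in
theorem osc_bound {n : ℕ} {f : EuclideanSpace ℝ (Fin n) → ℝ} (hf : ContDiff ℝ 1 f)
    (hrad : ∀ x y : EuclideanSpace ℝ (Fin n), ‖x‖ = ‖y‖ → f x = f y)
    {z y1 y2 : EuclideanSpace ℝ (Fin n)} {r a c : ℝ} (hr : 0 < r) (hz : 3 * r ≤ ‖z‖)
    (hy1 : y1 ∈ ball z (3 / 2 * r)) (hy2 : y2 ∈ ball z (3 / 2 * r))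
    (ha : 0 ≤ a) (h1 : a ≤ f y1) (h2 : f y2 ≤ c) (hca : c ≤ a) (hac : 1 / 2 * a ≤ c) :
    (a - c) * volume.real (ball (0 : EuclideanSpace ℝ (Fin n)) (1 / 4 * r)) ≤
      7 / 2 * r * ∫ y in ball z (2 * r), ‖gradient f y‖ *
        Set.indicator {w | w ∈ ball z (2 * r) ∧ (1 / 2) * a ≤ f w ∧ f w ≤ 2 * a}
          (fun _ => (1 : ℝ)) y := by
  have hg := gradient_cont hf
  have hfc := hf.continuous
  set S : Set (EuclideanSpace ℝ (Fin n)) :=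
    {w | w ∈ ball z (2 * r) ∧ (1 / 2) * a ≤ f w ∧ f w ≤ 2 * a} with hS
  have hSm : MeasurableSet S :=
    measurableSet_ball.inter ((measurableSet_le measurable_const hfc.measurable).inter
      (measurableSet_le hfc.measurable measurable_const))
  set H : EuclideanSpace ℝ (Fin n) → ℝ :=
    fun y => ‖gradient f y‖ * Set.indicator S (fun _ => (1 : ℝ)) y with hH
  have hHm : Measurable H := hg.norm.measurable.mul (measurable_const.indicator hSm)
  have hH0 : ∀ y, 0 ≤ H y := fun y =>
    mul_nonneg (norm_nonneg _) (Set.indicator_nonneg (fun _ _ => zero_le_one) _)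
  have hHi : IntegrableOn H (ball z (2 * r)) := by
    have : IntegrableOn (fun y => ‖gradient f y‖) (ball z (2 * r)) :=
      (hg.norm.continuousOn.integrableOn_compact (isCompact_closedBall z _)).mono_set
        ball_subset_closedBall
    refine this.mono' hHm.aestronglyMeasurable (ae_of_all _ fun y => ?_)
    rw [Real.norm_of_nonneg (hH0 y)]
    refine mul_le_of_le_one_right (norm_nonneg _) ?_
    exact Set.indicator_le_self' (fun _ _ => zero_le_one) y
  have hHl : ∫⁻ y, ENNReal.ofReal (H y) = ENNReal.ofReal (∫ y in ball z (2 * r), H y) := by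
    rw [ofReal_integral_eq_lintegral_ofReal hHi (ae_of_all _ hH0)]
    rw [← lintegral_indicator measurableSet_ball]
    refine lintegral_congr fun y => ?_
    by_cases hy : y ∈ ball z (2 * r)
    · rw [Set.indicator_of_mem hy]
    · rw [Set.indicator_of_notMem hy]
      have : y ∉ S := fun h => hy h.1
      simp [hH, this]
  set T := 7 / 4 * r with hT
  have hzp : 0 < ‖z‖ := by linarith
  set e : EuclideanSpace ℝ (Fin n) := ‖z‖⁻¹ • z with he
  have hen : ‖e‖ = 1 := by rw [he, norm_smul, norm_inv, norm_norm, inv_mul_cancel₀ hzp.ne']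
  have hze : z = ‖z‖ • e := by rw [he, smul_smul, mul_inv_cancel₀ hzp.ne', one_smul]
  have hnormt : ∀ t : ℝ, -‖z‖ ≤ t → ‖z + t • e‖ = ‖z‖ + t := by
    intro t ht
    have : z + t • e = (‖z‖ + t) • e := by rw [add_smul, ← hze]
    rw [this, norm_smul, hen, mul_one, Real.norm_of_nonneg (by linarith)]
  -- the estimate on each line
  have hline : ∀ q ∈ ball (0 : EuclideanSpace ℝ (Fin n)) (1 / 4 * r),
      ENNReal.ofReal (a - c) ≤
        ∫⁻ t in Set.Icc (-T) T, ENNReal.ofReal (H (z + t • e + q)) := by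
    intro q hq
    rw [mem_ball_zero_iff] at hq
    have hhit : ∀ y ∈ ball z (3 / 2 * r), ∃ t ∈ Set.Icc (-T) T, f (z + q + t • e) = f y := by
      intro y hy
      rw [mem_ball, dist_eq_norm] at hy
      have b1 : ‖y‖ ≤ ‖z‖ + 3 / 2 * r := by
        have := norm_add_le z (y - z)
        rw [add_sub_cancel] at this
        linarith
      have b2 : ‖z‖ - 3 / 2 * r ≤ ‖y‖ := by
        have := norm_sub_le y (y - z)
        rw [sub_sub_cancel] at this
        linarith
      have hc : ContinuousOn (fun t : ℝ => ‖z + q + t • e‖) (Set.Icc (-T) T) := by fun_prop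
      have hsub := intermediate_value_Icc (by linarith : -T ≤ T) hc
      have c1 : ‖z + q + (-T) • e‖ ≤ ‖y‖ := by
        have := norm_add_le (z + (-T) • e) q
        rw [hnormt (-T) (by linarith)] at this
        have e3 : z + q + (-T) • e = z + (-T) • e + q := by abel
        rw [e3]; linarith
      have c2 : ‖y‖ ≤ ‖z + q + T • e‖ := by
        have := norm_sub_le (z + q + T • e) q
        have e3 : z + q + T • e - q = z + T • e := by abel
        rw [e3, hnormt T (by linarith)] at this
        linarith
      obtain ⟨t, ht, hty⟩ := hsub ⟨c1, c2⟩
      exact ⟨t, ht, hrad _ _ hty⟩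
    obtain ⟨t1, ht1, ht1'⟩ := hhit y1 hy1
    obtain ⟨t2, ht2, ht2'⟩ := hhit y2 hy2
    have := crossing_lintegral (fun t => f (z + q + t • e))
      (fun t => inner ℝ e (gradient f (z + q + t • e))) (fun t => line_deriv_s11 hf _ _ t)
      (by fun_prop) c a T t1 t2 (by simp only [ht1']; exact h1) (by simp only [ht2']; exact h2)
      ht1 ht2
    refine this.trans (setLIntegral_mono' measurableSet_Icc fun t ht => ?_)
    have e3 : z + t • e + q = z + q + t • e := by abel
    rw [e3]
    by_cases hmem : c ≤ f (z + q + t • e) ∧ f (z + q + t • e) ≤ a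
    · rw [Set.indicator_of_mem (show t ∈ {t | c ≤ f (z + q + t • e) ∧ f (z + q + t • e) ≤ a}
        from hmem)]
      have hmS : z + q + t • e ∈ S := by
        refine ⟨?_, by linarith [hmem.1], by linarith [hmem.2]⟩
        rw [mem_ball, dist_eq_norm]
        have e4 : z + q + t • e - z = q + t • e := by abel
        rw [e4]
        have := norm_add_le q (t • e)
        rw [norm_smul, hen, mul_one, Real.norm_eq_abs] at this
        have := abs_le.2 ht
        linarith
      refine ENNReal.ofReal_le_ofReal ?_
      simp only [hH, Set.indicator_of_mem hmS, mul_one]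
      have := abs_real_inner_le_norm e (gradient f (z + q + t • e))
      rwa [hen, one_mul] at this
    · rw [Set.indicator_of_notMem (show t ∉ {t | c ≤ f (z + q + t • e) ∧ f (z + q + t • e) ≤ a}
        from hmem)]
      exact zero_le
  have hA : ENNReal.ofReal (a - c) * volume (ball (0 : EuclideanSpace ℝ (Fin n)) (1 / 4 * r)) ≤
      ∫⁻ q in ball (0 : EuclideanSpace ℝ (Fin n)) (1 / 4 * r),
        ∫⁻ t in Set.Icc (-T) T, ENNReal.ofReal (H (z + t • e + q)) := by
    rw [← setLIntegral_const]
    exact setLIntegral_mono' measurableSet_ball hline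
  have hBnd : ∫⁻ q in ball (0 : EuclideanSpace ℝ (Fin n)) (1 / 4 * r),
        ∫⁻ t in Set.Icc (-T) T, ENNReal.ofReal (H (z + t • e + q)) ≤
      ENNReal.ofReal (∫ y in ball z (2 * r), H y) * ENNReal.ofReal (7 / 2 * r) := by
    rw [lintegral_lintegral_swap]
    · calc _ ≤ ∫⁻ t in Set.Icc (-T) T, ENNReal.ofReal (∫ y in ball z (2 * r), H y) := by
            refine lintegral_mono fun t => ?_
            refine (setLIntegral_le_lintegral _ _).trans ?_
            rw [lintegral_add_left_eq_self (fun y => ENNReal.ofReal (H y)), hHl]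
        _ = _ := by
            rw [setLIntegral_const, Real.volume_Icc]
            congr 2
            rw [hT]; ring
    · refine Measurable.aemeasurable ?_
      refine ENNReal.measurable_ofReal.comp (hHm.comp ?_)
      fun_prop
  have hfin := hA.trans hBnd
  have hr72 : 0 ≤ 7 / 2 * r := by linarith
  have hI0 : 0 ≤ ∫ y in ball z (2 * r), H y := integral_nonneg hH0
  rw [← ENNReal.ofReal_mul hI0] at hfin
  have := ENNReal.toReal_mono ENNReal.ofReal_ne_top hfin
  rw [ENNReal.toReal_mul, ENNReal.toReal_ofReal (by linarith),
    ENNReal.toReal_ofReal (mul_nonneg hI0 hr72)] at this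
  rw [Measure.real, mul_comm (7 / 2 * r)]
  exact this

theorem stmt11 (n : ℕ) (hn : 1 ≤ n) (β : ℝ) (hβ0 : 0 < β) (hβn : β < n) :
    ∃ C : ℝ, 0 < C ∧
      ∀ (f : EuclideanSpace ℝ (Fin n) → ℝ), (∀ x, 0 ≤ f x) → ContDiff ℝ 1 f →
        Integrable f →
        (∀ x y : EuclideanSpace ℝ (Fin n), ‖x‖ = ‖y‖ → f x = f y) →
        ∀ (x : EuclideanSpace ℝ (Fin n)), x ≠ 0 →
        (∀ᶠ y in 𝓝 x, BddAbove (maxSet β f y)) →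
        DifferentiableAt ℝ (fracMax β f) x →
        ∀ (z : EuclideanSpace ℝ (Fin n)) (r : ℝ), IsBestBall β f x z r →
        r ≤ ‖x‖ / 4 →
        ‖⨍ y in ball z r, gradient f y‖ ≤
          C * ⨍ y in ball z (2 * r), ‖gradient f y‖ *
            Set.indicator
              {w | w ∈ ball z (2 * r) ∧
                (1 / 2) * (⨍ u in ball z r, f u) ≤ f w ∧
                f w ≤ 2 * ⨍ u in ball z r, f u}
              (fun _ => (1 : ℝ)) y := by
  set κ : ℝ := max (1 / 2) ((3 / 2 : ℝ) ^ (-β)) with hκ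
  have hκ1 : κ < 1 := max_lt (by norm_num)
    (Real.rpow_lt_one_of_one_lt_of_neg (by norm_num) (by linarith))
  have hnpos : (0 : ℝ) < n := by exact_mod_cast hn
  refine ⟨n * (7 / 2) * 8 ^ n / (1 - κ), by
    have : 0 < 1 - κ := by linarith
    positivity, ?_⟩
  intro f hf0 hf hfi hrad x hx hbdd _ z r hB hrx
  have hb := hbdd.self_of_nhds
  have hr : 0 < r := hB.1
  have hgb := grad_bound hn hf0 hf hfi hb hB
  set a := ⨍ u in ball z r, f u with ha
  have ha0 : 0 ≤ a := integral_nonneg hf0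
  have hz : 3 * r ≤ ‖z‖ := by
    have h1 := hB.2.1
    rw [mem_closedBall, dist_eq_norm] at h1
    have := norm_add_le (x - z) z
    rw [sub_add_cancel] at this
    linarith
  obtain ⟨y1, hy1, hy1'⟩ := exists_setAverage_le (μ := volume) (s := ball z r) (f := f)
    (measure_ball_pos _ _ hr).ne' measure_ball_lt_top.ne hfi.integrableOn
  have hr32 : 0 < 3 / 2 * r := by positivity
  obtain ⟨y2, hy2, hy2'⟩ := exists_le_setAverage (μ := volume) (s := ball z (3 / 2 * r)) (f := f)
    (measure_ball_pos _ _ hr32).ne' measure_ball_lt_top.ne hfi.integrableOn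
  have hbl := best_le hf0 hb hB z (3 / 2 * r) hr32
    (closedBall_subset_closedBall (by linarith) hB.2.1)
  have hy2c : f y2 ≤ κ * a := by
    refine hy2'.trans ?_
    rw [Real.mul_rpow (by norm_num) hr.le, mul_comm _ (r ^ β), mul_assoc] at hbl
    have h3 := le_of_mul_le_mul_left hbl (Real.rpow_pos_of_pos hr β)
    have p : 0 < (3 / 2 : ℝ) ^ β := Real.rpow_pos_of_pos (by norm_num) _
    calc _ ≤ (3 / 2 : ℝ) ^ (-β) * a := by
          rw [Real.rpow_neg (by norm_num), ← div_eq_inv_mul, le_div_iff₀ p]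
          linarith
      _ ≤ κ * a := by
          gcongr
          exact le_max_right _ _
  have hosc := osc_bound hf hrad hr hz (ball_subset_ball (by linarith) hy1) hy2 ha0 hy1' hy2c
    (by nlinarith) (by
      have : (1 / 2 : ℝ) ≤ κ := le_max_left _ _
      gcongr)
  rw [setAverage_eq volume (fun y => ‖gradient f y‖ * _), smul_eq_mul, volR hn z (by positivity : 0 < 2 * r)]
  rw [volR hn _ (by positivity : 0 < 1 / 4 * r)] at hosc
  refine hgb.trans ?_
  set J := ∫ y in ball z (2 * r), ‖gradient f y‖ *
        Set.indicator {w | w ∈ ball z (2 * r) ∧ (1 / 2) * a ≤ f w ∧ f w ≤ 2 * a}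
          (fun _ => (1 : ℝ)) y with hJ
  set W := volume.real (ball (0 : EuclideanSpace ℝ (Fin n)) 1) with hW
  have hWp : 0 < W := volPos 0 one_pos
  have hk : 0 < 1 - κ := by linarith
  have hJl : (a * (1 - κ)) * ((1 / 4 * r) ^ n * W) / (7 / 2 * r) ≤ J := by
    rw [div_le_iff₀ (by positivity)]
    linarith
  have e8 : (2 * r) ^ n = 8 ^ n * (1 / 4 * r) ^ n := by
    rw [← mul_pow]; congr 1; ring
  have pq : 0 < (1 / 4 * r) ^ n := by positivity
  rw [e8]
  set Q := (1 / 4 * r) ^ n with hQ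
  calc (n - β) / r * a ≤ n / r * a := by gcongr; linarith
    _ = n * (7 / 2) * 8 ^ n / (1 - κ) * ((8 ^ n * Q * W)⁻¹ *
        ((a * (1 - κ)) * (Q * W) / (7 / 2 * r))) := by
        field_simp
    _ ≤ _ := by gcongr
end
end

section
/- Let n ≥ 1, 0 ≤ β < n, let f : ℝⁿ → ℝ be an integrable radial function, let x ∈ ℝⁿ \ {0}, and suppose M_β f is real-valued in a neighborhood of x and of −x and is differentiable at both x and −x. If there exist c < 0 and r > 0 such that B(c·x, r) is a best ball at x (i.e. B(c·x, r) ∈ ℬ_x), then ∇M_β f(x) = 0. -/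
open MeasureTheory Metric Filter
open scoped Topology

noncomputable section

theorem maxSet_neg_subset {n : ℕ} (β : ℝ) (f : EuclideanSpace ℝ (Fin n) → ℝ)
    (hf : ∀ y, f (-y) = f y) (x : EuclideanSpace ℝ (Fin n)) :
    maxSet β f x ⊆ maxSet β f (-x) := by
  rintro t ⟨z, r, hr, hx, rfl⟩
  refine ⟨-z, r, hr, ?_, ?_⟩
  · rw [mem_closedBall] at hx ⊢
    rwa [dist_neg_neg]
  · have hpre : (fun y : EuclideanSpace ℝ (Fin n) => -y) ⁻¹' ball (-z) r = ball z r := by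
      ext y
      simp only [Set.mem_preimage, mem_ball, dist_neg_neg]
    have hmp := Measure.measurePreserving_neg (volume : Measure (EuclideanSpace ℝ (Fin n)))
    rw [setAverage_eq, setAverage_eq, measureReal_def, measureReal_def]
    have h1 : ∫ y in ball z r, |f y| = ∫ y in ball (-z) r, |f y| := by
      rw [← hpre, ← hmp.setIntegral_preimage_emb (MeasurableEquiv.neg _).measurableEmbedding
        (fun y => |f y|) (ball (-z) r)]
      simp only [hf]
    have h2 : volume (ball z r) = volume (ball (-z) r) := by
      rw [← hpre]
      exact hmp.measure_preimage (measurableSet_ball (x := -z) (ε := r)).nullMeasurableSet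
    rw [h1, h2]

theorem fracMax_neg {n : ℕ} (β : ℝ) (f : EuclideanSpace ℝ (Fin n) → ℝ)
    (hf : ∀ y, f (-y) = f y) (x : EuclideanSpace ℝ (Fin n)) :
    fracMax β f (-x) = fracMax β f x := by
  unfold fracMax
  congr 1
  refine Set.Subset.antisymm ?_ (maxSet_neg_subset β f hf x)
  simpa using maxSet_neg_subset β f hf (-x)

theorem stmt13 (n : ℕ) (hn : 1 ≤ n) (β : ℝ) (hβ0 : 0 ≤ β) (hβn : β < n)
    (f : EuclideanSpace ℝ (Fin n) → ℝ) (hfi : Integrable f)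
    (hrad : ∀ x y : EuclideanSpace ℝ (Fin n), ‖x‖ = ‖y‖ → f x = f y)
    (x : EuclideanSpace ℝ (Fin n)) (hx : x ≠ 0)
    (hfin : ∀ᶠ y in 𝓝 x, BddAbove (maxSet β f y))
    (hfin' : ∀ᶠ y in 𝓝 (-x), BddAbove (maxSet β f y))
    (hdiff : DifferentiableAt ℝ (fracMax β f) x)
    (hdiff' : DifferentiableAt ℝ (fracMax β f) (-x))
    (c r : ℝ) (hc : c < 0) (hr : 0 < r)
    (hB : IsBestBall β f x (c • x) r) :
    gradient (fracMax β f) x = 0 := by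
  have hf : ∀ y, f (-y) = f y := fun y => hrad _ _ (norm_neg y)
  obtain ⟨-, hmem, hval⟩ := hB
  have hxpos : 0 < ‖x‖ := norm_pos_iff.mpr hx
  have hball : -x ∈ ball (c • x) r := by
    rw [mem_closedBall, dist_eq_norm] at hmem
    rw [mem_ball, dist_eq_norm]
    have e1 : x - c • x = (1 - c) • x := by rw [sub_smul, one_smul]
    have e2 : -x - c • x = (-1 - c) • x := by rw [sub_smul, neg_smul, one_smul]
    rw [e1, norm_smul, Real.norm_eq_abs, abs_of_pos (by linarith)] at hmem
    rw [e2, norm_smul, Real.norm_eq_abs]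
    have h : |-1 - c| < 1 - c := abs_lt.mpr ⟨by linarith, by linarith⟩
    exact lt_of_lt_of_le (mul_lt_mul_of_pos_right h hxpos) hmem
  have hmin' : ∀ᶠ y in 𝓝 (-x), fracMax β f (-x) ≤ fracMax β f y := by
    filter_upwards [hfin', isOpen_ball.mem_nhds hball] with y hy hyb
    rw [fracMax_neg β f hf, hval]
    exact le_csSup hy ⟨c • x, r, hr, ball_subset_closedBall hyb, rfl⟩
  have hmin : IsLocalMin (fracMax β f) x := by
    have ht : Tendsto (fun y : EuclideanSpace ℝ (Fin n) => -y) (𝓝 x) (𝓝 (-x)) :=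
      continuous_neg.tendsto x
    filter_upwards [ht.eventually hmin'] with y hy
    rwa [fracMax_neg β f hf, fracMax_neg β f hf] at hy
  rw [gradient, hmin.fderiv_eq_zero, map_zero]
end
end

section
/- There exists a constant C = C(n) > 0 such that the following holds. Let E ⊂ ℝⁿ \ {0} be a measurable set, let c : E → ℝ be a measurable function with c(x) > 5/4 for all x ∈ E, and for x ∈ E set B_x := B(c(x)·x, (c(x) − 1)|x|). Then for every y ∈ ℝⁿ \ {0} one has ∫_E χ_{B_x}(y) / |B_x| dx ≤ C(n). In particular, if |x| > |y| and x ∈ E then y ∉ B_x, and if y ∈ B_x with x ∈ E and |x| ≤ |y| then the radius of B_x is at least |y|/8. -/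
open MeasureTheory Metric Filter
open scoped Topology

noncomputable section

theorem stmt15 (n : ℕ) :
    ∃ C : ℝ, 0 < C ∧
      ∀ (E : Set (EuclideanSpace ℝ (Fin n))), MeasurableSet E →
        E ⊆ {x | x ≠ 0} →
        ∀ (c : EuclideanSpace ℝ (Fin n) → ℝ), Measurable c →
        (∀ x ∈ E, 5 / 4 < c x) →
        ∀ (y : EuclideanSpace ℝ (Fin n)), y ≠ 0 →
        ((∫ x in E,
            (Set.indicator (ball (c x • x) ((c x - 1) * ‖x‖)) (fun _ => (1 : ℝ)) y) /
              (volume (ball (c x • x) ((c x - 1) * ‖x‖))).toReal) ≤ C) ∧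
        (∀ x ∈ E, ‖y‖ < ‖x‖ → y ∉ ball (c x • x) ((c x - 1) * ‖x‖)) ∧
        (∀ x ∈ E, y ∈ ball (c x • x) ((c x - 1) * ‖x‖) → ‖x‖ ≤ ‖y‖ →
          ‖y‖ / 8 ≤ (c x - 1) * ‖x‖) := by
  have key2 : ∀ (x y : EuclideanSpace ℝ (Fin n)) (c : ℝ), 5 / 4 < c →
      y ∈ ball (c • x) ((c - 1) * ‖x‖) → ‖x‖ ≤ ‖y‖ := by
    intro x y c hc hy
    rw [mem_ball, dist_eq_norm] at hy
    have h1 : ‖c • x‖ ≤ ‖y‖ + ‖y - c • x‖ := by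
      have := norm_sub_le y (y - c • x)
      simpa using this
    rw [norm_smul, Real.norm_eq_abs, abs_of_pos (by linarith)] at h1
    linarith
  have key3 : ∀ (x y : EuclideanSpace ℝ (Fin n)) (c : ℝ), 5 / 4 < c →
      y ∈ ball (c • x) ((c - 1) * ‖x‖) → ‖y‖ / 8 ≤ (c - 1) * ‖x‖ := by
    intro x y c hc hy
    rw [mem_ball, dist_eq_norm] at hy
    have h1 : ‖y‖ ≤ ‖y - c • x‖ + ‖c • x‖ := by
      have := norm_add_le (y - c • x) (c • x)
      simpa using this
    rw [norm_smul, Real.norm_eq_abs, abs_of_pos (by linarith)] at h1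
    nlinarith [norm_nonneg x]
  refine ⟨8 ^ n, by positivity, ?_⟩
  intro E hE _ c _ hc5 y hy
  refine ⟨?_, fun x hx hlt hmem => absurd (key2 x y _ (hc5 x hx) hmem) (not_le.mpr hlt),
    fun x hx hmem _ => key3 x y _ (hc5 x hx) hmem⟩
  have hy0 : 0 < ‖y‖ := norm_pos_iff.mpr hy
  set V : ℝ := (volume (ball (0 : EuclideanSpace ℝ (Fin n)) 1)).toReal with hV
  have hVpos : 0 < V :=
    ENNReal.toReal_pos (measure_ball_pos _ _ one_pos).ne' measure_ball_lt_top.ne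
  have hvol : ∀ (z : EuclideanSpace ℝ (Fin n)) (r : ℝ), 0 < r →
      (volume (ball z r)).toReal = r ^ n * V := by
    intro z r hr
    rw [Measure.addHaar_ball_of_pos volume z hr, ENNReal.toReal_mul,
      ENNReal.toReal_ofReal (by positivity)]
    simp [hV]
  set K : ℝ := 1 / ((‖y‖ / 8) ^ n * V) with hK
  have hKpos : 0 < K := by positivity
  set g : EuclideanSpace ℝ (Fin n) → ℝ :=
    Set.indicator (closedBall 0 ‖y‖) (fun _ => K) with hg
  have hgi : Integrable g volume := by
    rw [hg, integrable_indicator_iff measurableSet_closedBall]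
    exact integrableOn_const measure_closedBall_lt_top.ne
  have hg0 : ∀ x, 0 ≤ g x := fun x => Set.indicator_nonneg (fun _ _ => hKpos.le) x
  calc _ ≤ ∫ x in E, g x := by
        refine integral_mono_of_nonneg ?_ hgi.integrableOn ?_
        · refine Eventually.of_forall fun x => ?_
          exact div_nonneg (Set.indicator_nonneg (fun _ _ => zero_le_one) _)
            ENNReal.toReal_nonneg
        · filter_upwards [ae_restrict_mem hE] with x hx
          by_cases hmem : y ∈ ball (c x • x) ((c x - 1) * ‖x‖)
          · have h2 := key2 x y _ (hc5 x hx) hmem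
            have h3 := key3 x y _ (hc5 x hx) hmem
            have hr : 0 < (c x - 1) * ‖x‖ := by linarith
            have hgx : g x = K := by
              rw [hg, Set.indicator_of_mem]
              simpa using h2
            rw [hgx, Set.indicator_of_mem hmem, hvol _ _ hr, hK]
            gcongr
          · rw [Set.indicator_of_notMem hmem, zero_div]
            exact hg0 x
    _ ≤ ∫ x, g x := setIntegral_le_integral hgi (Eventually.of_forall hg0)
    _ = 8 ^ n := by
        rw [hg, integral_indicator_const _ measurableSet_closedBall, measureReal_def,
          Measure.addHaar_closedBall volume _ hy0.le, ENNReal.toReal_mul,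
          ENNReal.toReal_ofReal (by positivity), ← hV, hK, finrank_euclideanSpace_fin,
          smul_eq_mul, div_pow]
        field_simp
    _ ≤ 8 ^ n := le_rfl
end
end
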